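/- arXiv:1501.02430 — 4 statements merged into one kernel-verified Lean document; each statement's English description precedes it below -/
import Mathlib

section
/- Fix a (k+1)-cycle σ in S_n and a partition λ = (1^{α₁} 2^{α₂} ...) of n. For a partition ν = (1^{γ₁} 2^{γ₂} ...) with length ℓ(ν) = k+1 and γᵢ ≤ αᵢ for all i, the number of permutations τ of cycle type λ such that the k+1 points moved by σ lie in distinct cycles of τ, with exactly γᵢ of these points lying in cycles of length i, equals (k+1)! · (n−k−1)! / ∏ᵢ ( i^{αᵢ−γᵢ} · γᵢ! · (αᵢ−γᵢ)! ). -/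
noncomputable def fullCycleType {n : ℕ} (σ : Equiv.Perm (Fin n)) : Multiset ℕ :=
  σ.cycleType + Multiset.replicate (n - σ.support.card) 1

/-- The length of the cycle of `τ` containing `a` (fixed points give length 1). -/
noncomputable def cycLen {n : ℕ} (τ : Equiv.Perm (Fin n)) (a : Fin n) : ℕ :=
  if τ a = a then 1 else (τ.cycleOf a).support.card

open scoped Classical in
theorem auxA {X Y : Type*} [Fintype X] (π : X → Y) (T : Finset Y) :
    (Finset.univ.filter (fun S : Finset X => S.image π = T ∧ Set.InjOn π (S : Set X))).card
      = ∏ c ∈ T, (Finset.univ.filter (fun a => π a = c)).card := by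
  rw [← Finset.card_pi]
  symm
  have key : ∀ g ∈ T.pi (fun c => Finset.univ.filter (fun a => π a = c)), ∀ c (hc : c ∈ T),
      π (g c hc) = c := by
    intro g hg c hc
    have := Finset.mem_pi.1 hg c hc
    simpa using this
  refine Finset.card_bij (fun g _ => T.attach.image (fun c => g c.1 c.2)) ?_ ?_ ?_
  · intro g hg
    have k := key g hg
    simp only [Finset.mem_filter, Finset.mem_univ, true_and]
    constructor
    · ext y
      simp only [Finset.mem_image, Finset.mem_attach, true_and, Subtype.exists]
      constructor
      · rintro ⟨x, ⟨c, hc, rfl⟩, rfl⟩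
        rwa [k]
      · intro hy
        exact ⟨g y hy, ⟨y, hy, rfl⟩, k y hy⟩
    · intro x hx x' hx' h
      simp only [Finset.coe_image, Set.mem_image, Finset.mem_coe, Finset.mem_attach, true_and,
        Subtype.exists] at hx hx'
      obtain ⟨c, hc, rfl⟩ := hx
      obtain ⟨c', hc', rfl⟩ := hx'
      rw [k, k] at h
      subst h
      rfl
  · intro g hg g' hg' h
    have k := key g hg
    have k' := key g' hg'
    funext c hc
    have h1 : g c hc ∈ T.attach.image (fun c => g' c.1 c.2) := by
      rw [← h]
      simp only [Finset.mem_image, Finset.mem_attach, true_and, Subtype.exists]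
      exact ⟨c, hc, rfl⟩
    simp only [Finset.mem_image, Finset.mem_attach, true_and, Subtype.exists] at h1
    obtain ⟨c', hc', e⟩ := h1
    have : c' = c := by rw [← k' c' hc', e, k]
    subst this
    exact e.symm
  · intro S hS
    simp only [Finset.mem_filter, Finset.mem_univ, true_and] at hS
    obtain ⟨rfl, hinj⟩ := hS
    have ex : ∀ c ∈ S.image π, ∃ a ∈ S, π a = c := fun c hc => Finset.mem_image.1 hc
    choose g hg1 hg2 using ex
    refine ⟨g, ?_, ?_⟩
    · simp only [Finset.mem_pi, Finset.mem_filter, Finset.mem_univ, true_and]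
      exact hg2
    · ext x
      simp only [Finset.mem_image, Finset.mem_attach, true_and, Subtype.exists]
      constructor
      · rintro ⟨c, hc, rfl⟩
        exact hg1 _ _
      · intro hx
        refine ⟨π x, ⟨x, hx, rfl⟩, ?_⟩
        exact hinj (hg1 _ _) hx (hg2 _ _)

open scoped Classical in
theorem auxB {Y : Type*} (C : Finset Y) (f : Y → ℕ) (γ : ℕ → ℕ) (I : Finset ℕ)
    (hI : ∀ c ∈ C, f c ∈ I) (hγ : ∀ i, i ∉ I → γ i = 0) :
    (C.powerset.filter (fun T => ∀ i, (T.filter (fun c => f c = i)).card = γ i)).card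
      = ∏ i ∈ I, ((C.filter (fun c => f c = i)).card).choose (γ i) := by
  simp_rw [← Finset.card_powersetCard]
  rw [← Finset.card_pi]
  refine Finset.card_bij (fun T _ i _ => T.filter (fun c => f c = i)) ?_ ?_ ?_
  · intro T hT
    simp only [Finset.mem_filter, Finset.mem_powerset] at hT
    simp only [Finset.mem_pi, Finset.mem_powersetCard]
    intro i _
    exact ⟨Finset.filter_subset_filter _ hT.1, hT.2 i⟩
  · intro T hT T' hT' h
    simp only [Finset.mem_filter, Finset.mem_powerset] at hT hT'
    have h2 : ∀ i ∈ I, T.filter (fun c => f c = i) = T'.filter (fun c => f c = i) :=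
      fun i hi => congrFun (congrFun h i) hi
    ext c
    constructor
    · intro hc
      have : c ∈ T.filter (fun d => f d = f c) := by simp [hc]
      rw [h2 _ (hI c (hT.1 hc))] at this
      exact (Finset.mem_filter.1 this).1
    · intro hc
      have : c ∈ T'.filter (fun d => f d = f c) := by simp [hc]
      rw [← h2 _ (hI c (hT'.1 hc))] at this
      exact (Finset.mem_filter.1 this).1
  · intro g hg
    simp only [Finset.mem_pi, Finset.mem_powersetCard] at hg
    have hgf : ∀ i hi, ∀ c ∈ g i hi, c ∈ C ∧ f c = i := fun i hi c hc => by
      simpa using (hg i hi).1 hc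
    have main : ∀ i (hi : i ∈ I),
        (I.attach.biUnion (fun j => g j.1 j.2)).filter (fun c => f c = i) = g i hi := by
      intro i hi
      ext c
      simp only [Finset.mem_filter, Finset.mem_biUnion, Finset.mem_attach, true_and,
        Subtype.exists]
      constructor
      · rintro ⟨⟨j, hj, hc⟩, h⟩
        have : j = i := by rw [← (hgf j hj c hc).2, h]
        subst this
        exact hc
      · intro hc
        exact ⟨⟨i, hi, hc⟩, (hgf i hi c hc).2⟩
    have hsub : (I.attach.biUnion (fun j => g j.1 j.2)) ⊆ C := by
      intro c hc
      simp only [Finset.mem_biUnion, Finset.mem_attach, true_and, Subtype.exists] at hc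
      obtain ⟨j, hj, hc⟩ := hc
      exact (hgf j hj c hc).1
    refine ⟨I.attach.biUnion (fun j => g j.1 j.2), ?_, ?_⟩
    · simp only [Finset.mem_filter, Finset.mem_powerset]
      refine ⟨hsub, fun i => ?_⟩
      by_cases hi : i ∈ I
      · rw [main i hi, (hg i hi).2]
      · rw [hγ i hi, Finset.card_eq_zero, Finset.filter_eq_empty_iff]
        intro c hc h
        exact hi (h ▸ hI c (hsub hc))
    · funext i hi
      exact main i hi

open scoped Classical in
theorem auxC {X Y : Type*} [Fintype X] (π : X → Y) (L : X → ℕ)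
    (hL : ∀ a, L a = (Finset.univ.filter (fun b => π b = π a)).card)
    (α γ : ℕ → ℕ) (I : Finset ℕ) (h0 : 0 ∉ I)
    (hI : ∀ a, L a ∈ I) (hγ : ∀ i, i ∉ I → γ i = 0)
    (hα : ∀ i ∈ I, (Finset.univ.filter (fun a => L a = i)).card = i * α i) :
    (Finset.univ.filter (fun S : Finset X => Set.InjOn π (S : Set X) ∧
      ∀ i, (S.filter (fun a => L a = i)).card = γ i)).card
      = ∏ i ∈ I, (i ^ γ i * (α i).choose (γ i)) := by
  set f : Y → ℕ := fun c => (Finset.univ.filter (fun b => π b = c)).card with hf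
  set C : Finset Y := Finset.univ.image π with hC
  have hLf : ∀ a, L a = f (π a) := hL
  have hCI : ∀ c ∈ C, f c ∈ I := by
    intro c hc
    obtain ⟨a, -, rfl⟩ := Finset.mem_image.1 hc
    rw [← hLf]; exact hI a
  have hCα : ∀ i ∈ I, (C.filter (fun c => f c = i)).card = α i := by
    intro i hi
    have hipos : 0 < i := Nat.pos_of_ne_zero (fun h => h0 (h ▸ hi))
    have h1 : (Finset.univ.filter (fun a => L a = i)).card =
        ∑ c ∈ C.filter (fun c => f c = i),
          ((Finset.univ.filter (fun a => L a = i)).filter (fun a => π a = c)).card := by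
      apply Finset.card_eq_sum_card_fiberwise
      intro a ha
      have ha' : L a = i := by simpa using ha
      simp [hC, ← hLf, ha']
    have h2 : ∀ c ∈ C.filter (fun c => f c = i),
          ((Finset.univ.filter (fun a => L a = i)).filter (fun a => π a = c)).card = i := by
      intro c hc
      have hc' := (Finset.mem_filter.1 hc).2
      rw [← hc', hf, Finset.filter_filter]
      congr 1
      ext a
      simp only [Finset.mem_filter, Finset.mem_univ, true_and, hLf, hf, and_iff_right_iff_imp]
      rintro rfl
      rfl
    rw [Finset.sum_congr rfl h2, hα i hi, Finset.sum_const, smul_eq_mul, mul_comm] at h1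
    exact (Nat.eq_of_mul_eq_mul_right hipos h1).symm
  have hcnt : ∀ S : Finset X, Set.InjOn π (S : Set X) → ∀ i,
      ((S.image π).filter (fun c => f c = i)).card = (S.filter (fun a => L a = i)).card := by
    intro S hS i
    rw [Finset.filter_image, Finset.card_image_of_injOn]
    · simp only [hLf]
    · exact hS.mono (by intro x hx; simp at hx ⊢; exact hx.1)
  rw [Finset.card_eq_sum_card_fiberwise (f := fun S => S.image π)
    (t := C.powerset.filter (fun T => ∀ i, (T.filter (fun c => f c = i)).card = γ i))]
  · have h3 : ∀ T ∈ C.powerset.filter (fun T => ∀ i, (T.filter (fun c => f c = i)).card = γ i),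
        ((Finset.univ.filter (fun S : Finset X => Set.InjOn π (S : Set X) ∧
      ∀ i, (S.filter (fun a => L a = i)).card = γ i)).filter (fun S => S.image π = T)).card
        = ∏ i ∈ I, i ^ γ i := by
      intro T hT
      simp only [Finset.mem_filter, Finset.mem_powerset] at hT
      trans ∏ c ∈ T, f c
      · rw [hf, ← auxA, Finset.filter_filter]
        congr 1
        ext S
        simp only [Finset.mem_filter, Finset.mem_univ, true_and]
        constructor
        · rintro ⟨⟨h, -⟩, h'⟩
          exact ⟨h', h⟩
        · rintro ⟨h', h⟩
          refine ⟨⟨h, fun i => ?_⟩, h'⟩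
          rw [← hcnt S h, h']
          exact hT.2 i
      · rw [← Finset.prod_fiberwise_of_maps_to (t := I) (g := f) (fun c hc => hCI c (hT.1 hc))]
        refine Finset.prod_congr rfl fun i hi => ?_
        rw [← hT.2 i, ← Finset.prod_const]
        exact Finset.prod_congr rfl fun c hc => (Finset.mem_filter.1 hc).2
    rw [Finset.sum_congr rfl h3, Finset.sum_const, auxB C f γ I hCI hγ, smul_eq_mul, mul_comm,
      ← Finset.prod_mul_distrib]
    exact Finset.prod_congr rfl fun i hi => by rw [hCα i hi]
  · intro S hS
    have hS' : Set.InjOn π (S : Set X) ∧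
      ∀ i, (S.filter (fun a => L a = i)).card = γ i := by simpa using hS
    simp only [Finset.coe_filter, Finset.mem_powerset, Set.mem_ofPred_eq]
    exact ⟨Finset.image_subset_image (Finset.subset_univ _),
      fun i => by rw [hcnt S hS'.1, hS'.2]⟩

open scoped Classical in
theorem cycLen_eq {n : ℕ} (τ : Equiv.Perm (Fin n)) (a : Fin n) :
    cycLen τ a = (Finset.univ.filter (fun b => τ.SameCycle a b)).card := by
  unfold cycLen
  split_ifs with h
  · symm
    rw [Finset.card_eq_one]
    refine ⟨a, ?_⟩
    ext b
    simp only [Finset.mem_filter, Finset.mem_univ, true_and, Finset.mem_singleton]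
    constructor
    · rintro ⟨i, hi⟩
      rw [← hi]
      exact Equiv.Perm.zpow_apply_eq_self_of_apply_eq_self h i
    · rintro rfl
      exact Equiv.Perm.SameCycle.refl _ _
  · congr 1
    ext b
    rw [Equiv.Perm.mem_support_cycleOf_iff' h]
    simp

theorem cycLen_count {n : ℕ} (τ : Equiv.Perm (Fin n)) (i : ℕ) :
    (Finset.univ.filter (fun a => cycLen τ a = i)).card = i * (fullCycleType τ).count i := by
  unfold fullCycleType
  rw [Multiset.count_add, Multiset.count_replicate]
  have hc : ∀ a, τ a ≠ a → 2 ≤ (τ.cycleOf a).support.card := by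
    intro a ha
    exact Equiv.Perm.IsCycle.two_le_card_support (Equiv.Perm.isCycle_cycleOf τ ha)
  by_cases h1 : i = 1
  · subst h1
    have : τ.cycleType.count 1 = 0 := by
      rw [Multiset.count_eq_zero]
      intro h
      have := Equiv.Perm.two_le_of_mem_cycleType h
      omega
    rw [this]
    simp only [if_true, zero_add, one_mul]
    have e : (Finset.univ.filter (fun a => cycLen τ a = 1)) = τ.supportᶜ := by
      ext a
      simp only [Finset.mem_filter, Finset.mem_univ, true_and, Finset.mem_compl,
        Equiv.Perm.mem_support, not_not]
      unfold cycLen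
      split_ifs with h
      · simp [h]
      · have := hc a h
        simp only [h, iff_false]
        omega
    rw [e, Finset.card_compl, Fintype.card_fin]
  · rw [if_neg (fun h => h1 h.symm), add_zero, Equiv.Perm.cycleType_def, Multiset.count_map]
    have h2 : (Finset.univ.filter (fun a => cycLen τ a = i)).card =
        ∑ c ∈ τ.cycleFactorsFinset.filter (fun c => i = c.support.card),
          ((Finset.univ.filter (fun a => cycLen τ a = i)).filter (fun a => τ.cycleOf a = c)).card := by
      apply Finset.card_eq_sum_card_fiberwise
      intro a ha
      have ha' : cycLen τ a = i := by simpa using ha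
      have hne : τ a ≠ a := by
        intro h
        apply h1
        rw [← ha', cycLen, if_pos h]
      rw [cycLen, if_neg hne] at ha'
      simp only [Finset.coe_filter, Set.mem_ofPred_eq]
      rw [Equiv.Perm.cycleOf_mem_cycleFactorsFinset_iff, Equiv.Perm.mem_support]
      exact ⟨hne, ha'.symm⟩
    have h3 : ∀ c ∈ τ.cycleFactorsFinset.filter (fun c => i = c.support.card),
        ((Finset.univ.filter (fun a => cycLen τ a = i)).filter (fun a => τ.cycleOf a = c)).card
          = i := by
      intro c hc
      obtain ⟨hc1, hc2⟩ := Finset.mem_filter.1 hc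
      conv_rhs => rw [hc2]
      congr 1
      ext a
      simp only [Finset.mem_filter, Finset.mem_univ, true_and]
      constructor
      · rintro ⟨ha, rfl⟩
        have := Equiv.Perm.cycleOf_mem_cycleFactorsFinset_iff.1 hc1
        rw [Equiv.Perm.mem_support_cycleOf_iff]
        exact ⟨Equiv.Perm.SameCycle.refl _ _, this⟩
      · intro ha
        have e := Equiv.Perm.cycle_is_cycleOf ha hc1
        have hs := Equiv.Perm.mem_cycleFactorsFinset_support_le hc1 ha
        rw [Equiv.Perm.mem_support] at hs
        refine ⟨?_, e.symm⟩
        rw [cycLen, if_neg hs, ← e, hc2]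
    rw [h2, Finset.sum_congr rfl h3, Finset.sum_const, smul_eq_mul, mul_comm]
    rfl

theorem fullCycleType_conj {n : ℕ} (g τ : Equiv.Perm (Fin n)) :
    fullCycleType (g * τ * g⁻¹) = fullCycleType τ := by
  unfold fullCycleType
  rw [Equiv.Perm.cycleType_conj, Equiv.Perm.card_support_conj]

theorem cycLen_conj {n : ℕ} (g τ : Equiv.Perm (Fin n)) (a : Fin n) :
    cycLen (g * τ * g⁻¹) (g a) = cycLen τ a := by
  classical
  rw [cycLen_eq, cycLen_eq]
  symm
  apply Finset.card_bij (fun b _ => g b)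
  · intro b hb
    simp only [Finset.mem_filter, Finset.mem_univ, true_and] at hb ⊢
    rw [Equiv.Perm.sameCycle_conj]
    simpa using hb
  · intro b _ b' _ h
    exact g.injective h
  · intro b hb
    simp only [Finset.mem_filter, Finset.mem_univ, true_and] at hb
    rw [Equiv.Perm.sameCycle_conj] at hb
    exact ⟨g⁻¹ b, by simpa using hb, by simp⟩

def goodP {n : ℕ} (lam ν : Multiset ℕ) (S : Finset (Fin n)) (τ : Equiv.Perm (Fin n)) : Prop :=
  fullCycleType τ = lam ∧
        (∀ a ∈ S, ∀ b ∈ S, a ≠ b → ¬ τ.SameCycle a b) ∧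
        (∀ i : ℕ, (S.filter (fun a => cycLen τ a = i)).card = ν.count i)

theorem goodP_conj {n : ℕ} (lam ν : Multiset ℕ) (S : Finset (Fin n)) (g τ : Equiv.Perm (Fin n))
    (h : goodP lam ν S τ) : goodP lam ν (S.map g.toEmbedding) (g * τ * g⁻¹) := by
  obtain ⟨h1, h2, h3⟩ := h
  refine ⟨by rw [fullCycleType_conj, h1], ?_, ?_⟩
  · intro a ha b hb hab
    obtain ⟨x, hx, rfl⟩ := Finset.mem_map.1 ha
    obtain ⟨y, hy, rfl⟩ := Finset.mem_map.1 hb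
    rw [Equiv.Perm.sameCycle_conj]
    simpa using h2 x hx y hy (fun e => hab (by rw [e]))
  · intro i
    rw [← h3 i, Finset.filter_map, Finset.card_map]
    congr 1
    ext a
    simp [cycLen_conj]

theorem exists_perm_map {n : ℕ} (S S' : Finset (Fin n)) (h : S.card = S'.card) :
    ∃ g : Equiv.Perm (Fin n), S.map g.toEmbedding = S' := by
  classical
  let e : {x // x ∈ S} ≃ {x // x ∈ S'} := Finset.equivOfCardEq h
  refine ⟨e.extendSubtype, ?_⟩
  apply Finset.eq_of_subset_of_card_le
  · intro x hx
    obtain ⟨a, ha, rfl⟩ := Finset.mem_map.1 hx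
    exact e.extendSubtype_mem a ha
  · rw [Finset.card_map, h]

open scoped Classical in
theorem goodP_card {n : ℕ} (lam ν : Multiset ℕ) (S S' : Finset (Fin n)) (h : S.card = S'.card) :
    (Finset.univ.filter (goodP lam ν S)).card = (Finset.univ.filter (goodP lam ν S')).card := by
  have main : ∀ S S' : Finset (Fin n), S.card = S'.card →
    (Finset.univ.filter (goodP lam ν S)).card ≤ (Finset.univ.filter (goodP lam ν S')).card := by
    intro S S' h
    obtain ⟨g, rfl⟩ := exists_perm_map S S' h
    refine Finset.card_le_card_of_injOn (fun τ => g * τ * g⁻¹) ?_ ?_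
    · intro τ hτ
      have hτ' : goodP lam ν S τ := by simpa using hτ
      simpa using goodP_conj lam ν S g τ hτ'
    · intro τ _ τ' _ h
      simpa using h
  exact le_antisymm (main _ _ h) (main _ _ h.symm)

open scoped Classical in
theorem card_fullCycleType {n : ℕ} (lam : Multiset ℕ) (h0 : (0 : ℕ) ∉ lam) (hsum : lam.sum = n) :
    (Finset.univ.filter (fun τ : Equiv.Perm (Fin n) => fullCycleType τ = lam)).card *
      ∏ i ∈ lam.toFinset, (i ^ lam.count i * (lam.count i).factorial) = n.factorial := by
  set m := lam.filter (fun i => i ≠ 1) with hm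
  have hl : lam = m + Multiset.replicate (lam.count 1) 1 := by
    rw [hm, ← Multiset.filter_eq', add_comm]
    exact (Multiset.filter_add_not _ _).symm
  have hs : m.sum + lam.count 1 = n := by
    have := congrArg Multiset.sum hl
    rw [Multiset.sum_add, Multiset.sum_replicate, smul_eq_mul, mul_one, hsum] at this
    omega
  have hiff : ∀ τ : Equiv.Perm (Fin n), fullCycleType τ = lam ↔ τ.cycleType = m := by
    intro τ
    constructor
    · intro h
      rw [hm, ← h, fullCycleType, Multiset.filter_add, Multiset.filter_eq_self.2,
        Multiset.filter_eq_nil.2, add_zero]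
      · intro a ha
        simp [Multiset.eq_of_mem_replicate ha]
      · intro a ha
        have := Equiv.Perm.two_le_of_mem_cycleType ha
        omega
    · intro h
      rw [fullCycleType, ← Equiv.Perm.sum_cycleType, h]
      conv_rhs => rw [hl]
      congr 2
      omega
  simp_rw [hiff]
  have key := Equiv.Perm.card_of_cycleType_mul_eq (Fin n) m
  rw [if_pos, Fintype.card_fin] at key
  · rw [← key]
    congr 1
    have hn : n - m.sum = lam.count 1 := by omega
    have hcm : ∀ i, i ≠ 1 → m.count i = lam.count i := by
      intro i hi
      rw [hm, Multiset.count_filter, if_pos hi]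
    have hmf : m.toFinset = lam.toFinset.erase 1 := by
      ext i; simp [hm, and_comm]
    rw [hn, Finset.prod_multiset_count, mul_assoc, ← Finset.prod_mul_distrib, hmf]
    have hp : ∏ i ∈ lam.toFinset.erase 1, (i ^ m.count i * (m.count i).factorial) =
       ∏ i ∈ lam.toFinset.erase 1, (i ^ lam.count i * (lam.count i).factorial) := by
      refine Finset.prod_congr rfl fun i hi => ?_
      rw [hcm i (Finset.ne_of_mem_erase hi)]
    rw [hp]
    by_cases h1 : 1 ∈ lam
    · rw [← Finset.mul_prod_erase _ _ (Multiset.mem_toFinset.2 h1)]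
      simp
    · rw [Finset.erase_eq_of_notMem (by simpa using h1), Multiset.count_eq_zero.2 h1]
      simp
  · rw [Fintype.card_fin]
    refine ⟨by omega, fun a ha => ?_⟩
    rw [hm, Multiset.mem_filter] at ha
    have : a ≠ 0 := fun h => h0 (h ▸ ha.1)
    omega

open scoped Classical in
theorem card_subsets {n : ℕ} (lam ν : Multiset ℕ) (h0 : (0 : ℕ) ∉ lam) (hν : ν ≤ lam)
    (τ : Equiv.Perm (Fin n)) (hτ : fullCycleType τ = lam) :
    ((Finset.univ.powersetCard ν.card).filter (fun S => goodP lam ν S τ)).card =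
      ∏ i ∈ lam.toFinset, (i ^ ν.count i * (lam.count i).choose (ν.count i)) := by
  have hI : ∀ a, cycLen τ a ∈ lam.toFinset := by
    intro a
    rw [Multiset.mem_toFinset, ← hτ, ← Multiset.count_ne_zero]
    intro h
    have := cycLen_count τ (cycLen τ a)
    rw [h, mul_zero, Finset.card_eq_zero, Finset.filter_eq_empty_iff] at this
    exact this (Finset.mem_univ a) rfl
  have hπ : ∀ a b, Finset.univ.filter (fun c => τ.SameCycle a c) =
      Finset.univ.filter (fun c => τ.SameCycle b c) ↔ τ.SameCycle a b := by
    intro a b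
    constructor
    · intro h
      have : b ∈ Finset.univ.filter (fun c => τ.SameCycle a c) := by
        rw [h]; simpa using Equiv.Perm.SameCycle.refl τ b
      simpa using this
    · intro h
      ext c
      simp only [Finset.mem_filter, Finset.mem_univ, true_and]
      exact ⟨fun h' => h.symm.trans h', fun h' => h.trans h'⟩
  have key := auxC (fun a : Fin n => Finset.univ.filter (fun c => τ.SameCycle a c)) (cycLen τ)
    (by
      intro a
      rw [cycLen_eq]
      congr 1
      ext b
      simp only [Finset.mem_filter, Finset.mem_univ, true_and, hπ]
      exact Equiv.Perm.sameCycle_comm)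
    (fun i => lam.count i) (fun i => ν.count i) lam.toFinset (by simpa using h0) hI
    (by
      intro i hi
      rw [Multiset.count_eq_zero]
      intro h
      exact hi (Multiset.mem_toFinset.2 (Multiset.mem_of_le hν h)))
    (by
      intro i _
      rw [← hτ]
      exact cycLen_count τ i)
  rw [← key]
  congr 1
  ext S
  simp only [Finset.mem_filter, Finset.mem_univ, true_and, Finset.mem_powersetCard,
    Finset.subset_univ]
  constructor
  · rintro ⟨-, -, h2, h3⟩
    refine ⟨?_, h3⟩
    intro a ha b hb hab
    by_contra hne
    exact h2 a ha b hb hne ((hπ a b).1 hab)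
  · rintro ⟨h2, h3⟩
    refine ⟨?_, hτ, ?_, h3⟩
    · rw [Finset.card_eq_sum_card_fiberwise (f := cycLen τ) (t := lam.toFinset)
        (fun a _ => hI a), Finset.sum_congr rfl (fun i _ => h3 i)]
      exact Multiset.sum_count_eq_card
        (fun i hi => Multiset.mem_toFinset.2 (Multiset.mem_of_le hν hi))
    · intro a ha b hb hne hab
      exact hne (h2 ha hb ((hπ a b).2 hab))


open scoped Classical in
/-- Count of permutations `τ` of cycle type `λ` whose cycles contain the `k+1` points moved
by a fixed `(k+1)`-cycle `σ` in distinct cycles, with exactly `γᵢ` of these points in cycles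
of length `i`: it equals `(k+1)! (n-k-1)! / ∏ᵢ i^{αᵢ-γᵢ} γᵢ! (αᵢ-γᵢ)!` (stated multiplied out). -/
theorem stmt2 (n k : ℕ) (σ : Equiv.Perm (Fin n)) (hσ : σ.IsCycle)
    (hcard : σ.support.card = k + 1)
    (lam : Multiset ℕ) (h0 : (0 : ℕ) ∉ lam) (hsum : lam.sum = n)
    (ν : Multiset ℕ) (hν : ν ≤ lam) (hνc : ν.card = k + 1) :
    (Finset.univ.filter (fun τ : Equiv.Perm (Fin n) =>
        fullCycleType τ = lam ∧
        (∀ a ∈ σ.support, ∀ b ∈ σ.support, a ≠ b → ¬ τ.SameCycle a b) ∧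
        (∀ i : ℕ, (σ.support.filter (fun a => cycLen τ a = i)).card = ν.count i))).card *
      ∏ i ∈ lam.toFinset,
        (i ^ (lam.count i - ν.count i) * Nat.factorial (ν.count i) *
          Nat.factorial (lam.count i - ν.count i)) =
      Nat.factorial (k + 1) * Nat.factorial (n - k - 1) := by
  have hfilt : (Finset.univ.filter (fun τ : Equiv.Perm (Fin n) =>
        fullCycleType τ = lam ∧
        (∀ a ∈ σ.support, ∀ b ∈ σ.support, a ≠ b → ¬ τ.SameCycle a b) ∧
        (∀ i : ℕ, (σ.support.filter (fun a => cycLen τ a = i)).card = ν.count i))) =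
      Finset.univ.filter (goodP lam ν σ.support) := by
    ext τ
    rw [Finset.mem_filter, Finset.mem_filter]
    unfold goodP
    refine and_congr_right fun _ => and_congr_right fun _ => and_congr_right fun _ => ?_
    refine forall_congr' fun i => ?_
    convert Iff.rfl
  rw [hfilt]
  have hkn : k + 1 ≤ n := by
    rw [← hcard]
    simpa using Finset.card_le_univ σ.support
  set N := (Finset.univ.filter (goodP lam ν σ.support)).card with hN
  set D := ∏ i ∈ lam.toFinset,
        (i ^ (lam.count i - ν.count i) * Nat.factorial (ν.count i) *
          Nat.factorial (lam.count i - ν.count i)) with hD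
  -- double counting pairs (S, τ)
  have hdc : n.choose (k + 1) * N =
      (Finset.univ.filter (fun τ : Equiv.Perm (Fin n) => fullCycleType τ = lam)).card *
        ∏ i ∈ lam.toFinset, (i ^ ν.count i * (lam.count i).choose (ν.count i)) := by
    have h := Finset.sum_card_bipartiteAbove_eq_sum_card_bipartiteBelow
      (s := (Finset.univ : Finset (Fin n)).powersetCard (k + 1))
      (t := Finset.univ.filter (fun τ : Equiv.Perm (Fin n) => fullCycleType τ = lam))
      (goodP lam ν)
    have hl : ∀ S ∈ (Finset.univ : Finset (Fin n)).powersetCard (k + 1),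
        (Finset.bipartiteAbove (goodP lam ν)
          (Finset.univ.filter (fun τ : Equiv.Perm (Fin n) => fullCycleType τ = lam)) S).card
          = N := by
      intro S hS
      rw [hN, ← goodP_card lam ν S σ.support (by rw [hcard, (Finset.mem_powersetCard.1 hS).2])]
      congr 1
      ext τ
      simp only [Finset.mem_bipartiteAbove, Finset.mem_filter, Finset.mem_univ, true_and,
        and_iff_right_iff_imp]
      exact fun h => h.1
    have hr : ∀ τ ∈ Finset.univ.filter (fun τ : Equiv.Perm (Fin n) => fullCycleType τ = lam),
        (Finset.bipartiteBelow (goodP lam ν)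
          ((Finset.univ : Finset (Fin n)).powersetCard (k + 1)) τ).card =
        ∏ i ∈ lam.toFinset, (i ^ ν.count i * (lam.count i).choose (ν.count i)) := by
      intro τ hτ
      rw [← card_subsets lam ν h0 hν τ (Finset.mem_filter.1 hτ).2, hνc]
      rfl
    rw [Finset.sum_congr rfl hl, Finset.sum_congr rfl hr, Finset.sum_const, Finset.sum_const,
      Finset.card_powersetCard, smul_eq_mul, smul_eq_mul, Finset.card_univ,
      Fintype.card_fin] at h
    exact h
  have hprod : (∏ i ∈ lam.toFinset, (i ^ ν.count i * (lam.count i).choose (ν.count i))) * D =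
      ∏ i ∈ lam.toFinset, (i ^ lam.count i * (lam.count i).factorial) := by
    rw [hD, ← Finset.prod_mul_distrib]
    refine Finset.prod_congr rfl fun i _ => ?_
    have hle : ν.count i ≤ lam.count i := Multiset.count_le_of_le i hν
    rw [← Nat.choose_mul_factorial_mul_factorial hle]
    conv_rhs => rw [← Nat.add_sub_of_le hle, pow_add, Nat.add_sub_of_le hle]
    ring
  have hpos : 0 < n.choose (k + 1) := Nat.choose_pos hkn
  apply Nat.eq_of_mul_eq_mul_left hpos
  rw [← mul_assoc, hdc, mul_assoc, hprod, card_fullCycleType lam h0 hsum, ← mul_assoc,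
    Nat.sub_sub, Nat.choose_mul_factorial_mul_factorial hkn]
end

section
/- In the associated graded algebra gr^F Z(ℂ[S_n]) of the center of the group algebra of S_n (filtered by deg(σ) = 2(n − number of cycles of σ)), the cup product of the class sum of (k+1)-cycles with the class sum of cycle type λ = (1^{α₁} 2^{α₂}...) is: χ_{(k+1,1^{n−k−1})} ∪ χ_λ = Σ_ν [ k! · |ν| · (α_{|ν|}+1) / ∏ᵢ γᵢ! ] · χ_{λ_ν}, where ν = (1^{γ₁} 2^{γ₂}...) runs over partitions with ℓ(ν) = k+1 and γᵢ ≤ αᵢ for all i, and λ_ν is obtained from λ by removing γᵢ parts equal to i for each i and adding one part equal to |ν|. -/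
noncomputable def numCycles {n : ℕ} (σ : Equiv.Perm (Fin n)) : ℕ :=
  σ.cycleType.card + (n - σ.support.card)

open scoped Classical in
/-- The class sum `χ_λ = Σ_{σ ∈ C_λ} σ` in the group algebra `ℂ[S_n]`. -/
noncomputable def chiClass (n : ℕ) (lam : Multiset ℕ) :
    MonoidAlgebra ℂ (Equiv.Perm (Fin n)) :=
  ∑ σ ∈ Finset.univ.filter (fun σ : Equiv.Perm (Fin n) => fullCycleType σ = lam),
    MonoidAlgebra.single σ 1

/-- The span of group elements of (half-)degree `n - c(σ)` strictly less than `d`: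
the part of the filtration below degree `2d`. -/
noncomputable def lowFilt (n d : ℕ) : Submodule ℂ (MonoidAlgebra ℂ (Equiv.Perm (Fin n))) :=
  Submodule.span ℂ {x | ∃ σ : Equiv.Perm (Fin n),
    n - numCycles σ < d ∧ x = MonoidAlgebra.single σ 1}

namespace CupAux

open Equiv Equiv.Perm

/-- The cycle (orbit) of `σ` through `x`, as a finset. -/
def orb {n : ℕ} (σ : Perm (Fin n)) (x : Fin n) : Finset (Fin n) :=
  Finset.univ.filter (fun y => σ.SameCycle x y)

/-- All cycles of `σ`, fixed points included. -/
def orbits {n : ℕ} (σ : Perm (Fin n)) : Finset (Finset (Fin n)) :=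
  Finset.univ.image (orb σ)

lemma mem_orb {n : ℕ} {σ : Perm (Fin n)} {x y : Fin n} : y ∈ orb σ x ↔ σ.SameCycle x y := by
  simp [orb]

lemma orb_eq_iff {n : ℕ} {σ : Perm (Fin n)} {x y : Fin n} :
    orb σ x = orb σ y ↔ σ.SameCycle x y := by
  constructor
  · intro h
    have : y ∈ orb σ y := mem_orb.2 (SameCycle.refl _ _)
    rw [← h] at this
    exact mem_orb.1 this
  · intro h
    ext z
    rw [mem_orb, mem_orb]
    exact ⟨fun hz => h.symm.trans hz, fun hz => h.trans hz⟩

lemma fct_eq {n : ℕ} (σ : Perm (Fin n)) :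
    fullCycleType σ = (orbits σ).val.map Finset.card := by
  have hdis : Disjoint (σ.cycleFactorsFinset.image support) ((σ.supportᶜ).image (fun x => ({x} : Finset (Fin n)))) := by
    rw [Finset.disjoint_left]
    intro a ha hb
    simp only [Finset.mem_image] at ha hb
    obtain ⟨c, hc, rfl⟩ := ha
    obtain ⟨x, hx, hx2⟩ := hb
    have h1 := (mem_cycleFactorsFinset_iff.1 hc).1.two_le_card_support
    rw [← hx2] at h1
    simp at h1
  have horb : orbits σ = (σ.cycleFactorsFinset.image support).disjUnion
      ((σ.supportᶜ).image (fun x => ({x} : Finset (Fin n)))) hdis := by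
    have key : ∀ x, orb σ x = if x ∈ σ.support then (σ.cycleOf x).support else {x} := by
      intro x
      ext y
      split_ifs with h
      · rw [mem_orb, mem_support_cycleOf_iff]
        simp [h]
      · rw [mem_orb, Finset.mem_singleton]
        rw [notMem_support] at h
        constructor
        · rintro ⟨i, hi⟩
          rw [← hi, zpow_apply_eq_self_of_apply_eq_self h]
        · rintro rfl
          exact SameCycle.refl _ _
    ext a
    simp only [orbits, Finset.mem_image, Finset.mem_univ, true_and, Finset.mem_disjUnion]
    constructor
    · rintro ⟨x, rfl⟩
      rw [key]
      split_ifs with h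
      · exact Or.inl ⟨σ.cycleOf x, cycleOf_mem_cycleFactorsFinset_iff.2 h, rfl⟩
      · exact Or.inr ⟨x, by simpa using h, rfl⟩
    · rintro (⟨c, hc, rfl⟩ | ⟨x, hx, rfl⟩)
      · obtain ⟨x, hx⟩ := (mem_cycleFactorsFinset_iff.1 hc).1.nonempty_support
        refine ⟨x, ?_⟩
        have h2 := cycle_is_cycleOf hx hc
        have h3 : x ∈ σ.support := by
          rw [← cycleOf_mem_cycleFactorsFinset_iff, ← h2]; exact hc
        rw [key, if_pos h3, ← h2]
      · exact ⟨x, by rw [key, if_neg (by simpa using hx)]⟩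
  rw [horb]
  simp only [Finset.disjUnion_val, Multiset.map_add]
  rw [Finset.image_val_of_injOn, Finset.image_val_of_injOn]
  · rw [fullCycleType, cycleType_def, Multiset.map_map, Multiset.map_map]
    congr 1
    simp [Finset.card_compl]
  · intro a _ b _ h
    simpa using h
  · intro a ha b hb h
    obtain ⟨x, hx⟩ := (mem_cycleFactorsFinset_iff.1 ha).1.nonempty_support
    have hx' : x ∈ b.support := by
      have : a.support = b.support := h
      rwa [← this]
    rw [cycle_is_cycleOf hx ha, cycle_is_cycleOf hx' hb]

lemma card_fct {n : ℕ} (σ : Perm (Fin n)) : (fullCycleType σ).card = numCycles σ := by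
  simp [fullCycleType, numCycles]

lemma card_fct' {n : ℕ} (σ : Perm (Fin n)) : (fullCycleType σ).card = (orbits σ).card := by
  rw [fct_eq]; simp

lemma sameCycle_of_equiv {n : ℕ} {π : Perm (Fin n)} {r : Fin n → Fin n → Prop}
    (hr : Equivalence r) (h : ∀ x, r x (π x)) {x y : Fin n} (hxy : π.SameCycle x y) : r x y := by
  obtain ⟨i, hi, rfl⟩ := hxy.exists_pow_eq'
  clear hxy hi
  induction i with
  | zero => exact hr.refl _
  | succ i ih =>
    rw [pow_succ', Perm.mul_apply]
    exact hr.trans ih (h _)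

/-- Merged relation: glue together all the cycles of `σ` that meet `S`. -/
def M {n : ℕ} (σ : Perm (Fin n)) (S : Finset (Fin n)) (x y : Fin n) : Prop :=
  σ.SameCycle x y ∨ ((∃ a ∈ S, σ.SameCycle a x) ∧ (∃ a ∈ S, σ.SameCycle a y))

lemma M_equiv {n : ℕ} (σ : Perm (Fin n)) (S : Finset (Fin n)) : Equivalence (M σ S) where
  refl x := Or.inl (SameCycle.refl _ _)
  symm := by
    rintro x y (h | ⟨h1, h2⟩)
    · exact Or.inl h.symm
    · exact Or.inr ⟨h2, h1⟩
  trans := by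
    rintro x y z (h | ⟨h1, h2⟩) (h' | ⟨h1', h2'⟩)
    · exact Or.inl (h.trans h')
    · obtain ⟨a, ha, h3⟩ := h1'
      exact Or.inr ⟨⟨a, ha, h3.trans h.symm⟩, h2'⟩
    · obtain ⟨a, ha, h3⟩ := h2
      exact Or.inr ⟨h1, ⟨a, ha, h3.trans h'⟩⟩
    · exact Or.inr ⟨h1, h2'⟩

lemma sub_M {n : ℕ} {σ τ : Perm (Fin n)} {x y : Fin n} (h : (τ * σ).SameCycle x y) :
    M σ τ.support x y := by
  refine sameCycle_of_equiv (M_equiv _ _) ?_ h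
  intro x
  have h1 : M σ τ.support x (σ x) := Or.inl ⟨1, by simp⟩
  refine (M_equiv _ _).trans h1 ?_
  rw [Perm.mul_apply]
  by_cases hx : σ x ∈ τ.support
  · exact Or.inr ⟨⟨_, hx, SameCycle.refl _ _⟩, ⟨_, apply_mem_support.2 hx, SameCycle.refl _ _⟩⟩
  · rw [notMem_support.1 hx]
    exact (M_equiv _ _).refl _

/-- `S` meets every cycle of `σ` at most once. -/
def Trans {n : ℕ} (σ : Perm (Fin n)) (S : Finset (Fin n)) : Prop :=
  ∀ x ∈ S, ∀ y ∈ S, σ.SameCycle x y → x = y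

lemma M_sub {n : ℕ} {σ τ : Perm (Fin n)} (hτ : τ.IsCycle) (hT : Trans σ τ.support)
    {x y : Fin n} (h : M σ τ.support x y) : (τ * σ).SameCycle x y := by
  have A : ∀ a ∈ τ.support, ∀ x, σ.SameCycle a x → (τ * σ).SameCycle a x := by
    intro a ha x hx
    obtain ⟨i, hi, rfl⟩ := hx.exists_pow_eq'
    clear hx hi
    induction i with
    | zero => exact SameCycle.refl _ _
    | succ i ih =>
      rw [pow_succ', Perm.mul_apply]
      by_cases hx : σ ((σ ^ i) a) ∈ τ.support
      · have : a = σ ((σ ^ i) a) := hT _ ha _ hx ⟨((i + 1 : ℕ) : ℤ), by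
          rw [zpow_natCast, pow_succ', Perm.mul_apply]⟩
        rw [← this]
      · refine ih.trans ⟨1, ?_⟩
        rw [zpow_one, Perm.mul_apply, notMem_support.1 hx]
  have B : ∀ x y, σ.SameCycle x y → (τ * σ).SameCycle x y := by
    intro x y hxy
    refine sameCycle_of_equiv (r := (τ * σ).SameCycle)
      ⟨fun _ => SameCycle.refl _ _, fun h => h.symm, fun h h' => h.trans h'⟩ ?_ hxy
    intro x
    by_cases hx : σ x ∈ τ.support
    · exact (A _ hx x ⟨-1, by simp⟩).symm
    · exact ⟨1, by rw [zpow_one, Perm.mul_apply, notMem_support.1 hx]⟩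
  have C : ∀ x y, τ.SameCycle x y → (τ * σ).SameCycle x y := by
    intro x y hxy
    refine sameCycle_of_equiv (r := (τ * σ).SameCycle)
      ⟨fun _ => SameCycle.refl _ _, fun h => h.symm, fun h h' => h.trans h'⟩ ?_ hxy
    intro x
    have h1 : (τ * σ).SameCycle (σ⁻¹ x) x := B _ _ ⟨1, by simp⟩
    exact h1.symm.trans ⟨1, by simp⟩
  rcases h with h | ⟨⟨a, ha, hax⟩, ⟨b, hb, hby⟩⟩
  · exact B _ _ h
  · have hab := hτ.sameCycle (mem_support.1 ha) (mem_support.1 hb)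
    exact (B _ _ hax).symm.trans ((C _ _ hab).trans (B _ _ hby))

open Classical in
/-- Classes of the merged relation. -/
noncomputable def mc {n : ℕ} (σ : Perm (Fin n)) (S : Finset (Fin n)) (x : Fin n) :
    Finset (Fin n) :=
  Finset.univ.filter (fun y => M σ S x y)

lemma mem_mc {n : ℕ} {σ : Perm (Fin n)} {S : Finset (Fin n)} {x y : Fin n} :
    y ∈ mc σ S x ↔ M σ S x y := by
  simp [mc]

/-- The cycles of `σ` meeting `S`. -/
def hits {n : ℕ} (σ : Perm (Fin n)) (S : Finset (Fin n)) : Finset (Finset (Fin n)) :=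
  S.image (orb σ)

lemma hits_sub {n : ℕ} (σ : Perm (Fin n)) (S : Finset (Fin n)) : hits σ S ⊆ orbits σ :=
  Finset.image_subset_image (Finset.subset_univ _)

lemma mem_hits {n : ℕ} {σ : Perm (Fin n)} {S : Finset (Fin n)} {x : Fin n} :
    orb σ x ∈ hits σ S ↔ ∃ a ∈ S, σ.SameCycle a x := by
  simp [hits, orb_eq_iff]

lemma mem_U {n : ℕ} {σ : Perm (Fin n)} {S : Finset (Fin n)} {x : Fin n} :
    x ∈ (hits σ S).biUnion id ↔ ∃ a ∈ S, σ.SameCycle a x := by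
  simp [hits, mem_orb]

lemma U_notMem {n : ℕ} {σ : Perm (Fin n)} {S : Finset (Fin n)} :
    (hits σ S).biUnion id ∉ orbits σ \ hits σ S := by
  intro h
  rw [Finset.mem_sdiff] at h
  obtain ⟨x, -, hx⟩ := Finset.mem_image.1 h.1
  have : x ∈ (hits σ S).biUnion id := by rw [← hx]; exact mem_orb.2 (SameCycle.refl _ _)
  apply h.2
  rw [← hx, mem_hits]
  exact mem_U.1 this

lemma image_mc {n : ℕ} {σ : Perm (Fin n)} {S : Finset (Fin n)} (hS : S.Nonempty) :
    Finset.univ.image (mc σ S) = insert ((hits σ S).biUnion id) (orbits σ \ hits σ S) := by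
  have h1 : ∀ x, (∃ a ∈ S, σ.SameCycle a x) → mc σ S x = (hits σ S).biUnion id := by
    intro x hx
    ext y
    rw [mem_U]
    rw [mem_mc, M]
    constructor
    · rintro (h | h)
      · obtain ⟨a, ha, hax⟩ := hx
        exact ⟨a, ha, hax.trans h⟩
      · exact h.2
    · intro h
      exact Or.inr ⟨hx, h⟩
  have h2 : ∀ x, ¬ (∃ a ∈ S, σ.SameCycle a x) → mc σ S x = orb σ x := by
    intro x hx
    ext y
    rw [mem_orb]
    rw [mem_mc, M]
    exact ⟨fun h => h.resolve_right (fun h' => hx h'.1), Or.inl⟩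
  ext t
  simp only [Finset.mem_image, Finset.mem_univ, true_and, Finset.mem_insert, Finset.mem_sdiff]
  constructor
  · rintro ⟨x, rfl⟩
    by_cases hx : ∃ a ∈ S, σ.SameCycle a x
    · exact Or.inl (h1 x hx)
    · right
      rw [h2 x hx, mem_hits]
      exact ⟨Finset.mem_image_of_mem _ (Finset.mem_univ _), hx⟩
  · rintro (rfl | ⟨h, h'⟩)
    · obtain ⟨a, ha⟩ := hS
      exact ⟨a, h1 a ⟨a, ha, SameCycle.refl _ _⟩⟩
    · obtain ⟨x, -, rfl⟩ := Finset.mem_image.1 h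
      rw [mem_hits] at h'
      exact ⟨x, h2 x h'⟩

lemma trans_of_card {n k : ℕ} {σ τ : Perm (Fin n)} (hcard : τ.support.card = k + 1)
    (h : (fullCycleType (τ * σ)).card + k ≤ (fullCycleType σ).card) : Trans σ τ.support := by
  have hS : τ.support.Nonempty := by
    rw [← Finset.card_pos]; omega
  have h1 : (Finset.univ.image (mc σ τ.support)).card ≤ (orbits (τ * σ)).card := by
    classical
    have : Finset.univ.image (mc σ τ.support) ⊆
        (orbits (τ * σ)).image (fun t => if ht : t.Nonempty then mc σ τ.support ht.choose else ∅) := by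
      intro t ht
      obtain ⟨x, -, rfl⟩ := Finset.mem_image.1 ht
      refine Finset.mem_image.2 ⟨orb (τ * σ) x, Finset.mem_image_of_mem _ (Finset.mem_univ _), ?_⟩
      have hne : (orb (τ * σ) x).Nonempty := ⟨x, mem_orb.2 (SameCycle.refl _ _)⟩
      rw [dif_pos hne]
      have := sub_M (mem_orb.1 hne.choose_spec)
      ext y
      simp only [mem_mc]
      exact ⟨fun hy => (M_equiv _ _).trans this hy,
        fun hy => (M_equiv _ _).trans ((M_equiv _ _).symm this) hy⟩
    exact (Finset.card_le_card this).trans Finset.card_image_le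
  rw [image_mc hS, Finset.card_insert_of_notMem U_notMem,
    Finset.card_sdiff_of_subset (hits_sub _ _)] at h1
  have h2 := Finset.card_le_card (hits_sub σ τ.support)
  rw [card_fct', card_fct'] at h
  have h3 : (hits σ τ.support).card ≤ τ.support.card := Finset.card_image_le
  have h4 : (hits σ τ.support).card = τ.support.card := by omega
  have h5 := Finset.card_image_iff.1 h4
  intro x hx y hy hxy
  exact h5 hx hy (orb_eq_iff.2 hxy)

lemma card_U {n : ℕ} {σ : Perm (Fin n)} {T : Finset (Finset (Fin n))} (hT : T ⊆ orbits σ) :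
    (T.biUnion id).card = (T.val.map Finset.card).sum := by
  rw [Finset.card_biUnion]
  · rfl
  · intro a ha b hb hab
    obtain ⟨x, -, rfl⟩ := Finset.mem_image.1 (hT ha)
    obtain ⟨y, -, rfl⟩ := Finset.mem_image.1 (hT hb)
    refine Finset.disjoint_left.2 ?_
    intro z hz hz'
    apply hab
    exact orb_eq_iff.2 ((mem_orb.1 hz).trans (mem_orb.1 hz').symm)

lemma fct_mul {n : ℕ} {σ τ : Perm (Fin n)} (hτ : τ.IsCycle) (hT : Trans σ τ.support) :
    fullCycleType (τ * σ) = ((hits σ τ.support).val.map Finset.card).sum ::ₘ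
      (fullCycleType σ - (hits σ τ.support).val.map Finset.card) := by
  have h1 : orbits (τ * σ) = Finset.univ.image (mc σ τ.support) := by
    rw [orbits]
    congr 1
    ext x y
    rw [mem_orb]
    simp only [mem_mc]
    exact ⟨sub_M, M_sub hτ hT⟩
  rw [fct_eq, h1, image_mc hτ.nonempty_support, Finset.insert_val_of_notMem U_notMem,
    Multiset.map_cons, card_U (hits_sub _ _), fct_eq]
  congr 1
  have : (orbits σ).val = (orbits σ \ hits σ τ.support).val + (hits σ τ.support).val := by
    rw [← Finset.disjUnion_val _ _ Finset.sdiff_disjoint, Finset.disjUnion_eq_union,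
      Finset.sdiff_union_of_subset (hits_sub _ _)]
  rw [this, Multiset.map_add, Multiset.add_sub_cancel_right]

end CupAux

namespace CupAux

open Equiv Equiv.Perm

lemma card_sub {α : Type*} [DecidableEq α] (f : α → ℕ) (R : Finset ℕ) (A : Finset α) :
    ∀ ν : Multiset ℕ, ν.toFinset ⊆ R →
    (A.powerset.filter (fun T => T.val.map f = ν)).card =
      ∏ i ∈ R, Nat.choose ((A.val.map f).count i) (ν.count i) := by
  induction A using Finset.induction_on with
  | empty =>
    intro ν hν
    by_cases h : ν = 0
    · subst h; simp [Finset.filter_singleton]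
    · obtain ⟨a, ha⟩ := Multiset.exists_mem_of_ne_zero h
      have h1 : Nat.choose (((∅ : Finset α).val.map f).count a) (ν.count a) = 0 := by
        apply Nat.choose_eq_zero_of_lt
        simpa [Multiset.count_pos] using ha
      rw [Finset.prod_eq_zero (i := a) (hν (by simpa using ha)) h1]
      simp [Finset.filter_singleton, Ne.symm h]
  | insert a A ha ih =>
    intro ν hν
    rw [Finset.powerset_insert, Finset.filter_union, Finset.card_union_of_disjoint]
    · have e2 : (((A.powerset.image (insert a)).filter (fun T => T.val.map f = ν))).card =
          (A.powerset.filter (fun T => f a ::ₘ T.val.map f = ν)).card := by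
        rw [Finset.filter_image, Finset.card_image_of_injOn]
        · congr 1
          apply Finset.filter_congr
          intro T hT
          have : a ∉ T := fun h => ha (Finset.mem_powerset.1 hT h)
          rw [Finset.insert_val_of_notMem this, Multiset.map_cons]
        · intro T hT T' hT' h
          have h1 : a ∉ T := fun h => ha (Finset.mem_powerset.1 (Finset.mem_filter.1 hT).1 h)
          have h2 : a ∉ T' := fun h => ha (Finset.mem_powerset.1 (Finset.mem_filter.1 hT').1 h)
          rw [← Finset.erase_insert h1, ← Finset.erase_insert h2]
          exact congrArg (fun s => s.erase a) h
      rw [e2, ih ν hν, Finset.insert_val_of_notMem ha, Multiset.map_cons]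
      by_cases hb : f a ∈ ν
      · have hbR : f a ∈ R := hν (by simpa using hb)
        have e3 : (A.powerset.filter (fun T => f a ::ₘ T.val.map f = ν)) =
            (A.powerset.filter (fun T => T.val.map f = ν.erase (f a))) := by
          apply Finset.filter_congr
          intro T _
          constructor
          · rintro rfl; simp
          · intro h; rw [h, Multiset.cons_erase hb]
        rw [e3, ih (ν.erase (f a)) (fun i hi => hν (by
          simp only [Multiset.mem_toFinset] at hi ⊢; exact Multiset.mem_of_mem_erase hi))]
        rw [← Finset.mul_prod_erase _ _ hbR, ← Finset.mul_prod_erase _ _ hbR,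
          ← Finset.mul_prod_erase _ _ hbR]
        have e4 : ∏ i ∈ R.erase (f a), Nat.choose ((A.val.map f).count i) ((ν.erase (f a)).count i)
            = ∏ i ∈ R.erase (f a), Nat.choose ((A.val.map f).count i) (ν.count i) := by
          apply Finset.prod_congr rfl
          intro i hi
          rw [Multiset.count_erase_of_ne (Finset.ne_of_mem_erase hi)]
        have e5 : ∏ i ∈ R.erase (f a), Nat.choose ((f a ::ₘ A.val.map f).count i) (ν.count i)
            = ∏ i ∈ R.erase (f a), Nat.choose ((A.val.map f).count i) (ν.count i) := by
          apply Finset.prod_congr rfl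
          intro i hi
          rw [Multiset.count_cons_of_ne (Finset.ne_of_mem_erase hi)]
        rw [e4, e5, Multiset.count_erase_self, Multiset.count_cons_self, ← add_mul]
        congr 1
        obtain ⟨c, hc⟩ : ∃ c, ν.count (f a) = c + 1 :=
          Nat.exists_eq_succ_of_ne_zero (Multiset.count_ne_zero.2 hb)
        rw [hc, Nat.choose_succ_succ, Nat.add_sub_cancel, add_comm]
      · have e3 : (A.powerset.filter (fun T => f a ::ₘ T.val.map f = ν)) = ∅ := by
          apply Finset.filter_false_of_mem
          rintro T _ rfl
          exact hb (Multiset.mem_cons_self _ _)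
        rw [e3, Finset.card_empty, add_zero]
        apply Finset.prod_congr rfl
        intro i hi
        by_cases hia : i = f a
        · rw [hia, Multiset.count_eq_zero_of_notMem hb]; simp
        · rw [Multiset.count_cons_of_ne hia]
    · rw [Finset.disjoint_left]
      intro T hT hT'
      obtain ⟨T', _, rfl⟩ := Finset.mem_image.1 (Finset.mem_filter.1 hT').1
      exact ha (Finset.mem_powerset.1 (Finset.mem_filter.1 hT).1 (Finset.mem_insert_self _ _))

open Classical in
lemma card_transversal {n : ℕ} (σ : Perm (Fin n)) (T : Finset (Finset (Fin n)))
    (hT : T ⊆ orbits σ) :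
    (Finset.univ.filter (fun S : Finset (Fin n) => Trans σ S ∧ hits σ S = T)).card =
      (T.val.map Finset.card).prod := by
  have horb : ∀ t ∈ T, ∀ x ∈ t, orb σ x = t := by
    intro t ht x hx
    obtain ⟨y, -, rfl⟩ := Finset.mem_image.1 (hT ht)
    exact (orb_eq_iff.2 (mem_orb.1 hx)).symm
  have : (T.val.map Finset.card).prod = (T.pi (fun t => t)).card := by
    rw [Finset.card_pi]; rfl
  rw [this]
  symm
  have hio : ∀ f ∈ T.pi (fun t => t), ∀ t (ht : t ∈ T), orb σ (f t ht) = t := by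
    intro f hf t ht
    exact horb t ht _ (Finset.mem_pi.1 hf t ht)
  refine Finset.card_bij (fun f _ => T.attach.image (fun t => f t.1 t.2)) ?_ ?_ ?_
  · intro f hf
    simp only [Finset.mem_filter, Finset.mem_univ, true_and]
    constructor
    · intro x hx y hy hxy
      obtain ⟨⟨t, ht⟩, -, rfl⟩ := Finset.mem_image.1 hx
      obtain ⟨⟨t', ht'⟩, -, rfl⟩ := Finset.mem_image.1 hy
      have := orb_eq_iff.2 hxy
      simp only [hio f hf] at this
      subst this
      rfl
    · ext t
      simp only [hits, Finset.mem_image, Finset.mem_attach, true_and, Subtype.exists]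
      constructor
      · rintro ⟨_, ⟨t', ht', rfl⟩, rfl⟩
        rw [hio f hf]; exact ht'
      · intro ht
        exact ⟨_, ⟨t, ht, rfl⟩, hio f hf t ht⟩
  · intro f hf g hg h
    funext t ht
    have h1 : f t ht ∈ T.attach.image (fun t => f t.1 t.2) :=
      Finset.mem_image.2 ⟨⟨t, ht⟩, Finset.mem_attach _ _, rfl⟩
    rw [h] at h1
    obtain ⟨⟨t', ht'⟩, -, h2⟩ := Finset.mem_image.1 h1
    have h3 := congrArg (orb σ) h2
    simp only [hio f hf, hio g hg] at h3
    subst h3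
    exact h2.symm
  · intro S hS
    simp only [Finset.mem_filter, Finset.mem_univ, true_and] at hS
    obtain ⟨hS1, rfl⟩ := hS
    have : ∀ t ∈ hits σ S, ∃ x ∈ S, orb σ x = t := by
      intro t ht; exact Finset.mem_image.1 ht
    choose f hf1 hf2 using this
    refine ⟨f, ?_, ?_⟩
    · rw [Finset.mem_pi]
      intro t ht
      have := mem_orb.2 (SameCycle.refl σ (f t ht))
      rwa [hf2] at this
    · ext x
      simp only [Finset.mem_image, Finset.mem_attach, true_and, Subtype.exists]
      constructor
      · rintro ⟨t, ht, rfl⟩; exact hf1 t ht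
      · intro hx
        refine ⟨orb σ x, Finset.mem_image_of_mem _ hx, ?_⟩
        exact hS1 _ (hf1 _ _) _ hx (orb_eq_iff.1 (hf2 _ _))

lemma decomp {n : ℕ} {lam : Multiset ℕ} (h0 : 0 ∉ lam) (hsum : lam.sum = n) :
    lam = lam.filter (2 ≤ ·) + Multiset.replicate (n - (lam.filter (2 ≤ ·)).sum) 1 := by
  have h1 := Multiset.filter_add_not (2 ≤ ·) lam
  have h2 : lam.filter (fun a => ¬ 2 ≤ a) =
      Multiset.replicate (lam.filter (fun a => ¬ 2 ≤ a)).card 1 := by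
    rw [Multiset.eq_replicate]
    refine ⟨rfl, ?_⟩
    intro b hb
    rw [Multiset.mem_filter] at hb
    have : b ≠ 0 := by rintro rfl; exact h0 hb.1
    omega
  have h3 : (lam.filter (2 ≤ ·)).sum + (lam.filter (fun a => ¬ 2 ≤ a)).card = n := by
    rw [← hsum]
    conv_rhs => rw [← h1, Multiset.sum_add, h2]
    simp
  have h4 : n - (lam.filter (2 ≤ ·)).sum = (lam.filter (fun a => ¬ 2 ≤ a)).card := by omega
  rw [h4, ← h2, h1]

lemma filter_fct {n : ℕ} (σ : Perm (Fin n)) :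
    (fullCycleType σ).filter (2 ≤ ·) = σ.cycleType := by
  rw [fullCycleType, Multiset.filter_add]
  rw [Multiset.filter_eq_self.2 (fun a ha => two_le_of_mem_cycleType ha)]
  rw [Multiset.filter_eq_nil.2]
  · simp
  · intro a ha
    rw [Multiset.eq_of_mem_replicate ha]; norm_num

lemma fct_iff {n : ℕ} {lam : Multiset ℕ} (h0 : 0 ∉ lam) (hsum : lam.sum = n)
    (σ : Perm (Fin n)) : fullCycleType σ = lam ↔ σ.cycleType = lam.filter (2 ≤ ·) := by
  constructor
  · rintro rfl
    rw [filter_fct]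
  · intro h
    rw [decomp h0 hsum, ← h, sum_cycleType, fullCycleType]

lemma fct_zero {n : ℕ} (σ : Perm (Fin n)) : 0 ∉ fullCycleType σ := by
  rw [fct_eq]
  intro h
  obtain ⟨t, ht, h⟩ := Multiset.mem_map.1 h
  obtain ⟨x, -, rfl⟩ := Finset.mem_image.1 (Finset.mem_def.2 ht)
  rw [Finset.card_eq_zero] at h
  have := mem_orb.2 (SameCycle.refl σ x)
  rw [h] at this
  simp at this

lemma fct_sum {n : ℕ} (σ : Perm (Fin n)) : (fullCycleType σ).sum = n := by
  rw [fullCycleType, Multiset.sum_add, sum_cycleType]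
  have := Finset.card_le_univ σ.support
  simp at this ⊢
  omega

/-- Order of the centralizer of an element of cycle type `lam`. -/
def zz (lam : Multiset ℕ) : ℕ := lam.prod * ∏ i ∈ lam.toFinset, (lam.count i).factorial

/-- The conjugacy class. -/
noncomputable def cl (n : ℕ) (lam : Multiset ℕ) : Finset (Perm (Fin n)) :=
  Finset.univ.filter (fun σ => fullCycleType σ = lam)

lemma card_cl {n : ℕ} {lam : Multiset ℕ} (h0 : 0 ∉ lam) (hsum : lam.sum = n) :
    (cl n lam).card * zz lam = n.factorial := by
  have h := card_of_cycleType_mul_eq (Fin n) (lam.filter (2 ≤ ·))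
  have hd := decomp h0 hsum
  set m := lam.filter (2 ≤ ·) with hm
  have hm1 : 1 ∉ m := by
    rw [hm, Multiset.mem_filter]; rintro ⟨-, h⟩; omega
  have hle : m.sum ≤ n := by
    have := congrArg Multiset.sum hd
    rw [Multiset.sum_add, hsum] at this
    omega
  rw [if_pos ⟨by simpa using hle, fun a ha => (Multiset.mem_filter.1 ha).2⟩] at h
  rw [Fintype.card_fin] at h
  have hcl : cl n lam = Finset.univ.filter (fun σ : Perm (Fin n) => σ.cycleType = m) := by
    apply Finset.filter_congr
    intro σ _
    exact fct_iff h0 hsum σ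
  rw [hcl, ← h]
  congr 1
  have hprod : lam.prod = m.prod := by
    rw [hd, Multiset.prod_add]; simp
  have hfact : ∏ i ∈ lam.toFinset, (lam.count i).factorial =
      (n - m.sum).factorial * ∏ i ∈ m.toFinset, (m.count i).factorial := by
    have hsub : lam.toFinset ⊆ insert 1 m.toFinset := by
      intro i hi
      rw [hd] at hi
      simp only [Multiset.mem_toFinset, Multiset.mem_add, Finset.mem_insert] at hi ⊢
      rcases hi with hi | hi
      · exact Or.inr hi
      · exact Or.inl (Multiset.eq_of_mem_replicate hi)
    rw [Finset.prod_subset hsub]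
    · rw [Finset.prod_insert (by simpa using hm1)]
      congr 1
      · rw [hd, Multiset.count_add, Multiset.count_eq_zero_of_notMem hm1]; simp
      · apply Finset.prod_congr rfl
        intro i hi
        have : i ≠ 1 := by rintro rfl; exact hm1 (by simpa using hi)
        rw [hd, Multiset.count_add, Multiset.count_replicate, if_neg this.symm, add_zero]
    · intro i _ hi
      rw [Multiset.count_eq_zero_of_notMem (by simpa using hi)]; rfl
  rw [zz, hprod, hfact]
  ring

end CupAux

namespace CupAux

open Equiv Equiv.Perm

lemma cyc_symm {n k : ℕ} {S S' : Finset (Fin n)} (h : S.card = S'.card) :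
    (Finset.univ.filter (fun τ : Perm (Fin n) => τ.cycleType = {k + 1} ∧ τ.support = S)).card ≤
    (Finset.univ.filter (fun τ : Perm (Fin n) => τ.cycleType = {k + 1} ∧ τ.support = S')).card := by
  let e : {x // x ∈ S} ≃ {x // x ∈ S'} := Finset.equivOfCardEq h
  let g : Perm (Fin n) := e.extendSubtype
  have hg : S.map g.toEmbedding = S' := by
    apply Finset.eq_of_subset_of_card_le
    · intro x hx
      obtain ⟨y, hy, rfl⟩ := Finset.mem_map.1 hx
      exact e.extendSubtype_mem y hy
    · rw [Finset.card_map, h]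
  refine Finset.card_le_card_of_injOn (fun τ => g * τ * g⁻¹) ?_ ?_
  · intro τ hτ
    simp only [Finset.coe_filter, Finset.mem_univ, true_and, Set.mem_ofPred_eq] at hτ ⊢
    rw [cycleType_conj, support_conj, hτ.2]
    exact ⟨hτ.1, hg⟩
  · intro a _ b _ hab
    simpa using hab

lemma card_cyc {n k : ℕ} (hk : 1 ≤ k) (S : Finset (Fin n)) (hS : S.card = k + 1) :
    (Finset.univ.filter (fun τ : Perm (Fin n) => τ.cycleType = {k + 1} ∧ τ.support = S)).card =
      k.factorial := by
  have hle : k + 1 ≤ n := by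
    rw [← hS]; simpa using Finset.card_le_univ S
  have h1 := card_of_cycleType_singleton (α := Fin n) (n := k + 1) (by omega) (by simpa using hle)
  rw [Finset.card_eq_sum_card_fiberwise (f := support)
    (t := Finset.powersetCard (k + 1) Finset.univ)] at h1
  · have h2 : ∀ S' ∈ Finset.powersetCard (k + 1) (Finset.univ : Finset (Fin n)),
        ((Finset.univ.filter (fun τ : Perm (Fin n) => τ.cycleType = {k + 1})).filter
          (fun τ => τ.support = S')).card =
        (Finset.univ.filter
          (fun τ : Perm (Fin n) => τ.cycleType = {k + 1} ∧ τ.support = S)).card := by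
      intro S' hS'
      rw [Finset.filter_filter]
      have := (Finset.mem_powersetCard.1 hS').2
      exact le_antisymm (cyc_symm (by omega)) (cyc_symm (by omega))
    rw [Finset.sum_congr rfl h2, Finset.sum_const, Finset.card_powersetCard, smul_eq_mul,
      Finset.card_univ, Nat.add_sub_cancel, mul_comm] at h1
    refine Nat.eq_of_mul_eq_mul_right (Nat.choose_pos ?_) h1
    simpa using hle
  · intro τ hτ
    have hτ' : τ.cycleType = {k + 1} := by simpa using hτ
    have h3 := sum_cycleType τ
    rw [hτ'] at h3
    refine Finset.mem_coe.2 (Finset.mem_powersetCard.2 ?_)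
    exact ⟨Finset.subset_univ _, by simpa using h3.symm⟩

lemma card_hits {n : ℕ} {σ : Perm (Fin n)} {S : Finset (Fin n)} (h : Trans σ S) :
    (hits σ S).card = S.card := by
  apply Finset.card_image_of_injOn
  intro x hx y hy hxy
  exact h x hx y hy (orb_eq_iff.1 hxy)

open Classical in
lemma card_trans_nu {n : ℕ} (σ : Perm (Fin n)) (ν : Multiset ℕ) :
    (Finset.univ.filter (fun S : Finset (Fin n) =>
      Trans σ S ∧ (hits σ S).val.map Finset.card = ν)).card =
    ν.prod * ∏ i ∈ ν.toFinset, Nat.choose ((fullCycleType σ).count i) (ν.count i) := by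
  rw [fct_eq, ← card_sub Finset.card ν.toFinset (orbits σ) ν (Finset.Subset.refl _)]
  rw [Finset.card_eq_sum_card_fiberwise (f := hits σ)
    (t := (orbits σ).powerset.filter (fun T => T.val.map Finset.card = ν))]
  · rw [mul_comm, ← smul_eq_mul, ← Finset.sum_const]
    apply Finset.sum_congr rfl
    intro T hT
    rw [Finset.mem_filter, Finset.mem_powerset] at hT
    rw [← hT.2, ← card_transversal σ T hT.1, Finset.filter_filter]
    congr 1
    apply Finset.filter_congr
    intro S _
    constructor
    · rintro ⟨⟨h1, _⟩, h3⟩; exact ⟨h1, h3⟩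
    · rintro ⟨h1, h3⟩; exact ⟨⟨h1, by rw [h3]⟩, h3⟩
  · intro S hS
    simp only [Finset.coe_filter, Finset.mem_univ, true_and, Set.mem_ofPred_eq,
      Finset.mem_powerset] at hS ⊢
    exact ⟨hits_sub _ _, hS.2⟩

open Classical in
lemma card_cyc_nu {n k : ℕ} (hk : 1 ≤ k) (σ : Perm (Fin n)) (ν : Multiset ℕ)
    (hν : ν.card = k + 1) :
    (Finset.univ.filter (fun τ : Perm (Fin n) => τ.cycleType = {k + 1} ∧
      Trans σ τ.support ∧ (hits σ τ.support).val.map Finset.card = ν)).card =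
    k.factorial * (ν.prod *
      ∏ i ∈ ν.toFinset, Nat.choose ((fullCycleType σ).count i) (ν.count i)) := by
  rw [← card_trans_nu, Finset.card_eq_sum_card_fiberwise (f := support)
    (t := Finset.univ.filter (fun S : Finset (Fin n) =>
      Trans σ S ∧ (hits σ S).val.map Finset.card = ν))]
  · rw [mul_comm, ← smul_eq_mul, ← Finset.sum_const]
    apply Finset.sum_congr rfl
    intro S hS
    rw [Finset.mem_filter] at hS
    obtain ⟨-, h1, h2⟩ := hS
    have hS : S.card = k + 1 := by
      rw [← card_hits h1, ← hν, ← h2]; simp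
    rw [← card_cyc hk S hS, Finset.filter_filter]
    congr 1
    apply Finset.filter_congr
    intro τ _
    constructor
    · rintro ⟨⟨h1, _⟩, h3⟩; exact ⟨h1, h3⟩
    · rintro ⟨h4, rfl⟩; exact ⟨⟨h4, h1, h2⟩, rfl⟩
  · intro τ hτ
    simp only [Finset.coe_filter, Finset.mem_univ, true_and, Set.mem_ofPred_eq] at hτ ⊢
    exact hτ.2

lemma cyc_type_iff {n k : ℕ} (hk : 1 ≤ k) (hkn : k + 1 ≤ n) (τ : Perm (Fin n)) :
    fullCycleType τ = (k + 1) ::ₘ Multiset.replicate (n - k - 1) 1 ↔ τ.cycleType = {k + 1} := by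
  rw [fct_iff]
  · rw [Multiset.filter_cons_of_pos _ (by omega), Multiset.filter_eq_nil.2]
    · rfl
    · intro a ha
      rw [Multiset.eq_of_mem_replicate ha]; norm_num
  · rw [Multiset.mem_cons]
    rintro (h | h)
    · omega
    · have := Multiset.eq_of_mem_replicate h; omega
  · simp; omega

lemma main_count {n k : ℕ} (hk : 1 ≤ k) (hkn : k + 1 ≤ n) (σ : Perm (Fin n))
    (lam mu : Multiset ℕ) (hσ : fullCycleType σ = lam) (hmu : mu.card + k ≤ lam.card) :
    ((cl n ((k + 1) ::ₘ Multiset.replicate (n - k - 1) 1)).filter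
      (fun τ => fullCycleType (τ * σ) = mu)).card =
    ∑ ν ∈ lam.powerset.toFinset, if ν.card = k + 1 ∧ mu = ν.sum ::ₘ (lam - ν) then
      k.factorial * (ν.prod * ∏ i ∈ ν.toFinset, Nat.choose (lam.count i) (ν.count i)) else 0 := by
  classical
  have hX : (cl n ((k + 1) ::ₘ Multiset.replicate (n - k - 1) 1)).filter
      (fun τ => fullCycleType (τ * σ) = mu) = Finset.univ.filter (fun τ : Perm (Fin n) =>
        τ.cycleType = {k + 1} ∧ Trans σ τ.support ∧
        mu = ((hits σ τ.support).val.map Finset.card).sum ::ₘ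
          (lam - (hits σ τ.support).val.map Finset.card)) := by
    rw [cl, Finset.filter_filter]
    apply Finset.filter_congr
    intro τ _
    rw [cyc_type_iff hk hkn]
    constructor
    · rintro ⟨h1, h2⟩
      have hc : τ.support.card = k + 1 := by rw [← sum_cycleType, h1]; simp
      have hcyc : τ.IsCycle := by rw [← card_cycleType_eq_one, h1]; simp
      have hT : Trans σ τ.support := trans_of_card hc (by rw [h2, hσ]; exact hmu)
      exact ⟨h1, hT, by rw [← h2, fct_mul hcyc hT, hσ]⟩
    · rintro ⟨h1, hT, h2⟩
      have hcyc : τ.IsCycle := by rw [← card_cycleType_eq_one, h1]; simp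
      exact ⟨h1, by rw [h2, fct_mul hcyc hT, hσ]⟩
  rw [hX, Finset.card_eq_sum_card_fiberwise
    (f := fun τ => (hits σ τ.support).val.map Finset.card) (t := lam.powerset.toFinset)]
  · apply Finset.sum_congr rfl
    intro ν _
    split_ifs with h
    · rw [← hσ, ← card_cyc_nu hk σ ν h.1, Finset.filter_filter]
      congr 1
      apply Finset.filter_congr
      intro τ _
      constructor
      · rintro ⟨⟨h1, h2, _⟩, h3⟩; exact ⟨h1, h2, h3⟩
      · rintro ⟨h1, h2, h3⟩; exact ⟨⟨h1, h2, by rw [h3, hσ]; exact h.2⟩, h3⟩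
    · rw [Finset.card_eq_zero, Finset.filter_filter]
      apply Finset.filter_false_of_mem
      rintro τ _ ⟨⟨h1, h2, h4⟩, h3⟩
      apply h
      constructor
      · have hc : τ.support.card = k + 1 := by rw [← sum_cycleType, h1]; simp
        rw [← hc, ← card_hits h2, ← h3]; simp
      · rw [← h3]; exact h4
  · intro τ _
    refine Finset.mem_coe.2 (Multiset.mem_toFinset.2 (Multiset.mem_powerset.2 ?_))
    rw [← hσ, fct_eq]
    exact Multiset.map_le_map (Finset.val_le_iff.2 (hits_sub _ _))

lemma zz_eq {lam ν : Multiset ℕ} (h0 : 0 ∉ lam) (hν : ν ≤ lam) (hc : 2 ≤ ν.card) :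
    zz (ν.sum ::ₘ (lam - ν)) * (ν.prod * ∏ i ∈ ν.toFinset, Nat.choose (lam.count i) (ν.count i)) *
      ∏ i ∈ ν.toFinset, (ν.count i).factorial = ν.sum * (lam.count ν.sum + 1) * zz lam := by
  have hm : ν.sum ∉ ν := by
    intro h
    obtain ⟨ν', hν'⟩ := Multiset.exists_cons_of_mem h
    have h1 := congrArg Multiset.sum hν'
    have h2 := congrArg Multiset.card hν'
    rw [Multiset.sum_cons] at h1
    rw [Multiset.card_cons] at h2
    have h3 : ν'.sum = 0 := by omega
    obtain ⟨a, ha⟩ := Multiset.card_pos_iff_exists_mem.1 (show 0 < ν'.card by omega)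
    have h4 : a ≤ ν'.sum := Multiset.le_sum_of_mem ha
    have h5 : a = 0 := by omega
    subst h5
    exact h0 (Multiset.mem_of_le hν (by rw [hν']; exact Multiset.mem_cons_of_mem ha))
  set m := ν.sum with hmdef
  set R := insert m lam.toFinset with hR
  have ext1 : ∀ s : Multiset ℕ, s.toFinset ⊆ R →
      ∏ i ∈ s.toFinset, (s.count i).factorial = ∏ i ∈ R, (s.count i).factorial := by
    intro s hs
    apply Finset.prod_subset hs
    intro i _ hi
    rw [Multiset.count_eq_zero_of_notMem (by simpa using hi)]; rfl
  have hνR : ν.toFinset ⊆ R := by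
    intro i hi
    rw [Multiset.mem_toFinset] at hi
    exact Finset.mem_insert_of_mem (Multiset.mem_toFinset.2 (Multiset.mem_of_le hν hi))
  have ext2 : ∏ i ∈ ν.toFinset, Nat.choose (lam.count i) (ν.count i) =
      ∏ i ∈ R, Nat.choose (lam.count i) (ν.count i) := by
    apply Finset.prod_subset hνR
    intro i _ hi
    rw [Multiset.count_eq_zero_of_notMem (s := ν) (by simpa using hi)]; simp
  have hmuR : (m ::ₘ (lam - ν)).toFinset ⊆ R := by
    intro i hi
    rw [Multiset.mem_toFinset, Multiset.mem_cons] at hi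
    rcases hi with rfl | hi
    · exact Finset.mem_insert_self _ _
    · exact Finset.mem_insert_of_mem (Multiset.mem_toFinset.2
        (Multiset.mem_of_le (Multiset.sub_le_self _ _) hi))
  have hP : ∏ i ∈ R, ((m ::ₘ (lam - ν)).count i).factorial =
      (lam.count m + 1) * ∏ i ∈ R, ((lam - ν).count i).factorial := by
    have hmR : m ∈ R := Finset.mem_insert_self _ _
    rw [← Finset.mul_prod_erase _ _ hmR, ← Finset.mul_prod_erase _ _ hmR, ← mul_assoc]
    congr 1
    · rw [Multiset.count_cons_self, Multiset.count_sub, Multiset.count_eq_zero_of_notMem hm,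
        Nat.sub_zero, Nat.factorial_succ]
    · apply Finset.prod_congr rfl
      intro i hi
      rw [Multiset.count_cons_of_ne (Finset.ne_of_mem_erase hi)]
  have hQ : ∏ i ∈ R, (lam.count i).factorial =
      (∏ i ∈ R, Nat.choose (lam.count i) (ν.count i)) * (∏ i ∈ R, (ν.count i).factorial) *
        ∏ i ∈ R, ((lam - ν).count i).factorial := by
    rw [← Finset.prod_mul_distrib, ← Finset.prod_mul_distrib]
    apply Finset.prod_congr rfl
    intro i _
    rw [Multiset.count_sub, Nat.choose_mul_factorial_mul_factorial (Multiset.count_le_of_le i hν)]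
  have hprod : lam.prod = ν.prod * (lam - ν).prod := by
    rw [mul_comm, ← Multiset.prod_add, Multiset.sub_add_cancel hν]
  rw [zz, zz, ext1 _ hmuR, ext1 _ hνR, ext1 lam (Finset.subset_insert _ _), ext2, hP, hQ, hprod,
    Multiset.prod_cons]
  ring

end CupAux

namespace CupAux

open Equiv Equiv.Perm

lemma mem_low {n d : ℕ} (x : MonoidAlgebra ℂ (Perm (Fin n)))
    (h : ∀ ρ : Perm (Fin n), d ≤ n - numCycles ρ → x.coeff ρ = 0) : x ∈ lowFilt n d := by
  have hx : x = ∑ ρ : Perm (Fin n), (x.coeff ρ) • MonoidAlgebra.single ρ (1 : ℂ) := by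
    apply MonoidAlgebra.coeff_injective
    ext ρ
    rw [MonoidAlgebra.coeff_sum, Finsupp.finsetSum_apply]
    simp [Finsupp.single_apply]
  rw [hx]
  apply Submodule.sum_mem
  intro ρ _
  by_cases hρ : d ≤ n - numCycles ρ
  · rw [h ρ hρ, zero_smul]; exact Submodule.zero_mem _
  · exact Submodule.smul_mem _ _ (Submodule.subset_span ⟨ρ, by omega, rfl⟩)

lemma chi_eq (n : ℕ) (lam : Multiset ℕ) :
    chiClass n lam = ∑ σ ∈ cl n lam, MonoidAlgebra.single σ 1 := by
  rw [chiClass, cl]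

lemma coeff_chi {n : ℕ} (lam : Multiset ℕ) (ρ : Perm (Fin n)) :
    (chiClass n lam).coeff ρ = if fullCycleType ρ = lam then 1 else 0 := by
  rw [chi_eq, MonoidAlgebra.coeff_sum, Finsupp.finsetSum_apply]
  simp [Finsupp.single_apply, cl]

/-- Number of factorizations. -/
noncomputable def fac {n : ℕ} (a b : Multiset ℕ) (ρ : Perm (Fin n)) : ℕ :=
  ((cl n a ×ˢ cl n b).filter (fun p => p.1 * p.2 = ρ)).card

lemma coeff_mul_chi {n : ℕ} (a b : Multiset ℕ) (ρ : Perm (Fin n)) :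
    (chiClass n a * chiClass n b).coeff ρ = (fac a b ρ : ℂ) := by
  rw [chi_eq, chi_eq, Finset.sum_mul_sum, ← Finset.sum_product', MonoidAlgebra.coeff_sum,
    Finsupp.finsetSum_apply, fac]
  simp [MonoidAlgebra.single_mul_single, Finsupp.single_apply]

lemma fct_conj {n : ℕ} (g σ : Perm (Fin n)) :
    fullCycleType (g * σ * g⁻¹) = fullCycleType σ := by
  rw [fullCycleType, fullCycleType, cycleType_conj, card_support_conj]

lemma fac_le {n : ℕ} (a b : Multiset ℕ) (g ρ : Perm (Fin n)) :
    fac a b ρ ≤ fac a b (g * ρ * g⁻¹) := by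
  refine Finset.card_le_card_of_injOn (fun p => (g * p.1 * g⁻¹, g * p.2 * g⁻¹)) ?_ ?_
  · intro p hp
    simp only [cl, Finset.coe_filter, Finset.mem_product, Finset.mem_filter, Finset.mem_univ,
      true_and, Set.mem_ofPred_eq, fct_conj] at hp ⊢
    refine ⟨hp.1, ?_⟩
    rw [← hp.2]; group
  · intro p _ q _ h
    simp only [Prod.mk.injEq, mul_left_inj, mul_right_inj] at h
    exact Prod.ext h.1 h.2

lemma fac_eq {n : ℕ} (a b : Multiset ℕ) {ρ ρ' : Perm (Fin n)}
    (h : fullCycleType ρ = fullCycleType ρ') : fac a b ρ = fac a b ρ' := by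
  have h1 : IsConj ρ ρ' := by
    rw [isConj_iff_cycleType_eq, ← filter_fct, ← filter_fct, h]
  obtain ⟨g, rfl⟩ := isConj_iff.1 h1
  apply le_antisymm (fac_le a b g ρ)
  have := fac_le a b g⁻¹ (g * ρ * g⁻¹)
  have e : g⁻¹ * (g * ρ * g⁻¹) * g⁻¹⁻¹ = ρ := by group
  rwa [e] at this

lemma double_count {n : ℕ} (a b : Multiset ℕ) (ρ : Perm (Fin n)) :
    (cl n (fullCycleType ρ)).card * fac a b ρ =
      ∑ σ ∈ cl n b, ((cl n a).filter (fun τ => fullCycleType (τ * σ) = fullCycleType ρ)).card := by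
  have h1 : (cl n (fullCycleType ρ)).card * fac a b ρ =
      ∑ ρ' ∈ cl n (fullCycleType ρ), fac a b ρ' := by
    rw [← smul_eq_mul, ← Finset.sum_const]
    apply Finset.sum_congr rfl
    intro ρ' hρ'
    exact fac_eq a b (Finset.mem_filter.1 hρ').2.symm
  rw [h1]
  simp only [fac, Finset.card_filter]
  rw [Finset.sum_comm, Finset.sum_product_right]
  apply Finset.sum_congr rfl
  intro σ _
  apply Finset.sum_congr rfl
  intro τ _
  simp [cl]

end CupAux

open scoped Classical in
/-- Cup product formula in `gr^F Z(ℂ[S_n])`: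
`χ_{(k+1,1^{n-k-1})} ∪ χ_λ = Σ_ν (k! |ν| (α_{|ν|}+1) / ∏ᵢ γᵢ!) χ_{λ_ν}`,
stated as: the product in `ℂ[S_n]` minus the right-hand side lies in the part of the
filtration of degree strictly less than `deg χ_{(k+1,…)} + deg χ_λ`. -/
theorem stmt3 (n k : ℕ) (hk1 : 1 ≤ k) (hk2 : k ≤ n - 1)
    (lam : Multiset ℕ) (h0 : (0 : ℕ) ∉ lam) (hsum : lam.sum = n) :
    chiClass n ((k + 1) ::ₘ Multiset.replicate (n - k - 1) 1) * chiClass n lam -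
      ∑ ν ∈ lam.powerset.toFinset,
        (if ν.card = k + 1 then
          (((Nat.factorial k : ℂ) * (ν.sum : ℂ) * ((lam.count ν.sum : ℂ) + 1)) /
            ∏ i ∈ ν.toFinset, (Nat.factorial (ν.count i) : ℂ)) •
            chiClass n (ν.sum ::ₘ (lam - ν))
        else 0) ∈ lowFilt n (k + (n - lam.card)) := by
  have hkn : k + 1 ≤ n := by omega
  apply CupAux.mem_low
  intro ρ hρ
  rw [MonoidAlgebra.coeff_sub, Finsupp.sub_apply, CupAux.coeff_mul_chi, MonoidAlgebra.coeff_sum,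
    Finsupp.finsetSum_apply, sub_eq_zero]
  set mu := fullCycleType ρ with hmu
  have hlamcard : lam.card ≤ n := by
    rw [← hsum]
    have := Multiset.card_nsmul_le_sum (s := lam) (a := 1) (fun x hx => by
      have : x ≠ 0 := by rintro rfl; exact h0 hx
      omega)
    simpa using this
  have hcard : mu.card + k ≤ lam.card := by
    have := CupAux.card_fct ρ
    rw [← hmu] at this
    omega
  have hdc := CupAux.double_count ((k + 1) ::ₘ Multiset.replicate (n - k - 1) 1) lam ρ
  rw [← hmu] at hdc
  have hcl : ∀ σ ∈ CupAux.cl n lam, fullCycleType σ = lam :=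
    fun σ hσ => (Finset.mem_filter.1 hσ).2
  rw [Finset.sum_congr rfl (fun σ hσ => CupAux.main_count hk1 hkn σ lam mu
    (hcl σ hσ) hcard), Finset.sum_const, smul_eq_mul] at hdc
  have hmupos : 0 < (CupAux.cl n mu).card :=
    Finset.card_pos.2 ⟨ρ, Finset.mem_filter.2 ⟨Finset.mem_univ _, rfl⟩⟩
  have hne : ((CupAux.cl n mu).card : ℂ) ≠ 0 := by exact_mod_cast hmupos.ne'
  apply mul_left_cancel₀ hne
  have hdc' := congrArg (fun x : ℕ => (x : ℂ)) hdc
  simp only [Nat.cast_mul] at hdc'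
  rw [hdc', Nat.cast_sum, Finset.mul_sum, Finset.mul_sum]
  apply Finset.sum_congr rfl
  intro ν hν
  rw [Multiset.mem_toFinset, Multiset.mem_powerset] at hν
  by_cases hc : ν.card = k + 1
  · rw [if_pos hc, MonoidAlgebra.coeff_smul, Finsupp.smul_apply, CupAux.coeff_chi]
    by_cases hm : mu = ν.sum ::ₘ (lam - ν)
    · rw [if_pos ⟨hc, hm⟩, if_pos (hmu ▸ hm), smul_eq_mul, mul_one]
      have hz := CupAux.zz_eq h0 hν (by omega)
      rw [← hm] at hz
      have hl := CupAux.card_cl h0 hsum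
      have hm' := CupAux.card_cl (CupAux.fct_zero ρ) (CupAux.fct_sum ρ)
      rw [← hmu] at hm'
      have hzpos : 0 < CupAux.zz mu := by
        apply Nat.pos_of_ne_zero
        intro h
        rw [h, mul_zero] at hm'
        exact (Nat.factorial_pos n).ne hm'
      have hP : (∏ i ∈ ν.toFinset, (Nat.factorial (ν.count i) : ℂ)) ≠ 0 :=
        Finset.prod_ne_zero_iff.2 (fun i _ => by exact_mod_cast (Nat.factorial_pos _).ne')
      rw [← mul_div_assoc, eq_div_iff hP]
      have key : (CupAux.cl n lam).card * (k.factorial * (ν.prod *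
          ∏ i ∈ ν.toFinset, Nat.choose (lam.count i) (ν.count i))) *
          ∏ i ∈ ν.toFinset, (ν.count i).factorial =
          (CupAux.cl n mu).card * (k.factorial * ν.sum * (lam.count ν.sum + 1)) := by
        apply Nat.eq_of_mul_eq_mul_left hzpos
        calc _ = (CupAux.cl n lam).card * k.factorial * (CupAux.zz mu * (ν.prod *
              ∏ i ∈ ν.toFinset, Nat.choose (lam.count i) (ν.count i)) *
              ∏ i ∈ ν.toFinset, (ν.count i).factorial) := by ring
          _ = ((CupAux.cl n lam).card * CupAux.zz lam) *
              (k.factorial * ν.sum * (lam.count ν.sum + 1)) := by rw [hz]; ring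
          _ = ((CupAux.cl n mu).card * CupAux.zz mu) *
              (k.factorial * ν.sum * (lam.count ν.sum + 1)) := by rw [hl, hm']
          _ = _ := by ring
      exact_mod_cast key
    · rw [if_neg (fun h => hm h.2), if_neg (hmu ▸ hm)]
      simp
  · rw [if_neg hc, if_neg (fun h => hc h.1)]
    simp
end

section
/- Let S̄ = S/(m_{(a,b)} : a ≠ b) be the quotient of the ring of MacMahon symmetric functions by the ideal generated by all m_{(a,b)} with a ≠ b. Then the images of the monomial symmetric functions m_{(λ,0)(0,1)^{|λ|}}, where λ ranges over all partitions, form a ℂ-linear basis of S̄. -/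
/-- The monomial MacMahon symmetric function `m_Λ` attached to a bipartite partition
`Λ` (a multiset of vectors in `ℕ×ℕ`), as a formal power series in two families of
variables `xᵢ = X (i,0)`, `yᵢ = X (i,1)`: the sum, with coefficients `0` or `1`, of all
monomials whose multiset of exponent pairs equals `Λ`. -/
noncomputable def mm (Λ : Multiset (ℕ × ℕ)) : MvPowerSeries (ℕ × Fin 2) ℂ :=
  fun d => if (d.support.image Prod.fst).val.map
      (fun i => (d (i, 0), d (i, 1))) = Λ then 1 else 0

/-- The bipartite partition `(λ,0)(0,1)^{|λ|}` attached to an ordinary partition `λ`. -/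
noncomputable def bip (l : Multiset ℕ) : Multiset (ℕ × ℕ) :=
  l.map (fun i => (i, 0)) + Multiset.replicate l.sum (0, 1)

/-- The ideal of `S` generated by the `m_{(a,b)}` with `a ≠ b`, as a `ℂ`-submodule:
the span of the products `m_{(a,b)} · m_Λ`. -/
noncomputable def Jbar : Submodule ℂ (MvPowerSeries (ℕ × Fin 2) ℂ) :=
  Submodule.span ℂ {x | ∃ (a b : ℕ) (Λ : Multiset (ℕ × ℕ)),
    a ≠ b ∧ (0, 0) ∉ Λ ∧ x = mm {(a, b)} * mm Λ}


namespace MacM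

abbrev V := ℕ × ℕ

/-- All ways to add `v` to one entry of a list. -/
def subs (v : V) : List V → List (List V)
  | [] => []
  | u :: L => ((u + v) :: L) :: (subs v L).map (fun K => u :: K)

theorem subs_length (v : V) : ∀ (L K : List V), K ∈ subs v L → K.length = L.length
  | [], K, h => by simp [subs] at h
  | u :: L, K, h => by
    simp only [subs, List.mem_cons, List.mem_map] at h
    rcases h with rfl | ⟨K', hK', rfl⟩
    · simp
    · simp [subs_length v L K' hK']

theorem subs_coe (v : V) : ∀ L : List V,
    (((subs v L).map (fun K : List V => (K : Multiset V)) : List (Multiset V)) : Multiset (Multiset V))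
      = (L : Multiset V).map (fun u => (u + v) ::ₘ (L : Multiset V).erase u)
  | [] => by simp [subs]
  | u :: L => by
    have ih := subs_coe v L
    rw [← Multiset.cons_coe, Multiset.map_cons]
    simp only [subs, List.map_cons, List.map_map]
    rw [← Multiset.cons_coe]
    congr 1
    · simp
    · have h2 : (L : Multiset V).map (fun u' => (u' + v) ::ₘ (u ::ₘ (L : Multiset V)).erase u')
        = ((L : Multiset V).map (fun u' => (u' + v) ::ₘ (L : Multiset V).erase u')).map
            (fun K => u ::ₘ K) := by
        rw [Multiset.map_map]
        refine Multiset.map_congr rfl fun u' hu' => ?_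
        rw [Multiset.erase_cons_tail_of_mem hu']
        exact Multiset.cons_swap _ _ _
      rw [h2, ← ih]
      simp [Function.comp_def]

variable {R : Type*} [CommRing R] (q : V → R)

def fg : ℕ → List V → R
  | 0, _ => 1
  | _ + 1, [] => 1
  | n + 1, v :: L => q v * fg n L - ((subs v L).map (fg n)).sum

def fl (L : List V) : R := fg q L.length L

theorem fl_nil : fl q [] = 1 := rfl

theorem fl_cons (v : V) (L : List V) :
    fl q (v :: L) = q v * fl q L - ((subs v L).map (fl q)).sum := by
  simp only [fl, List.length_cons, fg]
  congr 2
  refine List.map_congr_left fun K hK => ?_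
  simp [fl, subs_length v L K hK]

theorem list_sub {α : Type*} (f g : α → R) : ∀ L : List α,
    (L.map (fun x => f x - g x)).sum = (L.map f).sum - (L.map g).sum
  | [] => by simp
  | a :: L => by
    simp only [List.map_cons, List.sum_cons, list_sub f g L]
    ring

/-- iterated sums commute -/
theorem subs_comm (v w : V) : ∀ (L : List V) (g : List V → R),
    ((subs v L).map (fun K => ((subs w K).map g).sum)).sum
      = ((subs w L).map (fun K => ((subs v K).map g).sum)).sum
  | [], g => by simp [subs]
  | u :: L, g => by
    have ih := subs_comm v w L (fun K => g (u :: K))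
    simp only [subs, List.map_cons, List.sum_cons, List.map_map, Function.comp_def,
      List.sum_map_add] at ih ⊢
    rw [ih, add_right_comm u v w]
    ring

theorem fl_swap (v w : V) (L : List V) : fl q (v :: w :: L) = fl q (w :: v :: L) := by
  have h := subs_comm v w L (fl q)
  simp only [fl_cons, subs, List.map_cons, List.sum_cons, List.map_map, Function.comp_def,
    list_sub, List.sum_map_mul_left] at h ⊢
  rw [h, add_comm v w]
  ring

theorem fl_perm (n : ℕ) : ∀ (L L' : List V), L.length = n → L.Perm L' → fl q L = fl q L' := by
  induction n with
  | zero =>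
    intro L L' h hp
    obtain rfl := List.length_eq_zero_iff.1 h
    rw [List.nil_perm.1 hp]
  | succ n ih =>
    intro L L' h hp
    induction hp with
    | nil => rfl
    | @cons v L L' hp _ =>
      simp only [List.length_cons, Nat.add_right_cancel_iff] at h
      rw [fl_cons, fl_cons, ih L L' h hp]
      congr 1
      -- descend to multisets
      classical
      let g : Multiset V → R := fun K => fl q K.toList
      have key : ∀ M : List V, M.length = n → (subs v M).map (fl q)
          = ((subs v M).map (fun K : List V => (K : Multiset V))).map g := by
        intro M hM
        rw [List.map_map]
        refine List.map_congr_left fun K hK => ?_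
        refine ih _ _ ((subs_length v M K hK).trans hM) ?_
        exact Multiset.coe_eq_coe.1 (by simp)
      have hM : (((subs v L).map (fun K : List V => (K : Multiset V)) : List (Multiset V)) :
          Multiset (Multiset V)) = ((subs v L').map (fun K : List V => (K : Multiset V)) :
            List (Multiset V)) := by
        rw [subs_coe, subs_coe, Multiset.coe_eq_coe.2 hp]
      rw [key L h, key L' (hp.length_eq ▸ h)]
      exact ((Multiset.coe_eq_coe.1 hM).map g).sum_eq
    | swap v w L => exact fl_swap q _ _ _
    | trans h1 _ i1 i2 => exact (i1 h).trans (i2 (h1.length_eq ▸ h))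

/-- The evaluation on multisets. -/
def fm (s : Multiset V) : R :=
  Quot.liftOn s (fl q) (fun L L' h => fl_perm q _ L L' rfl h)

theorem fm_zero : fm q 0 = 1 := rfl

theorem fm_coe (L : List V) : fm q (L : Multiset V) = fl q L := rfl

theorem fm_cons (v : V) (s : Multiset V) :
    fm q (v ::ₘ s) = q v * fm q s - (s.map (fun u => fm q ((u + v) ::ₘ s.erase u))).sum := by
  induction s using Quotient.inductionOn with
  | _ L =>
    change fl q (v :: L) = q v * fl q L - _
    rw [fl_cons]
    congr 1
    have := congrArg (fun m => (m.map (fm q)).sum) (subs_coe v L)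
    simp only [Multiset.map_map, Function.comp_def] at this
    refine Eq.trans ?_ this
    simp only [Multiset.map_coe, Multiset.sum_coe, List.map_map, Function.comp_def, fm_coe]

end MacM

namespace MacM

open MvPolynomial

abbrev P := MvPolynomial ℕ ℂ

noncomputable def qq (v : V) : P := if v.1 = v.2 then X v.1 else 0

noncomputable def xm (s : Multiset ℕ) : P := monomial (Multiset.toFinsupp s) 1

theorem xm_cons (a : ℕ) (s : Multiset ℕ) : xm (a ::ₘ s) = X a * xm s := by
  rw [xm, xm, X, monomial_mul, ← Multiset.singleton_add, map_add, Multiset.toFinsupp_singleton]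
  simp

noncomputable def ff (s : Multiset V) : P := fm qq s

noncomputable def Low (n : ℕ) : Submodule ℂ P :=
  Submodule.span ℂ {x | ∃ s : Multiset ℕ, 0 ∉ s ∧ s.card < n ∧ x = xm s}

theorem Low_mono {m n : ℕ} (h : m ≤ n) : Low m ≤ Low n := by
  refine Submodule.span_mono ?_
  rintro x ⟨s, h0, hs, rfl⟩
  exact ⟨s, h0, by omega, rfl⟩

theorem Low_mul {n a : ℕ} (ha : a ≠ 0) {x : P} (hx : x ∈ Low n) : X a * x ∈ Low (n + 1) := by
  induction hx using Submodule.span_induction with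
  | mem x h =>
    obtain ⟨s, h0, hs, rfl⟩ := h
    refine Submodule.subset_span ⟨a ::ₘ s, ?_, ?_, (xm_cons _ _).symm⟩
    · simp [h0, ha.symm]
    · simpa using hs
  | zero => simp
  | add x y _ _ h1 h2 => rw [mul_add]; exact add_mem h1 h2
  | smul c x _ h => rw [mul_smul_comm]; exact Submodule.smul_mem _ _ h

/-- positive first coordinates -/
def lam (s : Multiset V) : Multiset ℕ := (s.map Prod.fst).filter (· ≠ 0)

/-- number of parts with vanishing first coordinate -/
def zz (s : Multiset V) : ℕ := (s.filter (fun v => v.1 = 0)).card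

theorem lam_cons_zero {v : V} (h : v.1 = 0) (s : Multiset V) : lam (v ::ₘ s) = lam s := by
  simp [lam, h]

theorem lam_cons_pos {v : V} (h : v.1 ≠ 0) (s : Multiset V) :
    lam (v ::ₘ s) = v.1 ::ₘ lam s := by
  simp [lam, h]

theorem zz_cons_zero {v : V} (h : v.1 = 0) (s : Multiset V) : zz (v ::ₘ s) = zz s + 1 := by
  simp [zz, h]

theorem zz_cons_pos {v : V} (h : v.1 ≠ 0) (s : Multiset V) : zz (v ::ₘ s) = zz s := by
  simp [zz, h]

theorem zero_notMem_lam (s : Multiset V) : 0 ∉ lam s := by simp [lam]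

def Good (s : Multiset V) : Prop :=
  (∀ v ∈ s, v.2 ≤ v.1 ∨ v = (0, 1)) ∧ (s.map Prod.fst).sum = (s.map Prod.snd).sum

theorem sum_lemma {α : Type*} (N : Submodule ℂ P) (e : ℂ) (x : P) (Q : α → Prop) (g : α → P)
    (s : Multiset α) :
    (∀ u ∈ s, ∃ c : ℕ, g u - (e * c) • x ∈ N ∧ (Q u → 0 < c)) →
    ∃ c : ℕ, (s.map g).sum - (e * c) • x ∈ N ∧ ((∃ u ∈ s, Q u) → 0 < c) := by
  induction s using Multiset.induction_on with
  | empty => intro _; exact ⟨0, by simp, by simp⟩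
  | cons a s ih =>
    intro h
    obtain ⟨c, hc, hc'⟩ := ih (fun u hu => h u (Multiset.mem_cons_of_mem hu))
    obtain ⟨d, hd, hd'⟩ := h a (Multiset.mem_cons_self _ _)
    refine ⟨d + c, ?_, ?_⟩
    · have := add_mem hd hc
      rw [Multiset.map_cons, Multiset.sum_cons]
      convert this using 1
      push_cast
      rw [mul_add, add_smul]
      ring
    · rintro ⟨u, hu, hQ⟩
      rcases Multiset.mem_cons.1 hu with rfl | hu
      · have := hd' hQ; omega
      · have := hc' ⟨u, hu, hQ⟩; omega

theorem good_step {v : V} {N : Multiset V} (hv : v ≠ 0) (hg : Good (v ::ₘ N)) :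
    (v.1 ≠ 0 ∧ v.1 = v.2 ∧ Good N) ∨
      ∃ u ∈ N, Good ((u + v) ::ₘ N.erase u) ∧ (v.1 = 0 ∨ u.1 = 0) := by
  obtain ⟨h1, h2⟩ := hg
  have hv1 := h1 v (Multiset.mem_cons_self _ _)
  have hN : ∀ u ∈ N, u.2 ≤ u.1 ∨ u = (0, 1) := fun u hu => h1 u (Multiset.mem_cons_of_mem hu)
  simp only [Multiset.map_cons, Multiset.sum_cons] at h2
  have build : ∀ u ∈ N, ((u + v).2 ≤ (u + v).1 ∨ (u + v) = (0, 1)) →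
      Good ((u + v) ::ₘ N.erase u) := by
    intro u hu huv
    refine ⟨?_, ?_⟩
    · intro w hw
      rcases Multiset.mem_cons.1 hw with rfl | hw
      · exact huv
      · exact hN w (Multiset.mem_of_mem_erase hw)
    · have e := Multiset.cons_erase hu
      have e1 := congrArg (fun s => (s.map Prod.fst).sum) e
      have e2 := congrArg (fun s => (s.map Prod.snd).sum) e
      simp only [Multiset.map_cons, Multiset.sum_cons, Prod.fst_add, Prod.snd_add] at e1 e2 ⊢
      omega
  rcases hv1 with hle | rfl
  · have hpos : v.1 ≠ 0 := by
      intro h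
      exact hv (Prod.ext h (by simp; omega))
    by_cases he : v.1 = v.2
    · exact Or.inl ⟨hpos, he, hN, by omega⟩
    · right
      have : ∃ u ∈ N, u = (0, 1) := by
        by_contra hcon
        push Not at hcon
        have : (N.map Prod.snd).sum ≤ (N.map Prod.fst).sum :=
          Multiset.sum_map_le_sum_map _ _ fun u hu => (hN u hu).resolve_right (hcon u hu)
        omega
      obtain ⟨u, hu, rfl⟩ := this
      refine ⟨_, hu, build _ hu (Or.inl ?_), Or.inr rfl⟩
      simp; omega
  · right
    have : ∃ u ∈ N, u.2 < u.1 := by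
      by_contra hcon
      push Not at hcon
      have : (N.map Prod.fst).sum ≤ (N.map Prod.snd).sum :=
        Multiset.sum_map_le_sum_map _ _ fun u hu => hcon u hu
      simp at h2
      omega
    obtain ⟨u, hu, hlt⟩ := this
    refine ⟨u, hu, build _ hu (Or.inl ?_), Or.inl rfl⟩
    simp; omega

theorem tri (n : ℕ) : ∀ s : Multiset V, s.card = n → (0 : V) ∉ s →
    ∃ c : ℕ, ff s - ((-1 : ℂ) ^ (zz s) * c) • xm (lam s) ∈ Low (lam s).card ∧
      (Good s → 0 < c) := by
  induction n with
  | zero =>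
    intro s hs _
    obtain rfl := Multiset.card_eq_zero.1 hs
    refine ⟨1, ?_, by simp⟩
    simp [ff, fm_zero, zz, lam, xm]
  | succ n ih =>
    intro s hs h0
    obtain ⟨v, hvs⟩ := Multiset.card_pos_iff_exists_mem.1 (by omega : 0 < s.card)
    obtain ⟨N, rfl⟩ := Multiset.exists_cons_of_mem hvs
    have hv : v ≠ 0 := by rintro rfl; simp at h0
    have h0N : (0 : V) ∉ N := fun h => h0 (Multiset.mem_cons_of_mem h)
    rw [Multiset.card_cons] at hs
    have hN : N.card = n := by omega
    have hK : ∀ u ∈ N, ((u + v) ::ₘ N.erase u).card = n ∧ (0 : V) ∉ (u + v) ::ₘ N.erase u := by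
      intro u hu
      refine ⟨?_, ?_⟩
      · rw [Multiset.card_cons, Multiset.card_erase_add_one hu, hN]
      · intro h
        rcases Multiset.mem_cons.1 h with h | h
        · apply hv
          have h1 := congrArg Prod.fst h
          have h2 := congrArg Prod.snd h
          simp at h1 h2
          exact Prod.ext (by simp; omega) (by simp; omega)
        · exact h0N (Multiset.mem_of_mem_erase h)
    have hsum : ∃ c : ℕ, (N.map (fun u => - ff ((u + v) ::ₘ N.erase u))).sum -
        ((-1 : ℂ) ^ (zz (v ::ₘ N)) * c) • xm (lam (v ::ₘ N)) ∈ Low (lam (v ::ₘ N)).card ∧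
        ((∃ u ∈ N, Good ((u + v) ::ₘ N.erase u) ∧ (v.1 = 0 ∨ u.1 = 0)) → 0 < c) := by
      apply sum_lemma
      intro u hu
      obtain ⟨c, hc, hc'⟩ := ih _ (hK u hu).1 (hK u hu).2
      have e := Multiset.cons_erase hu
      by_cases hcase : v.1 = 0 ∨ u.1 = 0
      · have hl : lam ((u + v) ::ₘ N.erase u) = lam (v ::ₘ N) ∧
            zz (v ::ₘ N) = zz ((u + v) ::ₘ N.erase u) + 1 := by
          have eN : lam (v ::ₘ N) = lam (v ::ₘ u ::ₘ N.erase u) := by rw [e]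
          have eZ : zz (v ::ₘ N) = zz (v ::ₘ u ::ₘ N.erase u) := by rw [e]
          rw [eN, eZ]
          by_cases h1 : v.1 = 0
          · by_cases h2 : u.1 = 0
            · have h3 : (u + v).1 = 0 := by simp [h1, h2]
              simp [lam_cons_zero, zz_cons_zero, h1, h2, h3]
            · have h3 : (u + v).1 ≠ 0 := by simp [h1, h2]
              rw [lam_cons_pos h3, lam_cons_zero h1, lam_cons_pos h2, zz_cons_pos h3,
                zz_cons_zero h1, zz_cons_pos h2]
              simp [h1]
          · have h2 : u.1 = 0 := by tauto
            have h3 : (u + v).1 ≠ 0 := by simp [h1, h2]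
            rw [lam_cons_pos h3, lam_cons_pos h1, lam_cons_zero h2, zz_cons_pos h3,
                zz_cons_pos h1, zz_cons_zero h2]
            simp [h2]
        refine ⟨c, ?_, fun h => hc' h.1⟩
        rw [hl.1] at hc
        rw [hl.2]
        convert neg_mem hc using 1
        rw [pow_succ, neg_sub, mul_neg_one, neg_mul, neg_smul]
        ring
      · refine ⟨0, ?_, fun h => absurd h.2 hcase⟩
        push Not at hcase
        have h3 : (u + v).1 ≠ 0 := by simp [hcase]
        have hcard : (lam (v ::ₘ N)).card = (lam ((u + v) ::ₘ N.erase u)).card + 1 := by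
          rw [lam_cons_pos h3, lam_cons_pos hcase.1, ← e, lam_cons_pos hcase.2]
          simp
        simp only [Nat.cast_zero, mul_zero, zero_smul, sub_zero]
        refine neg_mem ?_
        rw [hcard]
        have hx : ((-1 : ℂ) ^ (zz ((u + v) ::ₘ N.erase u)) * c) • xm (lam ((u + v) ::ₘ N.erase u))
            ∈ Low ((lam ((u + v) ::ₘ N.erase u)).card + 1) :=
          Submodule.smul_mem _ _ (Submodule.subset_span ⟨_, zero_notMem_lam _, by simp, rfl⟩)
        have := add_mem (Low_mono (Nat.le_succ _) hc) hx
        simpa using this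
    have hhead : ∃ c : ℕ, qq v * ff N -
        ((-1 : ℂ) ^ (zz (v ::ₘ N)) * c) • xm (lam (v ::ₘ N)) ∈ Low (lam (v ::ₘ N)).card ∧
        ((v.1 ≠ 0 ∧ v.1 = v.2 ∧ Good N) → 0 < c) := by
      by_cases hb : v.1 = v.2
      · have h1 : v.1 ≠ 0 := by
          intro h
          exact hv (Prod.ext h (by simp; omega))
        obtain ⟨c, hc, hc'⟩ := ih N hN h0N
        refine ⟨c, ?_, fun h => hc' h.2.2⟩
        rw [lam_cons_pos h1, zz_cons_pos h1, xm_cons, Multiset.card_cons, qq, if_pos hb]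
        have := Low_mul h1 hc
        rwa [mul_sub, mul_smul_comm] at this
      · refine ⟨0, ?_, fun h => absurd h.2.1 hb⟩
        simp [qq, hb]
    obtain ⟨c, hc, hc'⟩ := hsum
    obtain ⟨d, hd, hd'⟩ := hhead
    refine ⟨d + c, ?_, ?_⟩
    · have := add_mem hd hc
      rw [ff, fm_cons]
      have hneg : (N.map (fun u => - ff ((u + v) ::ₘ N.erase u))).sum =
          - (N.map (fun u => ff ((u + v) ::ₘ N.erase u))).sum := by
        rw [← Multiset.sum_map_neg', Multiset.map_map]; rfl
      rw [hneg] at this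
      convert this using 1
      simp only [ff]
      push_cast
      rw [mul_add, add_smul]
      ring
    · intro hg
      rcases good_step hv hg with h | h
      · have := hd' h; omega
      · have := hc' h; omega

theorem lam_bip (l : Multiset ℕ) (h : 0 ∉ l) : lam (bip l) = l := by
  have h1 : l.filter (· ≠ 0) = l := by
    rw [Multiset.filter_eq_self]; rintro a ha rfl; exact h ha
  have h2 : (Multiset.replicate l.sum 0).filter (· ≠ 0) = 0 := by
    rw [Multiset.filter_eq_nil]
    intro a ha
    simp [Multiset.eq_of_mem_replicate ha]
  simp only [lam, bip, Multiset.map_add, Multiset.map_map, Function.comp_def,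
    Multiset.map_replicate, Multiset.filter_add, h2, Multiset.map_id', h1, add_zero]

theorem good_bip (l : Multiset ℕ) : Good (bip l) := by
  refine ⟨?_, ?_⟩
  · intro v hv
    rcases Multiset.mem_add.1 hv with h | h
    · obtain ⟨a, _, rfl⟩ := Multiset.mem_map.1 h
      simp
    · exact Or.inr (Multiset.eq_of_mem_replicate h)
  · simp [bip]

theorem zero_notMem_bip (l : Multiset ℕ) (h : 0 ∉ l) : (0 : V) ∉ bip l := by
  intro hv
  rcases Multiset.mem_add.1 hv with h' | h'
  · obtain ⟨a, ha, e⟩ := Multiset.mem_map.1 h'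
    have := congrArg Prod.fst e
    simp at this
    exact h (this ▸ ha)
  · have := congrArg Prod.snd (Multiset.eq_of_mem_replicate h')
    simp at this

theorem tri_bip (l : Multiset ℕ) (h : 0 ∉ l) : ∃ c : ℂ, c ≠ 0 ∧
    ff (bip l) - c • xm l ∈ Low l.card := by
  obtain ⟨c, hc, hc'⟩ := tri _ (bip l) rfl (zero_notMem_bip l h)
  rw [lam_bip l h] at hc
  refine ⟨_, ?_, hc⟩
  have := hc' (good_bip l)
  simp
  omega

theorem ff_mem (s : Multiset V) (h : (0 : V) ∉ s) : ∃ n, ff s ∈ Low n := by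
  obtain ⟨c, hc, -⟩ := tri _ s rfl h
  refine ⟨(lam s).card + 1, ?_⟩
  have hx : ((-1 : ℂ) ^ (zz s) * c) • xm (lam s) ∈ Low ((lam s).card + 1) :=
    Submodule.smul_mem _ _ (Submodule.subset_span ⟨_, zero_notMem_lam _, by simp, rfl⟩)
  have := add_mem (Low_mono (Nat.le_succ _) hc) hx
  simpa using this

theorem coeff_Low {n : ℕ} {l : Multiset ℕ} (hl : n ≤ l.card) {x : P} (hx : x ∈ Low n) :
    coeff (Multiset.toFinsupp l) x = 0 := by
  induction hx using Submodule.span_induction with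
  | mem x h =>
    obtain ⟨s, h0, hs, rfl⟩ := h
    rw [xm, coeff_monomial, if_neg]
    intro h
    have := Multiset.toFinsupp.injective h
    subst this
    omega
  | zero => simp
  | add x y _ _ h1 h2 => rw [coeff_add, h1, h2, add_zero]
  | smul c x _ h => rw [coeff_smul, h, smul_zero]

theorem indep (s : Finset (Multiset ℕ)) (c : Multiset ℕ → ℂ) (hs : ∀ l ∈ s, 0 ∉ l)
    (h : ∑ l ∈ s, c l • ff (bip l) = 0) : ∀ l ∈ s, c l = 0 := by
  by_contra hcon
  push Not at hcon
  obtain ⟨l0, hl0, hne0⟩ := hcon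
  obtain ⟨l, hl, hmax⟩ := Finset.exists_max_image (s.filter (fun l => c l ≠ 0)) Multiset.card
    ⟨l0, by simp [hl0, hne0]⟩
  rw [Finset.mem_filter] at hl
  have h' := congrArg (coeff (Multiset.toFinsupp l)) h
  rw [coeff_sum, Finset.sum_eq_single l] at h'
  · obtain ⟨d, hd, hlow⟩ := tri_bip l (hs l hl.1)
    have := coeff_Low le_rfl hlow
    rw [coeff_sub, coeff_smul, xm, coeff_monomial, if_pos rfl, smul_eq_mul, mul_one,
      sub_eq_zero] at this
    rw [coeff_smul, this] at h'
    simp [hd, hl.2] at h'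
  · intro b hb hbl
    by_cases hcb : c b = 0
    · simp [hcb]
    · have hle := hmax b (by simp [hb, hcb])
      obtain ⟨d, hd, hlow⟩ := tri_bip b (hs b hb)
      have := coeff_Low hle hlow
      rw [coeff_sub, coeff_smul, xm, coeff_monomial, if_neg, smul_zero, sub_zero] at this
      · rw [coeff_smul, this, smul_zero]
      · exact fun h => hbl (Multiset.toFinsupp.injective h)
  · exact fun h => absurd hl.1 h

end MacM

namespace MacM

open Finset

abbrev Dg := ℕ × Fin 2 →₀ ℕ

def ev (d : Dg) (j : ℕ) : V := (d (j, 0), d (j, 1))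

def TT (d : Dg) : Finset ℕ := d.support.image Prod.fst

def shape (d : Dg) : Multiset V := (TT d).val.map (ev d)

noncomputable def zv (v : V) (j : ℕ) : Dg :=
  Finsupp.single (j, 0) v.1 + Finsupp.single (j, 1) v.2

theorem coeff_mm (L : Multiset V) (d : Dg) :
    MvPowerSeries.coeff d (mm L) = if shape d = L then 1 else 0 := by
  change mm L d = _
  unfold mm shape TT
  congr

theorem ev_add (d e : Dg) (j : ℕ) : ev (d + e) j = ev d j + ev e j := by
  simp [ev]

theorem ev_zv (v : V) (j i : ℕ) : ev (zv v j) i = if i = j then v else 0 := by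
  unfold ev zv
  by_cases h : i = j
  · subst h; simp
  · have h' : j ≠ i := fun e => h e.symm
    simp [h]

theorem ev_ext {d e : Dg} (h : ∀ j, ev d j = ev e j) : d = e := by
  ext ⟨j, k⟩
  have := h j
  simp only [ev, Prod.mk.injEq] at this
  fin_cases k
  · exact this.1
  · exact this.2

theorem mem_TT (d : Dg) (j : ℕ) : j ∈ TT d ↔ ev d j ≠ 0 := by
  simp only [TT, mem_image, Finsupp.mem_support_iff, Prod.exists, exists_and_right,
    exists_eq_right, ev, ne_eq, Prod.mk_eq_zero]
  constructor
  · rintro ⟨k, hk⟩ ⟨h0, h1⟩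
    fin_cases k
    · exact hk h0
    · exact hk h1
  · intro h
    by_contra hcon
    push Not at hcon
    exact h ⟨hcon 0, hcon 1⟩

def rest (d : Dg) (j : ℕ) : Multiset V := ((TT d).erase j).val.map (ev d)

theorem shape_zero {d : Dg} {j : ℕ} (h : ev d j = 0) : shape d = rest d j := by
  have : j ∉ TT d := by rw [mem_TT]; simpa using h
  rw [shape, rest, erase_eq_of_notMem this]

theorem shape_pos {d : Dg} {j : ℕ} (h : ev d j ≠ 0) : shape d = ev d j ::ₘ rest d j := by
  have : j ∈ TT d := by rwa [mem_TT]
  rw [shape, rest, ← Multiset.map_cons, erase_val, Multiset.cons_erase this]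

theorem rest_congr {d e : Dg} {j : ℕ} (h : ∀ i, i ≠ j → ev d i = ev e i) :
    rest d j = rest e j := by
  have : (TT d).erase j = (TT e).erase j := by
    ext i
    simp only [mem_erase, mem_TT]
    constructor
    · rintro ⟨h1, h2⟩; exact ⟨h1, h i h1 ▸ h2⟩
    · rintro ⟨h1, h2⟩; exact ⟨h1, (h i h1).symm ▸ h2⟩
  rw [rest, rest, this]
  refine Multiset.map_congr rfl fun i hi => h i ?_
  exact (mem_erase.1 hi).1

theorem rest_add (d : Dg) (v : V) (j : ℕ) : rest (zv v j + d) j = rest d j := by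
  refine rest_congr fun i hi => ?_
  rw [ev_add, ev_zv, if_neg hi, zero_add]

theorem ev_add_self (d : Dg) (v : V) (j : ℕ) : ev (zv v j + d) j = v + ev d j := by
  rw [ev_add, ev_zv, if_pos rfl]

theorem add_ne {u v : V} (h : v ≠ 0) : u + v ≠ 0 := by
  intro e
  have h1 := congrArg Prod.fst e
  have h2 := congrArg Prod.snd e
  simp at h1 h2
  exact h (Prod.ext (by simp; omega) (by simp; omega))

theorem count_shape (d : Dg) (w : V) :
    Multiset.count w (shape d) = #{j ∈ TT d | ev d j = w} := by
  rw [shape, Multiset.count_map]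
  simp only [eq_comm (a := w)]
  rfl

theorem zero_notMem_shape (d : Dg) : (0 : V) ∉ shape d := by
  intro h
  obtain ⟨j, hj, e⟩ := Multiset.mem_map.1 h
  exact (mem_TT d j).1 hj e

theorem exists_shape (L : Multiset V) : (0 : V) ∉ L → ∃ d, shape d = L := by
  induction L using Multiset.induction_on with
  | empty => intro _; exact ⟨0, rfl⟩
  | cons v L ih =>
    intro h
    obtain ⟨d, hd⟩ := ih (fun h' => h (Multiset.mem_cons_of_mem h'))
    have hv : v ≠ 0 := by rintro rfl; simp at h
    obtain ⟨j, hj⟩ := Infinite.exists_notMem_finset (TT d)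
    have hj' : ev d j = 0 := by rw [mem_TT] at hj; simpa using hj
    refine ⟨zv v j + d, ?_⟩
    have e := ev_add_self d v j
    rw [hj', add_zero] at e
    rw [shape_pos (by rw [e]; exact hv), e, rest_add, ← shape_zero hj', hd]

theorem shape_single_iff {v : V} (hv : v ≠ 0) (a : Dg) : shape a = {v} ↔ ∃ j, a = zv v j := by
  constructor
  · intro h
    have : v ∈ shape a := by simp [h]
    obtain ⟨j, hj, e⟩ := Multiset.mem_map.1 this
    refine ⟨j, ev_ext fun i => ?_⟩
    have hj0 : ev a j ≠ 0 := by rw [e]; exact hv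
    have h2 := shape_pos hj0
    rw [h, e, ← Multiset.cons_zero, Multiset.cons_inj_right] at h2
    rw [ev_zv]
    split_ifs with hi
    · rw [hi, e]
    · by_contra hne
      have : ev a i ∈ rest a j :=
        Multiset.mem_map.2 ⟨i, mem_erase.2 ⟨hi, (mem_TT a i).2 hne⟩, rfl⟩
      rw [← h2] at this
      simp at this
  · rintro ⟨j, rfl⟩
    have e : ev (zv v j) j = v := by rw [ev_zv, if_pos rfl]
    have h0 := rest_add 0 v j
    rw [add_zero] at h0
    rw [shape_pos (by rw [e]; exact hv), e, h0]
    rfl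

theorem step_iff {v : V} (hv : v ≠ 0) {L : Multiset V} (hL : (0 : V) ∉ L) (d : Dg) (j : ℕ) :
    (∃ b, zv v j + b = d ∧ shape b = L) ↔
      (ev d j = v ∧ shape d = v ::ₘ L) ∨
        ∃ u ∈ L, ev d j = u + v ∧ shape d = (u + v) ::ₘ L.erase u := by
  constructor
  · rintro ⟨b, rfl, rfl⟩
    have e := ev_add_self b v j
    by_cases h : ev b j = 0
    · left
      rw [h, add_zero] at e
      exact ⟨e, by rw [shape_pos (by rw [e]; exact hv), e, rest_add, shape_zero h]⟩
    · right
      rw [add_comm v] at e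
      refine ⟨ev b j, by rw [shape_pos h]; simp, e, ?_⟩
      rw [shape_pos (by rw [e]; exact add_ne hv), e, rest_add, shape_pos h,
        Multiset.erase_cons_head]
  · intro H
    have hex : ∃ w, ev d j = w + v ∧
        ((w = 0 ∧ shape d = v ::ₘ L) ∨ (w ∈ L ∧ shape d = (w + v) ::ₘ L.erase w)) := by
      rcases H with ⟨h1, h2⟩ | ⟨u, hu, h1, h2⟩
      · exact ⟨0, by simpa using h1, Or.inl ⟨rfl, h2⟩⟩
      · exact ⟨u, h1, Or.inr ⟨hu, h2⟩⟩
    obtain ⟨w, hw, H⟩ := hex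
    have hle : zv v j ≤ d := by
      rintro ⟨i, k⟩
      have hi : ev (zv v j) i ≤ ev d i := by
        rw [ev_zv]
        split_ifs with hij
        · rw [hij, hw]; simp
        · exact ⟨Nat.zero_le _, Nat.zero_le _⟩
      fin_cases k
      · exact hi.1
      · exact hi.2
    obtain ⟨b, rfl⟩ := exists_add_of_le hle
    refine ⟨b, rfl, ?_⟩
    have e := ev_add_self b v j
    have hb : ev b j = w := by
      rw [hw, add_comm] at e
      exact (add_left_cancel e).symm
    have hs := shape_pos (d := zv v j + b) (j := j) (by rw [hw]; exact add_ne hv)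
    rw [hw, rest_add] at hs
    rcases H with ⟨rfl, h2⟩ | ⟨hwL, h2⟩
    · rw [h2, zero_add, Multiset.cons_inj_right] at hs
      rw [shape_zero hb, hs]
    · rw [h2, Multiset.cons_inj_right] at hs
      have : ev b j ≠ 0 := by rw [hb]; rintro rfl; exact hL hwL
      rw [shape_pos this, hb, ← hs, Multiset.cons_erase hwL]

open Classical in
theorem coeff_prod {v : V} (hv : v ≠ 0) (L : Multiset V) (d : Dg) :
    MvPowerSeries.coeff d (mm {v} * mm L) =
      ((#{j ∈ TT d | ∃ b, zv v j + b = d ∧ shape b = L} : ℕ) : ℂ) := by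
  rw [MvPowerSeries.coeff_mul]
  simp only [coeff_mm, mul_ite, mul_one, mul_zero, ← ite_and]
  rw [Finset.sum_boole]
  congr 1
  symm
  refine Finset.card_bij (fun j _ => (zv v j, d - zv v j)) ?_ ?_ ?_
  · intro j hj
    obtain ⟨_, b, rfl, hb⟩ := mem_filter.1 hj
    simp only [add_tsub_cancel_left, mem_filter, HasAntidiagonal.mem_antidiagonal, true_and]
    exact ⟨hb, (shape_single_iff hv _).2 ⟨j, rfl⟩⟩
  · intro i _ j _ h
    have h1 := congrArg (fun p => ev p.1 i) h
    simp only [ev_zv, if_true] at h1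
    by_contra hne
    rw [if_neg hne] at h1
    exact hv h1
  · rintro ⟨a, b⟩ h
    obtain ⟨h1, h2, h3⟩ := mem_filter.1 h
    rw [HasAntidiagonal.mem_antidiagonal] at h1
    obtain ⟨j, rfl⟩ := (shape_single_iff hv _).1 h3
    simp only at h1 h2
    refine ⟨j, mem_filter.2 ⟨?_, b, h1, h2⟩, ?_⟩
    · rw [mem_TT, ← h1, ev_add_self, add_comm]
      exact add_ne hv
    · rw [← h1, add_tsub_cancel_left]

theorem card_step {v : V} (hv : v ≠ 0) {L : Multiset V} (hL : (0 : V) ∉ L) (d : Dg)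
    [DecidablePred fun j => ∃ b, zv v j + b = d ∧ shape b = L] :
    #{j ∈ TT d | ∃ b, zv v j + b = d ∧ shape b = L} =
      (if shape d = v ::ₘ L then Multiset.count v (shape d) else 0) +
      ∑ u ∈ L.toFinset,
        if shape d = (u + v) ::ₘ L.erase u then Multiset.count (u + v) (shape d) else 0 := by
  classical
  simp only [count_shape]
  have h1 : ({j ∈ TT d | ∃ b, zv v j + b = d ∧ shape b = L} : Finset ℕ) =
      {j ∈ TT d | ev d j = v ∧ shape d = v ::ₘ L} ∪
        L.toFinset.biUnion (fun u =>
          {j ∈ TT d | ev d j = u + v ∧ shape d = (u + v) ::ₘ L.erase u}) := by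
    ext j
    simp only [mem_filter, mem_union, mem_biUnion, Multiset.mem_toFinset, step_iff hv hL]
    constructor
    · rintro ⟨h, h' | ⟨u, hu, h'⟩⟩
      · exact Or.inl ⟨h, h'⟩
      · exact Or.inr ⟨u, hu, h, h'⟩
    · rintro (⟨h, h'⟩ | ⟨u, hu, h, h'⟩)
      · exact ⟨h, Or.inl h'⟩
      · exact ⟨h, Or.inr ⟨u, hu, h'⟩⟩
  have aux : ∀ (w : V) (p : Prop) [Decidable p], #{j ∈ TT d | ev d j = w ∧ p} =
      if p then #{j ∈ TT d | ev d j = w} else 0 := by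
    intro w p _
    split_ifs with hp <;> simp [hp]
  rw [h1, card_union_of_disjoint, card_biUnion]
  · simp only [aux]
  · intro u _ u' _ hne
    rw [Function.onFun, Finset.disjoint_left]
    intro j hj hj'
    have e1 := (mem_filter.1 hj).2.1
    have e2 := (mem_filter.1 hj').2.1
    exact hne (add_right_cancel (e1.symm.trans e2))
  · rw [Finset.disjoint_left]
    intro j hj hj'
    obtain ⟨u, hu, hj'⟩ := mem_biUnion.1 hj'
    have e1 := (mem_filter.1 hj).2.1
    have e2 := (mem_filter.1 hj').2.1
    have : u = 0 := by
      have := e1.symm.trans e2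
      simpa using this
    subst this
    exact hL (Multiset.mem_toFinset.1 hu)

def aut (L : Multiset V) : ℕ := ∏ u ∈ L.toFinset, (L.count u).factorial

theorem aut_pos (L : Multiset V) : 0 < aut L :=
  Finset.prod_pos fun _ _ => Nat.factorial_pos _

theorem aut_cons (u : V) (N : Multiset V) : aut (u ::ₘ N) = (N.count u + 1) * aut N := by
  have h : ∀ M : Multiset V, M.toFinset ⊆ insert u N.toFinset →
      aut M = ∏ w ∈ insert u N.toFinset, (M.count w).factorial := by
    intro M hM
    refine Finset.prod_subset hM fun w _ hw => ?_
    rw [Multiset.mem_toFinset] at hw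
    rw [Multiset.count_eq_zero_of_notMem hw, Nat.factorial_zero]
  rw [h (u ::ₘ N) (by simp), h N (by simp)]
  rw [← Finset.mul_prod_erase _ _ (mem_insert_self u N.toFinset),
    ← Finset.mul_prod_erase (insert u N.toFinset) (fun w => (N.count w).factorial)
      (mem_insert_self u N.toFinset)]
  rw [Multiset.count_cons_self, Nat.factorial_succ, mul_assoc]
  congr 2
  refine Finset.prod_congr rfl fun w hw => ?_
  rw [Multiset.count_cons_of_ne (mem_erase.1 hw).1]

noncomputable def MM (L : Multiset V) : MvPowerSeries (ℕ × Fin 2) ℂ := (aut L : ℂ) • mm L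

theorem prod_formula {v : V} (hv : v ≠ 0) {L : Multiset V} (hL : (0 : V) ∉ L) :
    mm {v} * MM L = MM (v ::ₘ L) + (L.map (fun u => MM ((u + v) ::ₘ L.erase u))).sum := by
  classical
  rw [MM, mul_smul_comm]
  ext d
  rw [map_smul, coeff_prod hv, card_step hv hL, map_add, Finset.sum_multiset_map_count, map_sum]
  simp only [MM, map_smul, map_nsmul, coeff_mm, smul_eq_mul]
  simp only [nsmul_eq_mul]
  push_cast
  rw [mul_add, Finset.mul_sum]
  congr 1
  · split_ifs with h
    · rw [h, aut_cons, Multiset.count_cons_self]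
      push_cast; ring
    · simp
  · refine Finset.sum_congr rfl fun u hu => ?_
    rw [Multiset.mem_toFinset] at hu
    split_ifs with h
    · obtain ⟨N, rfl⟩ := Multiset.exists_cons_of_mem hu
      rw [h, Multiset.erase_cons_head, aut_cons, aut_cons, Multiset.count_cons_self,
        Multiset.count_cons_self]
      push_cast; ring
    · simp

end MacM

namespace MacM

abbrev PS := MvPowerSeries (ℕ × Fin 2) ℂ

theorem mm_indep : LinearIndependent ℂ (fun L : {L : Multiset V // (0 : V) ∉ L} => mm L.1) := by
  rw [linearIndependent_iff']
  intro s g h i hi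
  obtain ⟨d, hd⟩ := exists_shape i.1 i.2
  have h' := congrArg (MvPowerSeries.coeff d) h
  rw [map_sum, Finset.sum_eq_single i] at h'
  · simpa [coeff_mm, hd] using h'
  · intro b _ hb
    rw [map_smul, coeff_mm, hd, if_neg, smul_zero]
    exact fun e => hb (Subtype.ext e.symm)
  · exact fun h => absurd hi h

theorem exists_phi : ∃ g : PS →ₗ[ℂ] P, ∀ L : Multiset V, (0 : V) ∉ L → g (MM L) = ff L := by
  obtain ⟨g, hg⟩ := LinearMap.exists_extend
    ((Module.Basis.span mm_indep).constr ℂ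
      (fun L : {L : Multiset V // (0 : V) ∉ L} => ((aut L.1 : ℂ)⁻¹) • ff L.1))
  refine ⟨g, fun L hL => ?_⟩
  have h1 := LinearMap.congr_fun hg (Module.Basis.span mm_indep ⟨L, hL⟩)
  rw [Module.Basis.constr_basis, LinearMap.comp_apply, Submodule.subtype_apply,
    Module.Basis.span_apply] at h1
  have hne : (aut L : ℂ) ≠ 0 := by exact_mod_cast (aut_pos L).ne'
  rw [MM, map_smul, h1, smul_smul, mul_inv_cancel₀ hne, one_smul]

theorem mm_eq (L : Multiset V) : mm L = ((aut L : ℂ)⁻¹) • MM L := by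
  have hne : (aut L : ℂ) ≠ 0 := by exact_mod_cast (aut_pos L).ne'
  rw [MM, smul_smul, inv_mul_cancel₀ hne, one_smul]

theorem zero_notMem_step {v : V} (hv : v ≠ 0) {N : Multiset V} (h0N : (0 : V) ∉ N) (u : V) :
    (0 : V) ∉ (u + v) ::ₘ N.erase u := by
  intro h
  rcases Multiset.mem_cons.1 h with h | h
  · exact add_ne hv h.symm
  · exact h0N (Multiset.mem_of_mem_erase h)

theorem phi_kills {g : PS →ₗ[ℂ] P} (hg : ∀ L : Multiset V, (0 : V) ∉ L → g (MM L) = ff L)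
    {x : PS} (hx : x ∈ Jbar) : g x = 0 := by
  have : Jbar ≤ LinearMap.ker g := by
    refine Submodule.span_le.2 ?_
    rintro x ⟨a, b, L, hab, hL, rfl⟩
    have hv : ((a, b) : V) ≠ 0 := by
      intro h
      simp only [Prod.mk_eq_zero] at h
      omega
    have hL' : (0 : V) ∉ L := hL
    have hvL : (0 : V) ∉ (a, b) ::ₘ L := by
      intro h
      rcases Multiset.mem_cons.1 h with h | h
      · exact hv h.symm
      · exact hL h
    rw [SetLike.mem_coe, LinearMap.mem_ker, mm_eq L, mul_smul_comm, prod_formula hv hL',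
      map_smul, map_add, hg _ hvL, map_multiset_sum, Multiset.map_map]
    have : (L.map (g ∘ fun u => MM ((u + (a, b)) ::ₘ L.erase u))) =
        L.map (fun u => fm qq ((u + (a, b)) ::ₘ L.erase u)) :=
      Multiset.map_congr rfl fun u _ => hg _ (zero_notMem_step hv hL' u)
    rw [this, ff, fm_cons]
    simp [qq, hab]
  exact this hx

theorem MM_mul_mem {v : V} (hv : v ≠ 0) {x : PS} (hx : x ∈ Jbar) : mm {v} * x ∈ Jbar := by
  have gen : ∀ (a b : ℕ) (L : Multiset V), a ≠ b → (0 : V) ∉ L →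
      mm {(a, b)} * MM L ∈ Jbar := by
    intro a b L hab hL
    rw [MM, mul_smul_comm]
    exact Submodule.smul_mem _ _ (Submodule.subset_span ⟨a, b, L, hab, hL, rfl⟩)
  induction hx using Submodule.span_induction with
  | mem x h =>
    obtain ⟨a, b, L, hab, hL, rfl⟩ := h
    have hL' : (0 : V) ∉ L := hL
    have hvL : (0 : V) ∉ v ::ₘ L := by
      intro h
      rcases Multiset.mem_cons.1 h with h | h
      · exact hv h.symm
      · exact hL h
    rw [mul_left_comm, mm_eq L, mul_smul_comm, prod_formula hv hL', mul_smul_comm, mul_add,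
      ← Multiset.sum_map_mul_left]
    refine Submodule.smul_mem _ _ (add_mem (gen _ _ _ hab hvL) ?_)
    refine multiset_sum_mem _ fun y hy => ?_
    obtain ⟨u, _, rfl⟩ := Multiset.mem_map.1 hy
    exact gen _ _ _ hab (zero_notMem_step hv hL' u)
  | zero => simp
  | add x y _ _ h1 h2 => rw [mul_add]; exact add_mem h1 h2
  | smul c x _ h => rw [mul_smul_comm]; exact Submodule.smul_mem _ _ h

noncomputable def psi : P →ₐ[ℂ] PS := MvPolynomial.aeval (fun a => mm {(a, a)})

theorem MM_sub_psi (n : ℕ) : ∀ s : Multiset V, s.card = n → (0 : V) ∉ s →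
    MM s - psi (ff s) ∈ Jbar := by
  induction n with
  | zero =>
    intro s hs _
    obtain rfl := Multiset.card_eq_zero.1 hs
    have h1 : mm 0 = 1 := by
      ext d
      rw [coeff_mm, MvPowerSeries.coeff_one]
      congr 1
      rw [eq_iff_iff]
      constructor
      · intro h
        refine ev_ext fun j => ?_
        by_contra hne
        rw [shape_pos (j := j) hne] at h
        exact Multiset.cons_ne_zero h
      · rintro rfl; rfl
    simp [MM, aut, h1, ff, fm_zero]
  | succ n ih =>
    intro s hs h0
    obtain ⟨v, hvs⟩ := Multiset.card_pos_iff_exists_mem.1 (by omega : 0 < s.card)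
    obtain ⟨N, rfl⟩ := Multiset.exists_cons_of_mem hvs
    have hv : v ≠ 0 := by rintro rfl; simp at h0
    have h0N : (0 : V) ∉ N := fun h => h0 (Multiset.mem_cons_of_mem h)
    rw [Multiset.card_cons] at hs
    have hN : N.card = n := by omega
    have e1 : MM (v ::ₘ N) = mm {v} * MM N -
        (N.map (fun u => MM ((u + v) ::ₘ N.erase u))).sum := by
      rw [prod_formula hv h0N]; ring
    have e2 : psi (ff (v ::ₘ N)) = psi (qq v) * psi (ff N) -
        (N.map (fun u => psi (ff ((u + v) ::ₘ N.erase u)))).sum := by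
      rw [ff, fm_cons, map_sub, map_mul, map_multiset_sum, Multiset.map_map]
      rfl
    have e3 : (N.map (fun u => MM ((u + v) ::ₘ N.erase u))).sum -
        (N.map (fun u => psi (ff ((u + v) ::ₘ N.erase u)))).sum ∈ Jbar := by
      rw [← Multiset.sum_map_sub]
      refine multiset_sum_mem _ fun y hy => ?_
      obtain ⟨u, hu, rfl⟩ := Multiset.mem_map.1 hy
      refine ih _ ?_ (zero_notMem_step hv h0N u)
      rw [Multiset.card_cons, Multiset.card_erase_add_one hu, hN]
    have e4 : mm {v} * MM N - psi (qq v) * psi (ff N) ∈ Jbar := by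
      by_cases hb : v.1 = v.2
      · have hq : psi (qq v) = mm {v} := by
          rw [qq, if_pos hb, psi, MvPolynomial.aeval_X]
          congr 2
          exact Prod.ext rfl hb
        rw [hq, ← mul_sub]
        exact MM_mul_mem hv (ih N hN h0N)
      · rw [qq, if_neg hb, map_zero, zero_mul, sub_zero, MM, mul_smul_comm]
        exact Submodule.smul_mem _ _ (Submodule.subset_span ⟨v.1, v.2, N, hb, h0N, rfl⟩)
    rw [e1, e2]
    convert sub_mem e4 e3 using 1
    ring

noncomputable def WW : Submodule ℂ PS :=
  Submodule.span ℂ {x | ∃ l : Multiset ℕ, (0 : ℕ) ∉ l ∧ x = mm (bip l)} ⊔ Jbar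

theorem psi_Low (n : ℕ) : ∀ x ∈ Low n, psi x ∈ WW := by
  induction n with
  | zero =>
    intro x hx
    have : Low 0 = ⊥ := by simp [Low]
    rw [this, Submodule.mem_bot] at hx
    simp [hx]
  | succ n ih =>
    intro x hx
    induction hx using Submodule.span_induction with
    | mem x h =>
      obtain ⟨l, h0, hs, rfl⟩ := h
      obtain ⟨c, hc, hlow⟩ := tri_bip l h0
      have h1 := ih _ (Low_mono (by omega : l.card ≤ n) hlow)
      have h2 : MM (bip l) ∈ WW :=
        Submodule.smul_mem _ _ (Submodule.mem_sup_left (Submodule.subset_span ⟨l, h0, rfl⟩))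
      have h3 : MM (bip l) - psi (ff (bip l)) ∈ WW :=
        Submodule.mem_sup_right (MM_sub_psi _ _ rfl (zero_notMem_bip l h0))
      have h4 : psi (xm l) = c⁻¹ • (MM (bip l) - (MM (bip l) - psi (ff (bip l))) -
          psi (ff (bip l) - c • xm l)) := by
        rw [map_sub, map_smul, sub_sub_cancel, sub_sub_cancel, smul_smul, inv_mul_cancel₀ hc,
          one_smul]
      rw [h4]
      exact Submodule.smul_mem _ _ (sub_mem (sub_mem h2 h3) h1)
    | zero => simp
    | add x y _ _ h1 h2 => rw [map_add]; exact add_mem h1 h2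
    | smul c x _ h => rw [map_smul]; exact Submodule.smul_mem _ _ h

theorem span_part (L : Multiset V) (h0 : (0 : V) ∉ L) : mm L ∈ WW := by
  obtain ⟨n, hn⟩ := ff_mem L h0
  have h1 := psi_Low n _ hn
  have h2 : MM L - psi (ff L) ∈ WW := Submodule.mem_sup_right (MM_sub_psi _ _ rfl h0)
  rw [mm_eq]
  refine Submodule.smul_mem _ _ ?_
  have := add_mem h2 h1
  rwa [sub_add_cancel] at this

theorem indep_part (s : Finset (Multiset ℕ)) (c : Multiset ℕ → ℂ) (hs : ∀ l ∈ s, (0 : ℕ) ∉ l)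
    (h : (∑ l ∈ s, c l • mm (bip l)) ∈ Jbar) : ∀ l ∈ s, c l = 0 := by
  obtain ⟨g, hg⟩ := exists_phi
  have h1 := phi_kills hg h
  have h2 : ∑ l ∈ s, (c l * (aut (bip l) : ℂ)⁻¹) • ff (bip l) = 0 := by
    rw [← h1, map_sum]
    refine Finset.sum_congr rfl fun l hl => ?_
    rw [mm_eq, smul_smul, map_smul, hg _ (zero_notMem_bip l (hs l hl))]
  intro l hl
  have h3 := indep s _ hs h2 l hl
  have hne : (aut (bip l) : ℂ) ≠ 0 := by exact_mod_cast (aut_pos _).ne'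
  simpa [hne] using h3

end MacM

/-- In `S̄ = S/(m_{(a,b)} : a ≠ b)`, the images of the `m_{(λ,0)(0,1)^{|λ|}}`, `λ` a
partition, form a `ℂ`-basis: every `m_Λ` lies in their span modulo the ideal, and they
are linearly independent modulo the ideal. -/
theorem stmt6 :
    (∀ Λ : Multiset (ℕ × ℕ), (0, 0) ∉ Λ →
      mm Λ ∈ Submodule.span ℂ {x | ∃ l : Multiset ℕ, (0 : ℕ) ∉ l ∧ x = mm (bip l)} ⊔ Jbar) ∧
    (∀ (s : Finset (Multiset ℕ)) (c : Multiset ℕ → ℂ), (∀ l ∈ s, (0 : ℕ) ∉ l) →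
      (∑ l ∈ s, c l • mm (bip l)) ∈ Jbar → ∀ l ∈ s, c l = 0) := by
  exact ⟨MacM.span_part, MacM.indep_part⟩
end

section
/- In S̄ = S/(m_{(a,b)} : a ≠ b), for k > 0 and a partition λ = (1^{α₁}2^{α₂}...): m̄_{(k,k)} · m̄_{(λ,0)(0,1)^{|λ|}} = Σ_{μ⪯λ, ℓ(λ)−ℓ(μ)≤k+1} [ (−1)^k k! (k+|λ|−|μ|+1)(β_{|λ|−|μ|+k}+1) / ( (k−ℓ(λ)+ℓ(μ)+1)! ∏ᵢ (αᵢ−βᵢ)! ) ] · m̄_{(|λ|−|μ|+k,0)(μ,0)(0,1)^{|λ|+k}}, where μ = (1^{β₁}2^{β₂}...). -/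
/-- product of factorials of multiplicities -/
def cc {α : Type*} [DecidableEq α] (s : Multiset α) : ℕ := ∏ i ∈ s.toFinset, (s.count i).factorial

section
variable {α : Type*} [DecidableEq α]

lemma cc_eq (s : Multiset α) (t : Finset α) (h : s.toFinset ⊆ t) :
    cc s = ∏ i ∈ t, (s.count i).factorial := by
  refine Finset.prod_subset h ?_
  intro x _ hx
  have : s.count x = 0 := Multiset.count_eq_zero.2 (by simpa using hx)
  simp [this]

lemma cc_cons (a : α) (s : Multiset α) : cc (a ::ₘ s) = (s.count a + 1) * cc s := by
  rw [cc_eq s (insert a s.toFinset) (by simp), cc, Multiset.toFinset_cons]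
  rw [← Finset.mul_prod_erase _ _ (Finset.mem_insert_self a _),
    ← Finset.mul_prod_erase _ (fun i => (s.count i).factorial) (Finset.mem_insert_self a _)]
  rw [Multiset.count_cons_self, Nat.factorial_succ, mul_assoc]
  congr 2
  refine Finset.prod_congr rfl ?_
  intro x hx
  rw [Multiset.count_cons_of_ne (Finset.ne_of_mem_erase hx)]

lemma cc_zero : cc (0 : Multiset α) = 1 := by simp [cc]

lemma cc_pos (s : Multiset α) : 0 < cc s := Finset.prod_pos fun _ _ => Nat.factorial_pos _

lemma cc_replicate (n : ℕ) (a : α) : cc (Multiset.replicate n a) = n.factorial := by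
  induction n with
  | zero => simp [cc_zero]
  | succ n ih => rw [Multiset.replicate_succ, cc_cons, ih]; simp [Nat.factorial_succ]

lemma count_powerset_mul (s : Multiset α) : ∀ μ : Multiset α, μ ≤ s →
    s.powerset.count μ * cc μ * cc (s - μ) = cc s := by
  induction s using Multiset.induction_on with
  | empty => 
    intro μ h
    have : μ = 0 := by simpa using h
    subst this; simp [cc_zero]
  | cons a s ih =>
    intro μ h
    rw [Multiset.powerset_cons, Multiset.count_add]
    by_cases ha : a ∈ μ
    · obtain ⟨ν, rfl⟩ := Multiset.exists_cons_of_mem ha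
      rw [Multiset.count_map_eq_count' _ _ (fun x y h => (Multiset.cons_inj_right a).1 h)]
      have hν : ν ≤ s := (Multiset.cons_le_cons_iff a).1 h
      have h1 := ih ν hν
      have hc : (a ::ₘ s) - (a ::ₘ ν) = s - ν := by
        rw [Multiset.sub_cons, Multiset.erase_cons_head] 
      rw [hc, cc_cons, cc_cons]
      have h2 : s.powerset.count (a ::ₘ ν) * ((ν.count a + 1) * cc ν) * cc (s - ν)
          = cc s * (s.count a - ν.count a) := by
        by_cases hle : a ::ₘ ν ≤ s
        · have h3 := ih _ hle
          have h4 : s - ν = a ::ₘ (s - (a ::ₘ ν)) := by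
            obtain ⟨u, rfl⟩ := Multiset.le_iff_exists_add.1 hle
            rw [add_tsub_cancel_left, Multiset.cons_add, ← Multiset.add_cons, add_tsub_cancel_left]
          rw [cc_cons] at h3
          rw [← Multiset.count_sub, h4, cc_cons, Multiset.count_cons_self, ← h3]; ring
        · have h5 : s.powerset.count (a ::ₘ ν) = 0 := by
            rw [Multiset.count_eq_zero]; simpa using hle
          have h6 : s.count a - ν.count a = 0 := by
            by_contra hne
            apply hle
            rw [Multiset.le_iff_count]
            intro b
            have := Multiset.le_iff_count.1 hν b
            rw [Multiset.count_cons]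
            split_ifs with hb
            · subst hb; omega
            · simpa using this
          rw [h5, h6]; simp
      have h7 := Multiset.le_iff_count.1 hν a
      calc _ = s.powerset.count (a ::ₘ ν) * ((ν.count a + 1) * cc ν) * cc (s - ν) +
            (ν.count a + 1) * (s.powerset.count ν * cc ν * cc (s - ν)) := by ring
        _ = cc s * ((s.count a - ν.count a) + (ν.count a + 1)) := by rw [h2, h1]; ring
        _ = _ := by rw [show (s.count a - ν.count a) + (ν.count a + 1) = s.count a + 1 by omega]; ring
    · have hle : μ ≤ s := by rwa [Multiset.le_cons_of_notMem ha] at h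
      have h0 : (s.powerset.map (Multiset.cons a)).count μ = 0 := by
        rw [Multiset.count_eq_zero]
        intro hm
        obtain ⟨u, _, rfl⟩ := Multiset.mem_map.1 hm
        simp at ha
      have h1 := ih μ hle
      have h4 : (a ::ₘ s) - μ = a ::ₘ (s - μ) := by
        rw [Multiset.cons_sub_of_le _ hle]
      rw [h0, h4, cc_cons, cc_cons, Multiset.count_sub, Multiset.count_eq_zero_of_notMem ha, ← h1]
      simp; ring
end

section
variable {α E : Type*} [AddCommMonoid E]

/-- sum over antidiagonal -/
def ads (s : Multiset α) (f : Multiset α → Multiset α → E) : E :=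
  (s.antidiagonal.map fun p => f p.1 p.2).sum

lemma ads_zero (f : Multiset α → Multiset α → E) : ads 0 f = f 0 0 := by simp [ads]

lemma ads_cons (a : α) (s : Multiset α) (f : Multiset α → Multiset α → E) :
    ads (a ::ₘ s) f = ads s (fun U R => f U (a ::ₘ R)) + ads s (fun U R => f (a ::ₘ U) R) := by
  simp [ads, Multiset.antidiagonal_cons, Multiset.map_map]

lemma ads_congr {s : Multiset α} {f g : Multiset α → Multiset α → E}
    (h : ∀ U R, U + R = s → f U R = g U R) : ads s f = ads s g := by
  unfold ads
  congr 1
  refine Multiset.map_congr rfl ?_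
  intro p hp
  exact h _ _ (Multiset.mem_antidiagonal.1 hp)

lemma ads_add (s : Multiset α) (f g : Multiset α → Multiset α → E) :
    ads s (fun U R => f U R + g U R) = ads s f + ads s g := by
  simp [ads]

lemma ads_map {F : Type*} [AddCommMonoid F] (φ : E →+ F) (s : Multiset α)
    (f : Multiset α → Multiset α → E) : φ (ads s f) = ads s (fun U R => φ (f U R)) := by
  simp [ads, map_multiset_sum, Multiset.map_map]

lemma ads_D [DecidableEq α] (s : Multiset α) : ∀ (f : Multiset α → Multiset α → E),
    (s.map fun w => ads (s.erase w) fun U R => f (w ::ₘ U) R).sum =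
      ads s fun U R => U.card • f U R := by
  induction s using Multiset.induction_on with
  | empty => intro f; simp [ads_zero]
  | cons a s ih =>
    intro f
    rw [Multiset.map_cons, Multiset.sum_cons, Multiset.erase_cons_head]
    have h : (s.map fun w => ads ((a ::ₘ s).erase w) fun U R => f (w ::ₘ U) R) =
        s.map fun w => (ads (s.erase w) (fun U R => f (w ::ₘ U) (a ::ₘ R)) +
          ads (s.erase w) (fun U R => f (a ::ₘ w ::ₘ U) R)) := by
      refine Multiset.map_congr rfl ?_
      intro w hw
      rw [Multiset.erase_cons_tail_of_mem hw, ads_cons]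
      simp only [Multiset.cons_swap a w]
    rw [h, Multiset.sum_map_add, ih (fun U R => f U (a ::ₘ R)), ih (fun U R => f (a ::ₘ U) R),
      ads_cons]
    simp only [Multiset.card_cons, succ_nsmul, ads_add]
    abel

lemma ads_map_add {β : Type*} (e : α → β) (s : Multiset α) (B : Multiset β) :
    ∀ F : Multiset β → Multiset β → E, ads (s.map e + B) F =
      ads s fun U R => ads B fun U' R' => F (U.map e + U') (R.map e + R') := by
  induction s using Multiset.induction_on with
  | empty => intro F; simp [ads_zero]
  | cons a s ih =>
    intro F
    rw [Multiset.map_cons, Multiset.cons_add, ads_cons, ads_cons, ih, ih]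
    simp

lemma ads_replicate (n : ℕ) (a : α) : ∀ F : Multiset α → Multiset α → E,
    ads (Multiset.replicate n a) F = ∑ p ∈ Finset.HasAntidiagonal.antidiagonal n,
      n.choose p.1 • F (Multiset.replicate p.1 a) (Multiset.replicate p.2 a) := by
  induction n with
  | zero => intro F; simp [ads_zero]
  | succ n ih =>
    intro F
    rw [Multiset.replicate_succ, ads_cons, ih, ih, Finset.sum_antidiagonal_choose_succ_nsmul
      (fun i j => F (Multiset.replicate i a) (Multiset.replicate j a))]
    simp only [Multiset.replicate_succ]
    congr 1
    refine Finset.sum_congr rfl ?_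
    intro p hp
    rw [Nat.choose_symm_of_eq_add (Finset.HasAntidiagonal.mem_antidiagonal.1 hp).symm]

lemma ads_card (s : Multiset α) : ∀ φ : ℕ → ℕ → E,
    ads s (fun U R => φ U.card R.card) = ∑ p ∈ Finset.HasAntidiagonal.antidiagonal s.card,
      s.card.choose p.1 • φ p.1 p.2 := by
  induction s using Multiset.induction_on with
  | empty => intro F; simp [ads_zero]
  | cons a s ih =>
    intro φ
    rw [ads_cons]
    simp only [Multiset.card_cons]
    rw [ih (fun i j => φ i (j + 1)), ih (fun i j => φ (i + 1) j),
      Finset.sum_antidiagonal_choose_succ_nsmul φ]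
    congr 1
    refine Finset.sum_congr rfl ?_
    intro p hp
    rw [Nat.choose_symm_of_eq_add (Finset.HasAntidiagonal.mem_antidiagonal.1 hp).symm]

lemma ads_assoc (s : Multiset α) : ∀ f : Multiset α → Multiset α → Multiset α → E,
    ads s (fun T R => ads R fun U R' => f T U R') =
      ads s (fun A R' => ads A fun T U => f T U R') := by
  induction s using Multiset.induction_on with
  | empty => intro F; simp [ads_zero]
  | cons a s ih =>
    intro f
    simp only [ads_cons, ads_add]
    rw [ih (fun T U R' => f T U (a ::ₘ R')), ih (fun T U R' => f T (a ::ₘ U) R'),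
      ih (fun T U R' => f (a ::ₘ T) U R')]
    abel

lemma ads_const_zero (s : Multiset α) : ads s (fun _ _ => (0 : E)) = 0 := by
  simp [ads]

lemma ads_ite_zero [DecidableEq α] (s : Multiset α) : ∀ f : Multiset α → Multiset α → E,
    ads s (fun A R => if A = 0 then f A R else 0) = f 0 s := by
  induction s using Multiset.induction_on with
  | empty => intro F; simp [ads_zero]
  | cons a s ih =>
    intro f
    rw [ads_cons, ih (fun A R => f A (a ::ₘ R))]
    simp [ads_const_zero]

lemma ads_eq_finset [DecidableEq α] (s : Multiset α) (f : Multiset α → Multiset α → E) :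
    ads s f = ∑ μ ∈ s.powerset.toFinset, s.powerset.count μ • f (s - μ) μ := by
  rw [ads, Multiset.antidiagonal_eq_map_powerset, Multiset.map_map,
    Finset.sum_multiset_map_count]
  rfl
end

/-- weighted sums -/
lemma ads_sum (n : ℕ) : ∀ (s : Multiset ℕ), s.card = n + 1 → ∀ φ : ℕ → ℕ → ℂ,
    ads s (fun U R => (U.sum : ℂ) * φ U.card R.card) =
      (s.sum : ℂ) * ∑ p ∈ Finset.HasAntidiagonal.antidiagonal n, n.choose p.1 • φ (p.1 + 1) p.2 := by
  induction n with
  | zero =>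
    intro s hs φ
    obtain ⟨a, rfl⟩ := Multiset.card_eq_one.1 hs
    rw [← Multiset.cons_zero, ads_cons, ads_zero, ads_zero]
    simp
  | succ n ih =>
    intro s hs φ
    obtain ⟨a, ha⟩ := Multiset.card_pos_iff_exists_mem.1 (show 0 < s.card by omega)
    obtain ⟨t, rfl⟩ := Multiset.exists_cons_of_mem ha
    have ht : t.card = n + 1 := by simpa using hs
    rw [ads_cons]
    simp only [Multiset.card_cons, Multiset.sum_cons, Nat.cast_add, add_mul, ads_add]
    rw [ih t ht (fun i j => φ i (j + 1)), ih t ht (fun i j => φ (i + 1) j),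
      Finset.sum_antidiagonal_choose_succ_nsmul (fun i j => φ (i + 1) j)]
    have h1 := ads_map (AddMonoidHom.mulLeft (a : ℂ)) t (fun U R => φ (U.card + 1) R.card)
    simp only [AddMonoidHom.coe_mulLeft] at h1
    rw [← h1, ads_card t (fun i j => φ (i + 1) j), ht,
      Finset.sum_antidiagonal_choose_succ_nsmul (fun i j => φ (i + 1) j)]
    have h2 : ∀ g : ℕ × ℕ → ℂ, ∑ p ∈ Finset.HasAntidiagonal.antidiagonal n, n.choose p.2 • g p =
        ∑ p ∈ Finset.HasAntidiagonal.antidiagonal n, n.choose p.1 • g p := by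
      intro g
      refine Finset.sum_congr rfl ?_
      intro p hp
      rw [Nat.choose_symm_of_eq_add (Finset.HasAntidiagonal.mem_antidiagonal.1 hp).symm]
    rw [h2 (fun p => φ (p.1 + 1 + 1) p.2)]
    ring

/-- alternating sum of multichoose -/
lemma alt_mc (s : ℕ) : ∀ (a K : ℕ), ∑ p ∈ Finset.HasAntidiagonal.antidiagonal a,
    a.choose p.1 • ((-1 : ℂ) ^ p.1 * (if p.1 ≤ K then ((a + s).multichoose (K - p.1) : ℂ) else 0))
      = (s.multichoose K : ℂ) := by
  intro a
  induction a with
  | zero => intro K; simp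
  | succ a ih =>
    intro K
    rw [Finset.sum_antidiagonal_choose_succ_nsmul (fun i _ => (-1 : ℂ) ^ i *
      (if i ≤ K then ((a + 1 + s).multichoose (K - i) : ℂ) else 0)), ← ih K,
      ← Finset.sum_add_distrib]
    refine Finset.sum_congr rfl ?_
    intro p hp
    rw [← Nat.choose_symm_of_eq_add (Finset.HasAntidiagonal.mem_antidiagonal.1 hp).symm, ← smul_add]
    congr 1
    rcases lt_trichotomy p.1 K with h | h | h
    · obtain ⟨d, rfl⟩ : ∃ d, K = p.1 + 1 + d := ⟨K - p.1 - 1, by omega⟩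
      rw [if_pos (by omega), if_pos (by omega), if_pos (by omega),
        show p.1 + 1 + d - p.1 = d + 1 by omega, show p.1 + 1 + d - (p.1 + 1) = d by omega,
        show a + 1 + s = (a + s) + 1 by omega, Nat.multichoose_succ_succ]
      push_cast; ring
    · rw [if_pos (by omega), if_neg (by omega), if_pos (by omega), h]; simp
    · rw [if_neg (by omega), if_neg (by omega), if_neg (by omega)]; simp

lemma mc_succ (s k : ℕ) : (k + 1) * s.multichoose (k + 1) = s * (s + 1).multichoose k := by
  rcases s with _ | s
  · simp
  · rw [Nat.multichoose_eq, Nat.multichoose_eq, show s + 1 + (k + 1) - 1 = s + k + 1 by omega,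
      show s + 1 + 1 + k - 1 = s + k + 1 by omega]
    have := Nat.choose_succ_right_eq (s + k + 1) k
    rw [show s + k + 1 - k = s + 1 by omega] at this
    linarith

lemma fact_mc (y m : ℕ) : ((y + m).factorial : ℂ) / (m.factorial : ℂ) =
    (y.factorial : ℂ) * ((y + 1).multichoose m : ℂ) := by
  have h : (m.factorial : ℂ) ≠ 0 := by exact_mod_cast m.factorial_ne_zero
  rw [div_eq_iff h, Nat.multichoose_eq, show y + 1 + m - 1 = y + m by omega]
  have := Nat.add_choose_mul_factorial_mul_factorial y m
  rw [← this]; push_cast; ring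

/-- The inner sum -/
lemma inner_sum_eq (k : ℕ) (A : Multiset ℕ) :
    ads A (fun T U => (-1 : ℂ) ^ U.card * ((k : ℂ) + T.sum + 1) *
      (if T.card ≤ k + 1 then ((U.card + k + A.sum).factorial : ℂ) /
        ((k + 1 - T.card).factorial : ℂ) else 0)) = if A = 0 then 1 else 0 := by
  rcases Multiset.empty_or_exists_mem A with rfl | ⟨x, hx⟩
  · rw [ads_zero]
    have h : (k.factorial : ℂ) ≠ 0 := by exact_mod_cast k.factorial_ne_zero
    have h' : (k : ℂ) + 1 ≠ 0 := by exact_mod_cast k.succ_ne_zero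
    simp [Nat.factorial_succ]
    field_simp
  · rw [if_neg (by rintro rfl; simp at hx)]
    obtain ⟨n, hn⟩ : ∃ n, A.card = n + 1 :=
      Nat.exists_eq_succ_of_ne_zero (by rw [Ne, Multiset.card_eq_zero]; rintro rfl; simp at hx)
    set s := A.sum with hs
    have key : ∀ T U : Multiset ℕ, T + U = A → (-1 : ℂ) ^ U.card * ((k : ℂ) + T.sum + 1) *
      (if T.card ≤ k + 1 then ((U.card + k + s).factorial : ℂ) /
        ((k + 1 - T.card).factorial : ℂ) else 0) =
      ((-1 : ℂ) ^ (n + 1) * (n + s).factorial) * 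
       (((k : ℂ) + 1) * ((-1 : ℂ) ^ T.card * 
        (if T.card ≤ k + 1 then ((n + 1 + s).multichoose (k + 1 - T.card) : ℂ) else 0)) +
        T.sum * ((-1 : ℂ) ^ T.card * 
        (if T.card ≤ k + 1 then ((n + 1 + s).multichoose (k + 1 - T.card) : ℂ) else 0))) := by
      intro T U hTU
      have hc : T.card + U.card = n + 1 := by rw [← hn, ← hTU, Multiset.card_add]
      have hsgn : (-1 : ℂ) ^ U.card = (-1 : ℂ) ^ (n + 1) * (-1 : ℂ) ^ T.card := by
        rw [← hc, pow_add, mul_comm, ← mul_assoc, ← pow_add, ← two_mul, pow_mul]; simp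
      by_cases hle : T.card ≤ k + 1
      · simp only [if_pos hle]
        have := fact_mc (n + s) (k + 1 - T.card)
        rw [show n + s + (k + 1 - T.card) = U.card + k + s by omega,
          show n + s + 1 = n + 1 + s by omega] at this
        rw [this, hsgn]; ring
      · simp only [if_neg hle]; ring
    rw [ads_congr key]
    have h1 := ads_map (AddMonoidHom.mulLeft ((-1 : ℂ) ^ (n + 1) * (n + s).factorial)) A
    simp only [AddMonoidHom.coe_mulLeft] at h1
    rw [← h1, ads_add]
    have h2 := ads_map (AddMonoidHom.mulLeft ((k : ℂ) + 1)) A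
    simp only [AddMonoidHom.coe_mulLeft] at h2
    rw [← h2]
    rw [ads_card A (fun i _ => ((-1 : ℂ) ^ i * 
        (if i ≤ k + 1 then ((n + 1 + s).multichoose (k + 1 - i) : ℂ) else 0))), hn, alt_mc,
      ads_sum n A hn (fun i _ => ((-1 : ℂ) ^ i * 
        (if i ≤ k + 1 then ((n + 1 + s).multichoose (k + 1 - i) : ℂ) else 0)))]
    have h3 : ∑ p ∈ Finset.HasAntidiagonal.antidiagonal n, n.choose p.1 • ((-1 : ℂ) ^ (p.1 + 1) * 
        (if p.1 + 1 ≤ k + 1 then ((n + 1 + s).multichoose (k + 1 - (p.1 + 1)) : ℂ) else 0)) =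
        - ((s + 1).multichoose k : ℂ) := by
      rw [← alt_mc (s + 1) n k, ← Finset.sum_neg_distrib]
      refine Finset.sum_congr rfl ?_
      intro p _
      simp only [Nat.add_sub_add_right, add_le_add_iff_right, pow_succ,
        show n + 1 + s = n + (s + 1) by omega]
      rw [← smul_neg]; congr 1; ring
    rw [h3]
    have h4 : ((k : ℂ) + 1) * (s.multichoose (k + 1) : ℂ) = s * ((s + 1).multichoose k : ℂ) := by
      exact_mod_cast mc_succ s k
    rw [h4]; ring
/-- exponent pair of index `i` -/
def gg (d : ℕ × Fin 2 →₀ ℕ) (i : ℕ) : ℕ × ℕ := (d (i, 0), d (i, 1))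

/-- the indices occurring in `d` -/
def II (d : ℕ × Fin 2 →₀ ℕ) : Finset ℕ := d.support.image Prod.fst

/-- multiset of exponent pairs -/
def ty (d : ℕ × Fin 2 →₀ ℕ) : Multiset (ℕ × ℕ) := (II d).val.map (gg d)

/-- the monomial with exponent pair `v` at index `i` -/
noncomputable def EE (i : ℕ) (v : ℕ × ℕ) : ℕ × Fin 2 →₀ ℕ :=
  Finsupp.single (i, 0) v.1 + Finsupp.single (i, 1) v.2

lemma mm_coeff (Λ : Multiset (ℕ × ℕ)) (d : ℕ × Fin 2 →₀ ℕ) :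
    MvPowerSeries.coeff d (mm Λ) = if ty d = Λ then 1 else 0 := rfl

lemma mem_II (d : ℕ × Fin 2 →₀ ℕ) (i : ℕ) : i ∈ II d ↔ gg d i ≠ 0 := by
  unfold II gg
  rw [Finset.mem_image]
  constructor
  · rintro ⟨⟨a, b⟩, h, rfl⟩ h'
    simp only [Prod.mk_eq_zero] at h'
    rw [Finsupp.mem_support_iff] at h
    fin_cases b
    · exact h h'.1
    · exact h h'.2
  · intro h
    by_cases h1 : d (i, 0) = 0
    · refine ⟨(i, 1), ?_, rfl⟩
      rw [Finsupp.mem_support_iff]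
      intro h2
      exact h (by rw [h1, h2]; rfl)
    · exact ⟨(i, 0), by rwa [Finsupp.mem_support_iff], rfl⟩

lemma gg_ext {d e : ℕ × Fin 2 →₀ ℕ} (h : ∀ i, gg d i = gg e i) : d = e := by
  ext ⟨i, b⟩
  have := h i
  simp only [gg, Prod.mk.injEq] at this
  fin_cases b
  · exact this.1
  · exact this.2

lemma gg_add (d e : ℕ × Fin 2 →₀ ℕ) (i : ℕ) : gg (d + e) i = gg d i + gg e i := by
  simp [gg]

lemma gg_EE (i j : ℕ) (v : ℕ × ℕ) : gg (EE i v) j = if i = j then v else 0 := by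
  unfold gg EE
  by_cases h : i = j
  · subst h; simp
  · simp [h]

lemma II_EE (i : ℕ) {v : ℕ × ℕ} (hv : v ≠ 0) : II (EE i v) = {i} := by
  ext j
  rw [mem_II, gg_EE, Finset.mem_singleton]
  by_cases h : i = j
  · simp [h, hv]
  · simp [h, Ne.symm h]

lemma ty_EE (i : ℕ) {v : ℕ × ℕ} (hv : v ≠ 0) : ty (EE i v) = {v} := by
  rw [ty, II_EE i hv]; simp [gg_EE]

lemma ty_single {e : ℕ × Fin 2 →₀ ℕ} {v : ℕ × ℕ} (h : ty e = {v}) : ∃ i, e = EE i v := by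
  have hc : (II e).card = 1 := by
    have := congrArg Multiset.card h
    simpa [ty] using this
  obtain ⟨i, hi⟩ := Finset.card_eq_one.1 hc
  refine ⟨i, gg_ext fun j => ?_⟩
  rw [gg_EE]
  rw [ty, hi] at h
  have hv : gg e i = v := by simpa using h
  by_cases hj : i = j
  · subst hj; simp [hv]
  · rw [if_neg hj]
    by_contra hne
    have := (mem_II e j).2 hne
    rw [hi, Finset.mem_singleton] at this
    exact hj this.symm

/-- remove `v` from part `u` of `Θ` -/
def rem (v : ℕ × ℕ) (Θ : Multiset (ℕ × ℕ)) (u : ℕ × ℕ) : Multiset (ℕ × ℕ) :=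
  if u = v then Θ.erase u else (u - v) ::ₘ Θ.erase u

lemma pair_sub_add {u v : ℕ × ℕ} (h : v ≤ u) : u - v + v = u := tsub_add_cancel_of_le h

lemma ty_rem {f : ℕ × Fin 2 →₀ ℕ} {i : ℕ} {v : ℕ × ℕ} (hv : v ≠ 0) :
    ty f = rem v (ty (EE i v + f)) (gg (EE i v + f) i) := by
  set d := EE i v + f with hd
  have hgi : gg d i = v + gg f i := by rw [hd, gg_add, gg_EE, if_pos rfl]
  have hgj : ∀ j, j ≠ i → gg d j = gg f j := by
    intro j hj; rw [hd, gg_add, gg_EE, if_neg (Ne.symm hj), zero_add]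
  have hi : i ∈ II d := by
    rw [mem_II, hgi]
    intro h
    exact hv (add_eq_zero.1 h).1
  have hI : (II d).erase i = (II f).erase i := by
    ext j
    simp only [Finset.mem_erase, mem_II]
    constructor
    · rintro ⟨h1, h2⟩; exact ⟨h1, by rwa [← hgj j h1]⟩
    · rintro ⟨h1, h2⟩; exact ⟨h1, by rwa [hgj j h1]⟩
  have hrest : ((II d).erase i).val.map (gg d) = ((II f).erase i).val.map (gg f) := by
    rw [hI]
    refine Multiset.map_congr rfl ?_
    intro j hj
    exact hgj j (Finset.ne_of_mem_erase hj)
  have hsplit : ∀ (s : Finset ℕ) (g : ℕ → ℕ × ℕ), i ∈ s →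
      s.val.map g = g i ::ₘ (s.erase i).val.map g := by
    intro s g his
    conv_lhs => rw [← Finset.insert_erase his]
    rw [Finset.insert_val_of_notMem (Finset.notMem_erase i s), Multiset.map_cons]
  have h1 : ty d = gg d i ::ₘ ((II f).erase i).val.map (gg f) := by
    rw [ty, hsplit _ _ hi, hrest]
  rw [rem, h1, Multiset.erase_cons_head]
  by_cases h0 : gg f i = 0
  · rw [if_pos (by rw [hgi, h0, add_zero]), ty, Finset.erase_eq_of_notMem]
    rw [mem_II]; simpa using h0
  · rw [if_neg (by rw [hgi]; simpa using h0), hgi, add_tsub_cancel_left, ty,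
      hsplit _ _ ((mem_II f i).2 h0)]

lemma coeff_single_mul {v : ℕ × ℕ} (hv : v ≠ 0) (Λ : Multiset (ℕ × ℕ)) (d : ℕ × Fin 2 →₀ ℕ) :
    MvPowerSeries.coeff d (mm {v} * mm Λ) =
      ((ty d).map fun u => if v ≤ u ∧ rem v (ty d) u = Λ then (1 : ℂ) else 0).sum := by
  classical
  rw [MvPowerSeries.coeff_mul]
  simp only [mm_coeff]
  have hR : ((ty d).map fun u => if v ≤ u ∧ rem v (ty d) u = Λ then (1 : ℂ) else 0).sum =
      ∑ i ∈ II d, if v ≤ gg d i ∧ rem v (ty d) (gg d i) = Λ then (1 : ℂ) else 0 := by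
    conv_lhs => rw [ty]
    rw [Multiset.map_map]; rfl
  rw [hR, ← Finset.sum_filter]
  have hL : ∀ p : (ℕ × Fin 2 →₀ ℕ) × (ℕ × Fin 2 →₀ ℕ),
      ((if ty p.1 = {v} then (1 : ℂ) else 0) * if ty p.2 = Λ then 1 else 0) =
      if (ty p.1 = {v} ∧ ty p.2 = Λ) then 1 else 0 := by
    intro p; by_cases h1 : ty p.1 = {v} <;> by_cases h2 : ty p.2 = Λ <;> simp [h1, h2]
  simp only [hL]
  rw [← Finset.sum_filter]
  symm
  have hle : ∀ i, v ≤ gg d i → EE i v + (d - EE i v) = d := by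
    intro i hi
    refine add_tsub_cancel_of_le ?_
    intro ⟨j, b⟩
    have h := gg_EE i j v
    by_cases hij : i = j
    · subst hij
      rw [if_pos rfl] at h
      rw [← h] at hi
      have h1 := hi.1
      have h2 := hi.2
      fin_cases b
      · exact h1
      · exact h2
    · rw [if_neg hij] at h
      have h1 := congrArg Prod.fst h
      have h2 := congrArg Prod.snd h
      fin_cases b
      · exact le_of_eq_of_le h1 (Nat.zero_le _)
      · exact le_of_eq_of_le h2 (Nat.zero_le _)
  refine Finset.sum_nbij (fun i => (EE i v, d - EE i v)) ?_ ?_ ?_ ?_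
  · intro i hi
    obtain ⟨hi, hvi, hr⟩ := Finset.mem_filter.1 hi
    rw [Finset.mem_filter, Finset.HasAntidiagonal.mem_antidiagonal]
    refine ⟨hle i hvi, ty_EE i hv, ?_⟩
    have := ty_rem (f := d - EE i v) (i := i) hv
    rw [hle i hvi] at this
    rw [this, hr]
  · intro i _ j _ hij
    have h1 : EE i v = EE j v := congrArg Prod.fst hij
    have h2 := congrArg II h1
    rw [II_EE i hv, II_EE j hv] at h2
    exact Finset.singleton_injective h2
  · intro p hp
    obtain ⟨hp, h1, h2⟩ := Finset.mem_filter.1 hp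
    rw [Finset.HasAntidiagonal.mem_antidiagonal] at hp
    obtain ⟨i, hi⟩ := ty_single h1
    have hd : d = EE i v + p.2 := by rw [← hi, hp]
    have hvi : v ≤ gg d i := by
      rw [hd, gg_add, gg_EE, if_pos rfl]; exact le_self_add
    refine ⟨i, ?_, ?_⟩
    · rw [Finset.mem_coe, Finset.mem_filter]
      refine ⟨?_, hvi, ?_⟩
      · rw [mem_II]
        intro h0
        rw [h0] at hvi
        exact hv (le_antisymm hvi zero_le)
      · rw [hd, ← ty_rem hv, h2]
    · refine Prod.ext hi.symm ?_
      simp only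
      rw [hd, add_tsub_cancel_left]
  · intro i _; rfl

/-- augmented monomial function -/
noncomputable def MM (Λ : Multiset (ℕ × ℕ)) : MvPowerSeries (ℕ × Fin 2) ℂ := (cc Λ : ℂ) • mm Λ

lemma MM_coeff (Λ : Multiset (ℕ × ℕ)) (d : ℕ × Fin 2 →₀ ℕ) :
    MvPowerSeries.coeff d (MM Λ) = if ty d = Λ then (cc Λ : ℂ) else 0 := by
  rw [MM, map_smul, mm_coeff]; simp

lemma count_id {v : ℕ × ℕ} (hv : v ≠ 0) (Λ Θ : Multiset (ℕ × ℕ)) (h0 : 0 ∉ Λ) :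
    (cc Λ : ℂ) * (Θ.map fun u => if v ≤ u ∧ rem v Θ u = Λ then (1 : ℂ) else 0).sum =
      (if Θ = v ::ₘ Λ then (cc (v ::ₘ Λ) : ℂ) else 0) +
      (Λ.map fun w => if Θ = (w + v) ::ₘ Λ.erase w then
        (cc ((w + v) ::ₘ Λ.erase w) : ℂ) else 0).sum := by
  rw [Finset.sum_multiset_map_count, Finset.sum_multiset_map_count]
  have key : ∀ u ∈ Θ.toFinset, Θ.count u • (if v ≤ u ∧ rem v Θ u = Λ then (1 : ℂ) else 0) =
      (if v = u then (if Θ = v ::ₘ Λ then (Θ.count v : ℂ) else 0) else 0) +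
      ∑ w ∈ Λ.toFinset, if w + v = u then
        (if Θ = (w + v) ::ₘ Λ.erase w then (Θ.count (w + v) : ℂ) else 0) else 0 := by
    intro u hu
    rw [Multiset.mem_toFinset] at hu
    by_cases huv : u = v
    · subst huv
      rw [Finset.sum_eq_zero]
      · have : rem u Θ u = Λ ↔ Θ = u ::ₘ Λ := by
          rw [rem, if_pos rfl]
          constructor
          · rintro rfl; rw [Multiset.cons_erase hu]
          · rintro rfl; simp
        simp [this]
      · intro w hw
        rw [if_neg]
        intro h
        have : w = 0 := by simpa using h
        subst this
        exact h0 (by simpa using hw)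
    · rw [if_neg (Ne.symm huv), zero_add]
      by_cases hc : v ≤ u ∧ rem v Θ u = Λ
      · obtain ⟨hle, hr⟩ := hc
        have hr' := hr
        rw [rem, if_neg huv] at hr
        have hw : u - v ∈ Λ := by rw [← hr]; simp
        rw [Finset.sum_eq_single (u - v)]
        · rw [pair_sub_add hle, if_pos rfl, if_pos ⟨hle, hr'⟩, if_pos]
          · simp
          · rw [← hr, Multiset.erase_cons_head, Multiset.cons_erase hu]
        · intro w _ hne
          rw [if_neg]
          rintro rfl
          exact hne (by simp)
        · intro h; exact absurd (by simpa using hw) h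
      · rw [if_neg hc, smul_zero, Finset.sum_eq_zero]
        intro w hw
        by_cases hwu : w + v = u
        · rw [if_pos hwu, if_neg]
          intro hΘ
          apply hc
          subst hwu
          refine ⟨le_add_self, ?_⟩
          rw [rem, if_neg huv, hΘ, Multiset.erase_cons_head, add_tsub_cancel_right,
            Multiset.cons_erase (by simpa using hw)]
        · rw [if_neg hwu]
  rw [Finset.sum_congr rfl key, Finset.sum_add_distrib, Finset.sum_comm, mul_add]
  congr 1
  · rw [Finset.sum_ite_eq]
    by_cases h : Θ = v ::ₘ Λ
    · rw [if_pos (by rw [h]; simp), if_pos h, if_pos h, h, cc_cons, Multiset.count_cons_self]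
      push_cast; ring
    · simp [h]
  · rw [Finset.mul_sum]
    refine Finset.sum_congr rfl ?_
    intro w hw
    rw [Finset.sum_ite_eq]
    by_cases h : Θ = (w + v) ::ₘ Λ.erase w
    · rw [if_pos (by rw [h]; simp), if_pos h, if_pos h, h, cc_cons, Multiset.count_cons_self]
      have hw' : w ∈ Λ := by simpa using hw
      have h1 : cc Λ = Λ.count w * cc (Λ.erase w) := by
        conv_lhs => rw [← Multiset.cons_erase hw', cc_cons]
        conv_rhs => rw [← Multiset.cons_erase hw']
        simp
      rw [h1]; push_cast; simp; ring
    · simp [h]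

lemma MM_mul {v : ℕ × ℕ} (hv : v ≠ 0) (Λ : Multiset (ℕ × ℕ)) (h0 : 0 ∉ Λ) :
    mm {v} * MM Λ = MM (v ::ₘ Λ) + (Λ.map fun w => MM ((w + v) ::ₘ Λ.erase w)).sum := by
  ext d
  rw [map_add, map_multiset_sum, Multiset.map_map]
  simp only [Function.comp_def, MM_coeff]
  rw [MM, mul_smul_comm, map_smul, coeff_single_mul hv, smul_eq_mul, count_id hv _ _ h0]

/-- expansion along one part -/
lemma MM_expand (n : ℕ) : ∀ (Λ : Multiset (ℕ × ℕ)), Λ.card = n → 0 ∉ Λ → ∀ v : ℕ × ℕ, v ≠ 0 →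
    MM (v ::ₘ Λ) = ads Λ fun U R =>
      ((-1 : ℂ) ^ U.card * (U.card.factorial : ℂ)) • (mm {v + U.sum} * MM R) := by
  induction n with
  | zero =>
    intro Λ hΛ h0 v hv
    have : Λ = 0 := by simpa using hΛ
    subst this
    have := MM_mul hv 0 h0
    simp only [Multiset.map_zero, Multiset.sum_zero, add_zero] at this
    rw [ads_zero, ← this]; simp
  | succ n ih =>
    intro Λ hΛ h0 v hv
    have h1 : (Λ.map fun w => MM ((w + v) ::ₘ Λ.erase w)) =
        Λ.map fun w => ads (Λ.erase w) fun U R => (fun U R => 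
          (-((-1 : ℂ) ^ U.card * ((U.card - 1).factorial : ℂ))) • (mm {v + U.sum} * MM R))
            (w ::ₘ U) R := by
      refine Multiset.map_congr rfl ?_
      intro w hw
      have hw0 : w + v ≠ 0 := by
        intro h; exact hv (add_eq_zero.1 h).2
      rw [ih (Λ.erase w) (by rw [Multiset.card_erase_of_mem hw, hΛ]; rfl)
        (fun h => h0 (Multiset.mem_of_mem_erase h)) _ hw0]
      refine ads_congr ?_
      intro U R _
      simp only [Multiset.card_cons, Multiset.sum_cons, Nat.add_sub_cancel]
      rw [show v + (w + U.sum) = w + v + U.sum by abel]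
      congr 1; ring
    have h2 := MM_mul hv Λ h0
    rw [h1, ads_D Λ (fun U R => 
          (-((-1 : ℂ) ^ U.card * ((U.card - 1).factorial : ℂ))) • (mm {v + U.sum} * MM R))] at h2
    have h3 := ads_ite_zero Λ (fun U R => (mm {v + U.sum} * MM R))
    simp only [Multiset.sum_zero, add_zero] at h3
    rw [← h3] at h2
    have h4 := add_right_cancel (b := ads Λ fun U R => U.card • (fun U R => 
          (-((-1 : ℂ) ^ U.card * ((U.card - 1).factorial : ℂ))) • (mm {v + U.sum} * MM R)) U R)
        (h2.symm.trans (b := _) (c := (ads Λ fun U R =>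
      ((-1 : ℂ) ^ U.card * (U.card.factorial : ℂ)) • (mm {v + U.sum} * MM R)) + _) ?_)
    · exact h4
    · rw [← ads_add]
      refine ads_congr ?_
      intro U R _
      rcases Multiset.empty_or_exists_mem U with rfl | ⟨x, hx⟩
      · simp
      · beta_reduce
        have hU : U ≠ 0 := by rintro rfl; simp at hx
        obtain ⟨m, hm⟩ : ∃ m, U.card = m + 1 :=
          Nat.exists_eq_succ_of_ne_zero (by rwa [Ne, Multiset.card_eq_zero])
        rw [if_neg hU, hm, ← Nat.cast_smul_eq_nsmul ℂ, smul_smul, ← add_smul]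
        symm
        convert zero_smul ℂ _
        rw [Nat.factorial_succ]; push_cast; simp; ring
/-- the bipartite partition `(R,0)(0,1)^N` -/
def BB (R : Multiset ℕ) (N : ℕ) : Multiset (ℕ × ℕ) :=
  R.map (fun i => (i, 0)) + Multiset.replicate N (0, 1)

lemma BB_sum (R : Multiset ℕ) (N : ℕ) : (BB R N).sum = (R.sum, N) := by
  unfold BB
  induction R using Multiset.induction_on with
  | empty => simp
  | cons a s ih =>
    rw [Multiset.map_cons, Multiset.cons_add, Multiset.sum_cons, ih]; simp

lemma BB_card (R : Multiset ℕ) (N : ℕ) : (BB R N).card = R.card + N := by simp [BB]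

lemma BB_zero_notMem {R : Multiset ℕ} (N : ℕ) (h : 0 ∉ R) : (0 : ℕ × ℕ) ∉ BB R N := by
  unfold BB
  rw [Multiset.mem_add, Multiset.mem_map]
  rintro (⟨a, ha, h1⟩ | h1)
  · have : a = 0 := congrArg Prod.fst h1
    exact h (this ▸ ha)
  · have := congrArg Prod.snd (Multiset.eq_of_mem_replicate h1)
    simp at this

lemma BB_cons (a : ℕ) (R : Multiset ℕ) (N : ℕ) : BB (a ::ₘ R) N = (a, 0) ::ₘ BB R N := by
  simp [BB]

lemma BB_count (a : ℕ) (R : Multiset ℕ) (N : ℕ) : (BB R N).count (a, 0) = R.count a := by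
  rw [BB, Multiset.count_add, Multiset.count_map_eq_count' (fun i : ℕ => ((i, 0) : ℕ × ℕ)) _
    (fun x y h => congrArg Prod.fst h), Multiset.count_replicate]
  simp

lemma cc_BB (R : Multiset ℕ) (N : ℕ) : cc (BB R N) = cc R * N.factorial := by
  induction R using Multiset.induction_on with
  | empty => simp [BB, cc_replicate, cc_zero]
  | cons a s ih =>
    rw [BB_cons, cc_cons, cc_cons, ih, BB_count, mul_assoc]

lemma q_zero {a b : ℕ} (hab : a ≠ b) {Λ : Multiset (ℕ × ℕ)} (h0 : 0 ∉ Λ) :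
    Jbar.mkQ (mm {(a, b)} * MM Λ) = 0 := by
  rw [Submodule.mkQ_apply, Submodule.Quotient.mk_eq_zero, MM, mul_smul_comm]
  exact Jbar.smul_mem _ (Submodule.subset_span ⟨a, b, Λ, hab, h0, rfl⟩)

lemma q_expand {x : ℕ} (hx : 0 < x) {R : Multiset ℕ} (h0 : 0 ∉ R) {N : ℕ} (hN : N = x + R.sum) :
    Jbar.mkQ (MM ((x, 0) ::ₘ BB R N)) = ads R fun U R' =>
      ((N.choose (x + U.sum) : ℂ) * ((-1 : ℂ) ^ (U.card + (x + U.sum)) *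
        ((U.card + (x + U.sum)).factorial : ℂ))) •
        Jbar.mkQ (mm {(x + U.sum, x + U.sum)} * MM (BB R' R'.sum)) := by
  have hx0 : ((x, 0) : ℕ × ℕ) ≠ 0 := by
    intro h; have : x = 0 := congrArg Prod.fst h
    omega
  rw [MM_expand _ (BB R N) rfl (BB_zero_notMem N h0) _ hx0]
  have h1 := ads_map Jbar.mkQ.toAddMonoidHom (BB R N)
  simp only [LinearMap.toAddMonoidHom_coe] at h1
  rw [h1]
  conv_lhs => rw [BB]
  rw [ads_map_add]
  refine ads_congr ?_
  intro U R' hUR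
  have hs : U.sum + R'.sum = R.sum := by rw [← hUR, Multiset.sum_add]
  have h0' : 0 ∉ R' := fun h => h0 (by rw [← hUR, Multiset.mem_add]; exact Or.inr h)
  rw [ads_replicate]
  rw [Finset.sum_eq_single (x + U.sum, R'.sum)]
  · change N.choose (x + U.sum) • Jbar.mkQ (((-1 : ℂ) ^ (BB U (x + U.sum)).card *
      ((BB U (x + U.sum)).card.factorial : ℂ)) • (mm {(x, 0) + (BB U (x + U.sum)).sum} *
        MM (BB R' R'.sum))) = _
    rw [BB_card, BB_sum, map_smul, ← Nat.cast_smul_eq_nsmul ℂ, smul_smul]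
    simp
  · rintro ⟨j, l⟩ hp hne
    rw [Finset.HasAntidiagonal.mem_antidiagonal] at hp
    simp only at hp
    change N.choose j • Jbar.mkQ (((-1 : ℂ) ^ (BB U j).card *
      ((BB U j).card.factorial : ℂ)) • (mm {(x, 0) + (BB U j).sum} *
        MM (BB R' l))) = 0
    rw [map_smul, BB_sum, show ((x, 0) : ℕ × ℕ) + (U.sum, j) = (x + U.sum, j) by simp,
      q_zero _ (BB_zero_notMem l h0')]
    · simp
    · intro h
      apply hne
      rw [Prod.mk.injEq]
      omega
  · intro h
    exfalso
    apply h
    rw [Finset.HasAntidiagonal.mem_antidiagonal]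
    simp only
    omega

/-- coefficient in the augmented form -/
noncomputable def cf (k n t S : ℕ) : ℂ := (n.factorial : ℂ) / ((n + k).factorial : ℂ) *
  ((-1 : ℂ) ^ k * (k.factorial : ℂ) * (((k : ℂ) + S + 1) *
    (if t ≤ k + 1 then 1 / ((k + 1 - t).factorial : ℂ) else 0)))

lemma main_aug {k : ℕ} (hk : 0 < k) {lam : Multiset ℕ} (h0 : 0 ∉ lam) :
    ads lam (fun T R => cf k lam.sum T.card T.sum •
      Jbar.mkQ (MM ((k + T.sum, 0) ::ₘ BB R (lam.sum + k)))) =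
    Jbar.mkQ (mm {(k, k)} * MM (BB lam lam.sum)) := by
  set n := lam.sum with hn
  have h1 : ads lam (fun T R => cf k n T.card T.sum •
      Jbar.mkQ (MM ((k + T.sum, 0) ::ₘ BB R (n + k)))) =
      ads lam (fun T R => ads R fun U R' => 
        (cf k n T.card T.sum * (((n + k).choose (k + T.sum + U.sum) : ℂ) *
          ((-1 : ℂ) ^ (U.card + (k + T.sum + U.sum)) *
        ((U.card + (k + T.sum + U.sum)).factorial : ℂ)))) •
        Jbar.mkQ (mm {(k + T.sum + U.sum, k + T.sum + U.sum)} * MM (BB R' R'.sum))) := by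
    refine ads_congr ?_
    intro T R hTR
    have hs : T.sum + R.sum = n := by rw [hn, ← hTR, Multiset.sum_add]
    rw [q_expand (by omega) (fun h => h0 (by rw [← hTR, Multiset.mem_add]; exact Or.inr h))
      (show n + k = k + T.sum + R.sum by omega)]
    have h2 := ads_map (DistribSMul.toAddMonoidHom
      (MvPowerSeries (ℕ × Fin 2) ℂ ⧸ Jbar) (cf k n T.card T.sum)) R
    simp only [DistribSMul.toAddMonoidHom_apply] at h2
    rw [h2]
    simp only [smul_smul]
  rw [h1, ads_assoc lam (fun T U R' => (cf k n T.card T.sum * (((n + k).choose (k + T.sum + U.sum) : ℂ) *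
          ((-1 : ℂ) ^ (U.card + (k + T.sum + U.sum)) *
        ((U.card + (k + T.sum + U.sum)).factorial : ℂ)))) •
        Jbar.mkQ (mm {(k + T.sum + U.sum, k + T.sum + U.sum)} * MM (BB R' R'.sum)))]
  have h3 := ads_ite_zero lam (fun A R' =>
    Jbar.mkQ (mm {(k + A.sum, k + A.sum)} * MM (BB R' R'.sum)))
  simp only [Multiset.sum_zero, add_zero] at h3
  rw [← hn] at h3
  rw [← h3]
  refine ads_congr ?_
  intro A R' hA
  have hs : A.sum + R'.sum = n := by rw [hn, ← hA, Multiset.sum_add]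
  set X := Jbar.mkQ (mm {(k + A.sum, k + A.sum)} * MM (BB R' R'.sum)) with hX
  have h4 : ads A (fun T U => (cf k n T.card T.sum * (((n + k).choose (k + T.sum + U.sum) : ℂ) *
          ((-1 : ℂ) ^ (U.card + (k + T.sum + U.sum)) *
        ((U.card + (k + T.sum + U.sum)).factorial : ℂ)))) •
        Jbar.mkQ (mm {(k + T.sum + U.sum, k + T.sum + U.sum)} * MM (BB R' R'.sum))) =
      ads A (fun T U => (((n.factorial : ℂ) / (R'.sum.factorial : ℂ) * ((-1 : ℂ) ^ A.sum *
        ((k.factorial : ℂ) / ((k + A.sum).factorial : ℂ)))) * ((-1 : ℂ) ^ U.card * ((k : ℂ) + T.sum + 1) *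
      (if T.card ≤ k + 1 then ((U.card + k + A.sum).factorial : ℂ) /
        ((k + 1 - T.card).factorial : ℂ) else 0))) • X) := by
    refine ads_congr ?_
    intro T U hTU
    have hs' : k + T.sum + U.sum = k + A.sum := by rw [← hTU, Multiset.sum_add]; omega
    rw [hs', ← hX]
    congr 1
    have hch : ((n + k).choose (k + A.sum) : ℂ) = ((n + k).factorial : ℂ) /
        (((k + A.sum).factorial : ℂ) * (R'.sum.factorial : ℂ)) := by
      rw [Nat.cast_choose ℂ (by omega), show n + k - (k + A.sum) = R'.sum by omega]
    have hf : ∀ m : ℕ, (m.factorial : ℂ) ≠ 0 := fun m => by exact_mod_cast m.factorial_ne_zero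
    have hsg : (-1 : ℂ) ^ k * (-1 : ℂ) ^ k = 1 := by rw [← mul_pow]; simp
    rw [hch, cf, ← add_assoc]
    have e1 := hf (n + k)
    have e2 := hf (k + A.sum)
    have e3 := hf R'.sum
    rw [pow_add, pow_add]
    split_ifs
    · have e4 := hf (k + 1 - T.card)
      field_simp
      linear_combination (n.factorial * k.factorial * (k + T.sum + 1) * (U.card + k + A.sum).factorial : ℂ) * hsg
    · simp
  rw [h4]
  have h5 := ads_map ((AddMonoidHom.flip (smulAddHom ℂ (MvPowerSeries (ℕ × Fin 2) ℂ ⧸ Jbar)) X).comp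
    (AddMonoidHom.mulLeft ((n.factorial : ℂ) / (R'.sum.factorial : ℂ) * ((-1 : ℂ) ^ A.sum *
        ((k.factorial : ℂ) / ((k + A.sum).factorial : ℂ)))))) A
  simp only [AddMonoidHom.comp_apply, AddMonoidHom.coe_mulLeft, AddMonoidHom.flip_apply,
    smulAddHom_apply] at h5
  rw [← h5, inner_sum_eq]
  by_cases hA0 : A = 0
  · subst hA0
    have hf : ∀ m : ℕ, (m.factorial : ℂ) ≠ 0 := fun m => by exact_mod_cast m.factorial_ne_zero
    have : R'.sum = n := by simpa using hs
    rw [this]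
    simp [hf]
  · simp [hA0]

open scoped Classical in
/-- In `S̄`, for `k > 0` and a partition `λ = (1^{α₁}2^{α₂}…)`:
`m̄_{(k,k)} m̄_{(λ,0)(0,1)^{|λ|}} = Σ_{μ⪯λ, ℓ(λ)−ℓ(μ)≤k+1}
((−1)^k k! (k+|λ|−|μ|+1)(β_{|λ|−|μ|+k}+1) / ((k−ℓ(λ)+ℓ(μ)+1)! ∏ᵢ(αᵢ−βᵢ)!))
m̄_{(|λ|−|μ|+k,0)(μ,0)(0,1)^{|λ|+k}}`, stated as membership of the difference in the
ideal `(m_{(a,b)} : a ≠ b)`. -/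
theorem stmt14 (k : ℕ) (hk : 0 < k) (lam : Multiset ℕ) (h0 : (0 : ℕ) ∉ lam) :
    mm {((k : ℕ), (k : ℕ))} * mm (bip lam) -
      ∑ μ ∈ lam.powerset.toFinset,
        (if lam.card ≤ k + 1 + μ.card then
          (((-1 : ℂ) ^ k * (Nat.factorial k : ℂ) *
              ((k : ℂ) + (lam.sum : ℂ) - (μ.sum : ℂ) + 1) *
              ((μ.count (lam.sum - μ.sum + k) : ℂ) + 1)) /
            ((Nat.factorial (k + 1 + μ.card - lam.card) : ℂ) *
              ∏ i ∈ lam.toFinset, (Nat.factorial (lam.count i - μ.count i) : ℂ))) •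
          mm ((lam.sum - μ.sum + k, 0) ::ₘ (μ.map (fun i => (i, 0)) +
              Multiset.replicate (lam.sum + k) ((0 : ℕ), (1 : ℕ))))
        else 0) ∈ Jbar := by
  have hf : ∀ m : ℕ, (m.factorial : ℂ) ≠ 0 := fun m => by exact_mod_cast m.factorial_ne_zero
  have hcc : ∀ s : Multiset ℕ, (cc s : ℂ) ≠ 0 := fun s => by exact_mod_cast (cc_pos s).ne'
  rw [← Submodule.Quotient.mk_eq_zero, ← Submodule.mkQ_apply, map_sub, sub_eq_zero]
  have hmain := main_aug hk h0
  rw [MM, mul_smul_comm, map_smul, cc_BB] at hmain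
  have hb : bip lam = BB lam lam.sum := rfl
  rw [hb]
  have hne : ((cc lam * lam.sum.factorial : ℕ) : ℂ) ≠ 0 := by
    push_cast; exact mul_ne_zero (hcc _) (hf _)
  rw [← inv_smul_eq_iff₀ hne] at hmain
  rw [← hmain, ads_eq_finset, Finset.smul_sum, map_sum]
  refine Finset.sum_congr (by congr) ?_
  intro μ hμ
  have hle : μ ≤ lam := by simpa using hμ
  obtain ⟨T, rfl⟩ := Multiset.le_iff_exists_add.1 hle
  have hN := count_powerset_mul (μ + T) μ hle
  have hpr : ∏ i ∈ (μ + T).toFinset, (Nat.factorial ((μ + T).count i - μ.count i) : ℂ) = cc T := by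
    rw [cc_eq T (μ + T).toFinset]
    · simp
    · intro x; simp; exact Or.inr
  rw [add_tsub_cancel_left] at hN ⊢
  have hsum : (μ + T).sum - μ.sum + k = k + T.sum := by rw [Multiset.sum_add]; omega
  have hmm : ((μ + T).sum - μ.sum + k, 0) ::ₘ (μ.map (fun i => (i, 0)) +
              Multiset.replicate ((μ + T).sum + k) ((0 : ℕ), (1 : ℕ))) =
      (k + T.sum, 0) ::ₘ BB μ ((μ + T).sum + k) := by rw [hsum]; rfl
  rw [hmm, hsum, MM, cc_cons, BB_count, cc_BB, cf]
  have hcard : (μ + T).card = μ.card + T.card := Multiset.card_add _ _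
  by_cases hc : T.card ≤ k + 1
  · have hc' : (μ + T).card ≤ k + 1 + μ.card := by omega
    rw [if_pos hc, if_pos hc', map_smul, map_smul, ← Nat.cast_smul_eq_nsmul ℂ, smul_smul, smul_smul,
      smul_smul, show k + 1 + μ.card - (μ + T).card = k + 1 - T.card by omega]
    congr 1
    have hN' : ((μ + T).powerset.count μ : ℂ) * cc μ * cc T = cc (μ + T) := by exact_mod_cast hN
    have e1 := hcc (μ + T)
    have e2 := hcc T
    have e3 := hf (μ + T).sum
    have e4 := hf ((μ + T).sum + k)
    have e5 := hf (k + 1 - T.card)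
    have e6 : ((μ + T).sum : ℂ) = μ.sum + T.sum := by rw [Multiset.sum_add]; push_cast; rfl
    have e7 : (k : ℂ) + (μ + T).sum - μ.sum + 1 = k + T.sum + 1 := by rw [e6]; ring
    rw [e7]
    simp only [Nat.cast_mul, Nat.cast_add, Nat.cast_one]
    symm
    rw [hpr, ← hN']
    rw [← hN'] at e1
    have e8 := left_ne_zero_of_mul e1
    have e9 := left_ne_zero_of_mul e8
    have e10 := right_ne_zero_of_mul e8
    field_simp
  · have hc' : ¬ (μ + T).card ≤ k + 1 + μ.card := by omega
    rw [if_neg hc, if_neg hc']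
    simp
end
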